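/- For all positive constants μ, κ, R, c_v and all M, m > 0 and K ≥ 1 there exists a constant C₀ > 0, depending only on μ, κ, R, c_v, M, m, K, such that: whenever (v,u,θ) is a classical solution of the one-dimensional compressible Navier–Stokes system on ℝ whose initial data are (M,m)-bounded and which is K-volume-bounded, then sup_{0 ≤ t < ∞} ( ‖v(·,t)−1‖_{H¹(ℝ)} + ‖u(·,t)‖_{H¹(ℝ)} + ‖θ(·,t)−1‖_{H¹(ℝ)} ) + ∫₀^∞ ( ‖v_x(·,t)‖²_{L²(ℝ)} + ‖u_x(·,t)‖²_{H¹(ℝ)} + ‖θ_x(·,t)‖²_{H¹(ℝ)} ) dt ≤ C₀. -/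

import Mathlib

/-!
The proof is the energy method on `ℝ`, with every constant tracked to depend on the parameters only.

*Setting.*  A classical solution is extended to negative times by its initial value and recorded as a
`Flow` satisfying `Sol` (`flow_sol`).  The temperature is bounded below on compact time intervals
(`lower_bound`); this makes every integrand below integrable on strips `ℝ × (0, T]`, but the lower
bound never enters a constant.  Mixed derivatives such as `u_{xt}` need not exist, so the balances of
`∫ wₓ²` and of the effective velocity are obtained as limits of balances for difference quotients
(`grad_balance`, `effective_balance`).

*A priori estimates.*  Write `w = (θ-1)² / (θ+1)`.
* The relative entropy `u²/2 + R (v - log v - 1) + cᵥ (θ - log θ - 1)` bounds `u` and `v - 1` in `L²`,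
  `∫ w`, and the dissipation `∬ (uₓ²/θ + θₓ²/θ²)` (`entropy_bound`).
* The functional `cᵥ Ψ(θ) + u² ψ(θ) + Λ u⁴` with `Ψ = w²/2` and `ψ = (θ-1)⁴/(θ+1)³` bounds `∫ w²`,
  `∬ (θ+1) uₓ²` and `∬ θₓ²` (`second_bound`).  Since `Ψ' ≤ ψ + 4`, the heating
  `μ uₓ² Ψ'(θ)` is compensated by the friction `-2 μ uₓ² ψ(θ)` (`pointwise_second`); the remaining
  terms are closed by `sup w² ≤ 9 ∫ w ∫ θₓ²/(θ+1)` (`Sol.w_sq_le`).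
* The effective velocity `μ vₓ/v - u` has the pressure gradient as time derivative.  Adding the entropy
  balance of `v` and `θ` cancels the term `u pₓ` and leaves the damping `θ vₓ²`; together with
  `1 ≤ 2 θ + 36 w²` this bounds `∫ vₓ²` and `∬ vₓ²` (`third_bound`).
* Testing the momentum and energy equations with `-2 uₓₓ` and `-2 θₓₓ` bounds the gradients of `u` and
  `θ` (`u_grad_bound`, `θ_grad_bound`), the products of two gradients being handled by `prod_l2`.

`total_bound` collects these estimates on `[0, T]` for every `T`; the theorem follows by monotone
convergence as `T → ∞` (`lintegral_Ioi_le`).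
-/

open MeasureTheory Filter Set

noncomputable section

/-- Partial derivative in the spatial variable. -/
def pdx (f : ℝ → ℝ → ℝ) (x t : ℝ) : ℝ := deriv (fun y => f y t) x

/-- Partial derivative in the time variable. -/
def pdt (f : ℝ → ℝ → ℝ) (x t : ℝ) : ℝ := deriv (fun s => f x s) t

/-- The `L²(ℝ)` norm, valued in `ℝ≥0∞`. -/
def L2 (f : ℝ → ℝ) : ENNReal := eLpNorm f 2 volume

/-- The `H¹(ℝ)` norm, valued in `ℝ≥0∞`. -/
def H1 (f : ℝ → ℝ) : ENNReal := L2 f + L2 (deriv f)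

/-- The `H²(ℝ)` norm, valued in `ℝ≥0∞`. -/
def H2 (f : ℝ → ℝ) : ENNReal := L2 f + L2 (deriv f) + L2 (deriv (deriv f))

/-- A classical solution of the 1-D compressible Navier–Stokes system in Lagrangian
coordinates on `ℝ`, together with the regularity and far-field conditions. -/
structure IsClassicalSolution (μ κ R cv : ℝ) (v u θ : ℝ → ℝ → ℝ) : Prop where
  v_pos : ∀ x t : ℝ, 0 ≤ t → 0 < v x t
  θ_pos : ∀ x t : ℝ, 0 ≤ t → 0 < θ x t
  smooth_x_v : ∀ t : ℝ, 0 ≤ t → ContDiff ℝ 2 (fun x => v x t)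
  smooth_x_u : ∀ t : ℝ, 0 ≤ t → ContDiff ℝ 2 (fun x => u x t)
  smooth_x_θ : ∀ t : ℝ, 0 ≤ t → ContDiff ℝ 2 (fun x => θ x t)
  smooth_t_v : ∀ x t : ℝ, 0 ≤ t → DifferentiableAt ℝ (fun s => v x s) t
  smooth_t_u : ∀ x t : ℝ, 0 ≤ t → DifferentiableAt ℝ (fun s => u x s) t
  smooth_t_θ : ∀ x t : ℝ, 0 ≤ t → DifferentiableAt ℝ (fun s => θ x s) t
  eq_mass : ∀ x t : ℝ, 0 ≤ t → pdt v x t = pdx u x t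
  eq_momentum : ∀ x t : ℝ, 0 ≤ t →
    pdt u x t + pdx (fun y s => R * θ y s / v y s) x t
      = μ * pdx (fun y s => pdx u y s / v y s) x t
  eq_energy : ∀ x t : ℝ, 0 ≤ t →
    cv * pdt θ x t + (R * θ x t / v x t) * pdx u x t
      = κ * pdx (fun y s => pdx θ y s / v y s) x t + μ * (pdx u x t) ^ 2 / v x t
  reg_H1 : ∀ T : ℝ, 0 ≤ T → ∃ B : ℝ, ∀ t ∈ Icc (0 : ℝ) T,
    H1 (fun x => v x t - 1) + H1 (fun x => u x t) + H1 (fun x => θ x t - 1)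
      ≤ ENNReal.ofReal B
  reg_H2 : ∀ T : ℝ, 0 < T →
    (∫⁻ t in Icc (0 : ℝ) T,
      (H2 (fun x => u x t) ^ 2 + H2 (fun x => θ x t - 1) ^ 2)) < ⊤
  farfield_v : ∀ t : ℝ, 0 ≤ t → Tendsto (fun x => v x t) (cocompact ℝ) (nhds 1)
  farfield_u : ∀ t : ℝ, 0 ≤ t → Tendsto (fun x => u x t) (cocompact ℝ) (nhds 0)
  farfield_θ : ∀ t : ℝ, 0 ≤ t → Tendsto (fun x => θ x t) (cocompact ℝ) (nhds 1)

/-- The initial data of `(v, u, θ)` are `(M, m)`-bounded. -/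
def InitBounded (M m : ℝ) (v u θ : ℝ → ℝ → ℝ) : Prop :=
  H1 (fun x => v x 0 - 1) + H1 (fun x => u x 0) + H1 (fun x => θ x 0 - 1)
      ≤ ENNReal.ofReal M
    ∧ (∀ x : ℝ, m ≤ v x 0) ∧ (∀ x : ℝ, m ≤ θ x 0)

/-- The solution is `K`-volume-bounded. -/
def VolBounded (K : ℝ) (v : ℝ → ℝ → ℝ) : Prop :=
  ∀ x t : ℝ, 0 ≤ t → K⁻¹ ≤ v x t ∧ v x t ≤ K

end

namespace NS

/-! ### Interpolation and integrated balances -/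

/-- Cauchy–Schwarz for square-integrable real functions. -/
lemma cauchy_schwarz {α : Type*} [MeasurableSpace α] {ν : Measure α} {a b : α → ℝ}
    (ha : MemLp a 2 ν) (hb : MemLp b 2 ν) :
    (∫ x, |a x * b x| ∂ν) ^ 2 ≤ (∫ x, a x ^ 2 ∂ν) * ∫ x, b x ^ 2 ∂ν := by
  have hab : Integrable (fun x => |a x * b x|) ν := (ha.integrable_mul hb).abs
  have ha2 := ha.integrable_sq
  have hb2 := hb.integrable_sq
  -- the quadratic polynomial `∫ (|a| + l |b|)²` in `l` is nonnegative
  have key : ∀ l : ℝ, 0 ≤ (∫ x, b x ^ 2 ∂ν) * (l * l) + (2 * ∫ x, |a x * b x| ∂ν) * l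
      + ∫ x, a x ^ 2 ∂ν := by
    intro l
    have h0 : 0 ≤ ∫ x, (|a x| + l * |b x|) ^ 2 ∂ν := integral_nonneg fun x => sq_nonneg _
    have h1 : ∫ x, (|a x| + l * |b x|) ^ 2 ∂ν
        = ∫ x, ((l * l) * b x ^ 2 + (2 * l) * |a x * b x| + a x ^ 2) ∂ν := by
      congr 1; ext x; rw [abs_mul, ← sq_abs (a x), ← sq_abs (b x)]; ring
    have h2 : Integrable (fun x => (l * l) * b x ^ 2 + (2 * l) * |a x * b x|) ν :=
      (hb2.const_mul _).add (hab.const_mul _)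
    rw [h1, integral_add h2 ha2, integral_add (hb2.const_mul _) (hab.const_mul _),
      integral_const_mul, integral_const_mul] at h0
    linarith
  have := discrim_le_zero key
  unfold discrim at this
  nlinarith

/-- Pointwise control of a function by the `L¹` norm of its derivative, when the derivative is
dominated by a product of two square-integrable functions. -/
lemma sq_le_of_deriv {f f' a b : ℝ → ℝ} {c : ℝ}
    (hf : ∀ x, HasDerivAt f (f' x) x) (hm : AEStronglyMeasurable f' volume)
    (h0 : Tendsto f atBot (nhds 0)) (hc : ∀ x, |f' x| ≤ c * |a x * b x|)
    (ha : MemLp a 2 volume) (hb : MemLp b 2 volume) (x : ℝ) :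
    f x ^ 2 ≤ c ^ 2 * ((∫ x, a x ^ 2) * ∫ x, b x ^ 2) := by
  have hab : Integrable (fun x => c * |a x * b x|) volume := (ha.integrable_mul hb).abs.const_mul c
  have hfi : Integrable f' volume := hab.mono' hm (ae_of_all _ hc)
  have e : ∫ y in Iic x, f' y = f x - 0 :=
    integral_Iic_of_hasDerivAt_of_tendsto' (fun y _ => hf y) hfi.integrableOn h0
  rw [sub_zero] at e
  have h1 : |f x| ≤ ∫ y, c * |a y * b y| := by
    rw [← e]
    calc |∫ y in Iic x, f' y| ≤ ∫ y in Iic x, |f' y| := abs_integral_le_integral_abs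
      _ ≤ ∫ y, |f' y| := setIntegral_le_integral hfi.abs (ae_of_all _ fun _ => abs_nonneg _)
      _ ≤ _ := integral_mono hfi.abs hab hc
  rw [integral_const_mul] at h1
  have h2 := cauchy_schwarz ha hb
  calc f x ^ 2 = |f x| ^ 2 := (sq_abs _).symm
    _ ≤ (c * ∫ y, |a y * b y|) ^ 2 := by gcongr
    _ = c ^ 2 * (∫ y, |a y * b y|) ^ 2 := by ring
    _ ≤ _ := by gcongr

/-- The one-dimensional Agmon inequality, in the form `g⁴ ≤ 4 ‖g‖² ‖g'‖²`. -/
lemma agmon {g g' : ℝ → ℝ} (hg : ∀ x, HasDerivAt g (g' x) x)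
    (h2 : MemLp g 2 volume) (h2' : MemLp g' 2 volume) (x : ℝ) :
    (g x ^ 2) ^ 2 ≤ 2 ^ 2 * ((∫ x, g x ^ 2) * ∫ x, g' x ^ 2) := by
  have hd : ∀ x, HasDerivAt (fun x => g x ^ 2) (2 * (g x * g' x)) x := fun x => by
    simpa [mul_assoc] using (hg x).fun_pow 2
  have hi : Integrable (fun x => 2 * (g x * g' x)) volume := (h2.integrable_mul h2').const_mul 2
  refine sq_le_of_deriv (f := fun x => g x ^ 2) (c := 2) hd hi.1 ?_ (fun x => ?_) h2 h2' x
  · exact tendsto_zero_of_hasDerivAt_of_integrableOn_Iic (a := 0) (fun x _ => hd x)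
      hi.integrableOn h2.integrable_sq.integrableOn
  · rw [abs_mul]; simp

lemma agmon' {g g' : ℝ → ℝ} (hg : ∀ x, HasDerivAt g (g' x) x)
    (h2 : MemLp g 2 volume) (h2' : MemLp g' 2 volume) (x : ℝ) :
    g x ^ 2 ≤ (∫ x, g x ^ 2) + ∫ x, g' x ^ 2 := by
  have h := agmon hg h2 h2' x
  have h3 : 0 ≤ ∫ x, g x ^ 2 := integral_nonneg fun _ => sq_nonneg _
  have h4 : 0 ≤ ∫ x, g' x ^ 2 := integral_nonneg fun _ => sq_nonneg _
  refine le_of_sq_le_sq ?_ (by positivity)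
  nlinarith [sq_nonneg ((∫ x, g x ^ 2) - ∫ x, g' x ^ 2)]

/-- Lebesgue measure on the space-time strip `ℝ × (0, T]`. -/
noncomputable def PT (T : ℝ) : Measure (ℝ × ℝ) := volume.prod (volume.restrict (Ioc 0 T))

/-- Integration in time of a density `f` with time derivative `g`: the increment of `∫ f dx` is
the space-time integral of any `r` having the same spatial integral as `g`. -/
lemma energy_balance {f g r : ℝ → ℝ → ℝ} {T : ℝ} (hT : 0 ≤ T)
    (hc : ∀ x, Continuous (f x)) (hd : ∀ x, ∀ t > 0, HasDerivAt (f x) (g x t) t)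
    (h0 : Integrable (fun x => f x 0)) (h1 : Integrable (fun x => f x T))
    (hg : Integrable (Function.uncurry g) (PT T)) (hr : Integrable (Function.uncurry r) (PT T))
    (hgr : ∀ᵐ t ∂(volume.restrict (Ioc 0 T)), Integrable (fun x => g x t) →
      Integrable (fun x => r x t) → ∫ x, g x t = ∫ x, r x t) :
    (∫ x, f x T) - ∫ x, f x 0 = ∫ z, Function.uncurry r z ∂(PT T) := by
  rw [← integral_sub h1 h0]
  have e1 : ∫ x, (f x T - f x 0) = ∫ z, Function.uncurry g z ∂(PT T) := by
    unfold PT at hg ⊢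
    rw [integral_prod _ hg]
    refine integral_congr_ae ?_
    filter_upwards [hg.prod_right_ae] with x hx
    have := intervalIntegral.integral_eq_sub_of_hasDerivAt_of_le hT (hc x).continuousOn
      (fun t ht => hd x t ht.1) ((intervalIntegrable_iff_integrableOn_Ioc_of_le hT).2 hx)
    rw [← this, intervalIntegral.integral_of_le hT]
    rfl
  rw [e1]
  unfold PT at *
  rw [integral_prod_symm _ hg, integral_prod_symm _ hr]
  refine integral_congr_ae ?_
  filter_upwards [hg.prod_left_ae, hr.prod_left_ae, hgr] with t h1 h2 h3
  exact h3 h1 h2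

/-- The version of `energy_balance` in which `g - r` is a spatial divergence. -/
lemma energy_flux {f g r fl : ℝ → ℝ → ℝ} {T : ℝ} (hT : 0 ≤ T)
    (hc : ∀ x, Continuous (f x)) (hd : ∀ x, ∀ t > 0, HasDerivAt (f x) (g x t) t)
    (h0 : Integrable (fun x => f x 0)) (h1 : Integrable (fun x => f x T))
    (hg : Integrable (Function.uncurry g) (PT T)) (hr : Integrable (Function.uncurry r) (PT T))
    (hfl : ∀ t, Integrable (fun x => fl x t))
    (hfd : ∀ x t, HasDerivAt (fun y => fl y t) (g x t - r x t) x) :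
    (∫ x, f x T) - ∫ x, f x 0 = ∫ z, Function.uncurry r z ∂(PT T) := by
  refine energy_balance hT hc hd h0 h1 hg hr (ae_of_all _ fun t hgt hrt => ?_)
  have := integral_eq_zero_of_hasDerivAt_of_integrable (fun x => hfd x t) (hgt.sub hrt) (hfl t)
  rw [integral_sub hgt hrt] at this
  linarith

/-- If `f² ≤ c ∫ b²` on every time slice and `∫ q ≤ Q`, then `∬ q f² ≤ Q c ∬ b²`. -/
lemma weighted_le {q f b : ℝ → ℝ → ℝ} {T Q c : ℝ} (hq : ∀ x t, 0 ≤ q x t) (hc : 0 ≤ c)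
    (hQ : ∀ t, 0 < t → t ≤ T → ∫ x, q x t ≤ Q) (hqi : ∀ t, Integrable fun x => q x t)
    (hf : ∀ x t, 0 < t → t ≤ T → f x t ≤ c * ∫ x, b x t ^ 2)
    (hi : Integrable (fun z : ℝ × ℝ => q z.1 z.2 * f z.1 z.2) (PT T))
    (hb : Integrable (fun z : ℝ × ℝ => b z.1 z.2 ^ 2) (PT T)) :
    ∫ z, q z.1 z.2 * f z.1 z.2 ∂(PT T) ≤ Q * c * ∫ z, b z.1 z.2 ^ 2 ∂(PT T) := by
  unfold PT at *
  rw [integral_prod_symm _ hi, integral_prod_symm _ hb, ← integral_const_mul]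
  refine integral_mono_ae hi.integral_prod_right (hb.integral_prod_right.const_mul _) ?_
  filter_upwards [ae_restrict_mem measurableSet_Ioc, hi.prod_left_ae] with t ht h1
  have hb0 : 0 ≤ ∫ x, b x t ^ 2 := integral_nonneg fun _ => sq_nonneg _
  calc ∫ x, q x t * f x t ≤ ∫ x, q x t * (c * ∫ x, b x t ^ 2) :=
        integral_mono h1 ((hqi t).mul_const _) fun x =>
          mul_le_mul_of_nonneg_left (hf x t ht.1 ht.2) (hq x t)
    _ = (∫ x, q x t) * (c * ∫ x, b x t ^ 2) := integral_mul_const _ _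
    _ ≤ Q * (c * ∫ x, b x t ^ 2) :=
        mul_le_mul_of_nonneg_right (hQ t ht.1 ht.2) (by positivity)
    _ = _ := by ring

/-! ### Difference quotients -/

/-- The forward difference quotient. -/
noncomputable def dq (h : ℝ) (g : ℝ → ℝ) (x : ℝ) : ℝ := (g (x + h) - g x) / h

lemma ofReal_sq_eq (a : ℝ) : ENNReal.ofReal (a ^ 2) = ‖a‖ₑ ^ 2 := by
  rw [← sq_abs, ENNReal.ofReal_pow (abs_nonneg _), ← Real.norm_eq_abs, ofReal_norm]

lemma eLpNorm_two_sq {α : Type*} [MeasurableSpace α] {ν : Measure α} (f : α → ℝ) :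
    eLpNorm f 2 ν ^ 2 = ∫⁻ x, ENNReal.ofReal (f x ^ 2) ∂ν := by
  have := eLpNorm_nnreal_pow_eq_lintegral (f := f) (μ := ν) (p := 2) (by norm_num)
  simp only [ofReal_sq_eq]
  simpa using this

lemma memLp_two_iff {α : Type*} [MeasurableSpace α] {ν : Measure α} {f : α → ℝ}
    (hf : AEStronglyMeasurable f ν) :
    MemLp f 2 ν ↔ ∫⁻ x, ENNReal.ofReal (f x ^ 2) ∂ν < ⊤ := by
  rw [← eLpNorm_two_sq]
  constructor
  · intro h; exact ENNReal.pow_lt_top h.2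
  · intro h; refine ⟨hf, ?_⟩; by_contra hc
    simp only [not_lt, top_le_iff] at hc
    rw [hc] at h; simp at h

lemma dq_sq_le {g g' : ℝ → ℝ} (hg : ∀ x, HasDerivAt g (g' x) x) (hc : Continuous g')
    {h : ℝ} (hh : 0 < h) (x : ℝ) :
    (dq h g x) ^ 2 ≤ h⁻¹ * ∫ s in Ioc 0 h, g' (x + s) ^ 2 := by
  have hcs : Continuous fun s => g' (x + s) := by fun_prop
  have e : ∫ s in (0:ℝ)..h, g' (x + s) = g (x + h) - g x := by
    have := intervalIntegral.integral_eq_sub_of_hasDerivAt (a := 0) (b := h)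
      (f := fun s => g (x + s)) (f' := fun s => g' (x + s))
      (fun s _ => (hg (x + s)).comp_const_add x s) (hcs.intervalIntegrable _ _)
    simpa using this
  rw [intervalIntegral.integral_of_le hh.le] at e
  have i2 : MemLp (fun s => g' (x + s)) 2 (volume.restrict (Ioc 0 h)) := by
    rw [memLp_two_iff_integrable_sq hcs.aestronglyMeasurable]
    exact ((hcs.pow 2).integrableOn_Icc).mono_set Ioc_subset_Icc_self
  have cs := cauchy_schwarz (memLp_const (1:ℝ) (μ := volume.restrict (Ioc 0 h)) (p := 2)) i2
  simp only [one_mul, one_pow, integral_const, smul_eq_mul, mul_one] at cs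
  have hv : (volume.restrict (Ioc 0 h)).real univ = h := by simp [Measure.real, hh.le]
  rw [hv] at cs
  have h3 : |g (x + h) - g x| ≤ ∫ s in Ioc 0 h, |g' (x + s)| := by
    rw [← e]; exact abs_integral_le_integral_abs
  have h4 : (g (x + h) - g x) ^ 2 ≤ h * ∫ s in Ioc 0 h, g' (x + s) ^ 2 := by
    rw [← sq_abs]; exact le_trans (by gcongr) cs
  unfold dq
  rw [div_pow, div_le_iff₀ (by positivity)]
  calc _ ≤ _ := h4
    _ = _ := by field_simp

/-- Difference quotients do not increase the `L²` norm beyond that of the derivative. -/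
lemma lintegral_dq_le {g g' : ℝ → ℝ} (hg : ∀ x, HasDerivAt g (g' x) x) (hc : Continuous g')
    {h : ℝ} (hh : 0 < h) :
    ∫⁻ x, ENNReal.ofReal (dq h g x ^ 2) ≤ ∫⁻ x, ENNReal.ofReal (g' x ^ 2) := by
  have hcs : ∀ x, Continuous fun s => g' (x + s) := fun x => by fun_prop
  calc ∫⁻ x, ENNReal.ofReal (dq h g x ^ 2)
      ≤ ∫⁻ x, ENNReal.ofReal (h⁻¹ * ∫ s in Ioc 0 h, g' (x + s) ^ 2) :=
        lintegral_mono fun x => ENNReal.ofReal_le_ofReal (dq_sq_le hg hc hh x)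
    _ = ∫⁻ x, ENNReal.ofReal h⁻¹ * ∫⁻ s in Ioc 0 h, ENNReal.ofReal (g' (x + s) ^ 2) := by
        refine lintegral_congr fun x => ?_
        rw [ENNReal.ofReal_mul (by positivity), ofReal_integral_eq_lintegral_ofReal]
        · exact (((hcs x).pow 2).integrableOn_Icc).mono_set Ioc_subset_Icc_self
        · exact ae_of_all _ fun _ => sq_nonneg _
    _ = ENNReal.ofReal h⁻¹ * ∫⁻ s in Ioc 0 h, ∫⁻ x, ENNReal.ofReal (g' (x + s) ^ 2) := by
        rw [lintegral_const_mul' _ _ ENNReal.ofReal_ne_top, lintegral_lintegral_swap]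
        apply Measurable.aemeasurable
        have := hc.measurable
        fun_prop
    _ = ENNReal.ofReal h⁻¹ * ∫⁻ s in Ioc 0 h, ∫⁻ x, ENNReal.ofReal (g' x ^ 2) := by
        congr 2; ext s
        exact lintegral_add_right_eq_self (fun x => ENNReal.ofReal (g' x ^ 2)) s
    _ = ∫⁻ x, ENNReal.ofReal (g' x ^ 2) := by
        rw [lintegral_const, Measure.restrict_apply_univ, Real.volume_Ioc, sub_zero, mul_comm,
          mul_assoc, ← ENNReal.ofReal_mul hh.le, mul_inv_cancel₀ hh.ne']
        simp

/-- Pointwise convergence together with `‖fₙ‖ ≤ ‖f‖` implies convergence in `L²`. -/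
lemma sqconv_of_le {α : Type*} [MeasurableSpace α] {ν : Measure α} {F : ℕ → α → ℝ} {f : α → ℝ}
    (hF : ∀ n, Measurable (F n)) (hf : Measurable f)
    (hp : ∀ z, Tendsto (fun n => F n z) atTop (nhds (f z)))
    (hle : ∀ n, ∫⁻ z, ENNReal.ofReal (F n z ^ 2) ∂ν ≤ ∫⁻ z, ENNReal.ofReal (f z ^ 2) ∂ν)
    (hfin : ∫⁻ z, ENNReal.ofReal (f z ^ 2) ∂ν < ⊤) :
    Tendsto (fun n => eLpNorm (F n - f) 2 ν) atTop (nhds 0) := by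
  set I := ∫⁻ z, ENNReal.ofReal (f z ^ 2) ∂ν with hI
  -- Fatou's lemma for `(F n + f)²`, combined with the parallelogram identity
  have fatou : 4 * I ≤ liminf (fun n => ∫⁻ z, ENNReal.ofReal ((F n z + f z) ^ 2) ∂ν) atTop := by
    have h1 : 4 * I = ∫⁻ z, liminf (fun n => ENNReal.ofReal ((F n z + f z) ^ 2)) atTop ∂ν := by
      rw [hI, ← lintegral_const_mul' _ _ (by norm_num)]
      refine lintegral_congr fun z => ?_
      have : Tendsto (fun n => ENNReal.ofReal ((F n z + f z) ^ 2)) atTop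
          (nhds (ENNReal.ofReal ((f z + f z) ^ 2))) :=
        ENNReal.tendsto_ofReal (((hp z).add_const _).pow 2)
      rw [this.liminf_eq, show (f z + f z) ^ 2 = 4 * f z ^ 2 by ring,
        ENNReal.ofReal_mul (by norm_num)]
      simp
    rw [h1]
    exact lintegral_liminf_le fun n => by have := hF n; fun_prop
  have par : ∀ n, ∫⁻ z, ENNReal.ofReal ((F n z + f z) ^ 2) ∂ν
      + ∫⁻ z, ENNReal.ofReal ((F n z - f z) ^ 2) ∂ν ≤ 4 * I := by
    intro n
    have := hF n
    rw [← lintegral_add_left (by fun_prop)]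
    calc _ = ∫⁻ z, (2 * ENNReal.ofReal (F n z ^ 2) + 2 * ENNReal.ofReal (f z ^ 2)) ∂ν := by
          refine lintegral_congr fun z => ?_
          have e2 : (2 : ENNReal) = ENNReal.ofReal 2 := by simp
          rw [e2, ← ENNReal.ofReal_mul (by norm_num), ← ENNReal.ofReal_mul (by norm_num),
            ← ENNReal.ofReal_add (by positivity) (by positivity),
            ← ENNReal.ofReal_add (by positivity) (by positivity)]
          congr 1; ring
      _ = 2 * ∫⁻ z, ENNReal.ofReal (F n z ^ 2) ∂ν + 2 * I := by
          rw [lintegral_add_left (by fun_prop), lintegral_const_mul' _ _ (by norm_num),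
            lintegral_const_mul' _ _ (by norm_num)]
      _ ≤ 2 * I + 2 * I := by gcongr; exact hle n
      _ = 4 * I := by rw [← add_mul]; norm_num
  have I4 : 4 * I < ⊤ := ENNReal.mul_lt_top (by norm_num) hfin
  have conv : Tendsto (fun n => ∫⁻ z, ENNReal.ofReal ((F n z - f z) ^ 2) ∂ν) atTop (nhds 0) := by
    rw [ENNReal.tendsto_nhds_zero]
    intro ε hε
    by_cases h0 : 4 * I = 0
    · refine Eventually.of_forall fun n => ?_
      have := par n
      rw [h0] at this
      exact (le_trans le_add_self this).trans (zero_le)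
    · have hlt : 4 * I - ε < liminf (fun n => ∫⁻ z, ENNReal.ofReal ((F n z + f z) ^ 2) ∂ν) atTop :=
        lt_of_lt_of_le (ENNReal.sub_lt_self I4.ne h0 hε.ne') fatou
      filter_upwards [eventually_lt_of_lt_liminf hlt] with n hn
      have h1 : 4 * I ≤ ∫⁻ z, ENNReal.ofReal ((F n z + f z) ^ 2) ∂ν + ε :=
        tsub_le_iff_right.1 hn.le
      have h2 := (par n).trans h1
      have h3 : ∫⁻ z, ENNReal.ofReal ((F n z + f z) ^ 2) ∂ν ≠ ⊤ :=
        ((le_self_add.trans (par n)).trans_lt I4).ne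
      exact (ENNReal.add_le_add_iff_left h3).1 h2
  have conv2 : Tendsto (fun n => eLpNorm (F n - f) 2 ν ^ 2) atTop (nhds 0) := by
    simpa only [eLpNorm_two_sq, Pi.sub_apply] using conv
  have := (ENNReal.continuous_rpow_const (y := 1 / 2)).continuousAt.tendsto.comp conv2
  simp only [Function.comp_def] at this
  have e : ∀ n, (eLpNorm (F n - f) 2 ν ^ 2) ^ (1 / 2 : ℝ) = eLpNorm (F n - f) 2 ν := fun n => by
    rw [← ENNReal.rpow_natCast, ← ENNReal.rpow_mul]; simp
  simp only [e] at this
  simpa using this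

/-- Integrals of products converge under strong `L²` convergence of both factors. -/
lemma tendsto_integral_mul {α : Type*} [MeasurableSpace α] {ν : Measure α} {A B : ℕ → α → ℝ}
    {a b : α → ℝ} (hA : ∀ n, MemLp (A n) 2 ν) (ha : MemLp a 2 ν) (hB : ∀ n, MemLp (B n) 2 ν)
    (hb : MemLp b 2 ν) (cA : Tendsto (fun n => eLpNorm (A n - a) 2 ν) atTop (nhds 0))
    (cB : Tendsto (fun n => eLpNorm (B n - b) 2 ν) atTop (nhds 0)) :
    Tendsto (fun n => ∫ z, A n z * B n z ∂ν) atTop (nhds (∫ z, a z * b z ∂ν)) := by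
  have tA := (Lp.tendsto_Lp_iff_tendsto_eLpNorm'' A hA a ha).2 cA
  have tB := (Lp.tendsto_Lp_iff_tendsto_eLpNorm'' B hB b hb).2 cB
  have := tB.inner (𝕜 := ℝ) tA
  have e : ∀ {f g : α → ℝ} (hf : MemLp f 2 ν) (hg : MemLp g 2 ν),
      inner ℝ (hg.toLp g) (hf.toLp f) = ∫ z, f z * g z ∂ν := by
    intro f g hf hg
    rw [L2.inner_def]
    refine integral_congr_ae ?_
    filter_upwards [hf.coeFn_toLp, hg.coeFn_toLp] with z h1 h2
    simp [h1, h2]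
  simpa only [e] using this

lemma tendsto_dq {g : ℝ → ℝ} {g' x : ℝ} (hg : HasDerivAt g g' x) :
    Tendsto (fun n : ℕ => dq (1 / ((n:ℝ) + 1)) g x) atTop (nhds g') := by
  have h1 := hg.tendsto_slope_zero
  have h2 : Tendsto (fun n : ℕ => 1 / ((n:ℝ) + 1)) atTop (nhdsWithin 0 {0}ᶜ) := by
    rw [tendsto_nhdsWithin_iff]
    exact ⟨tendsto_one_div_add_atTop_nhds_zero_nat, Eventually.of_forall fun n => by
      simp only [mem_compl_iff, mem_singleton_iff]; positivity⟩
  refine (h1.comp h2).congr fun n => ?_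
  simp [dq, div_eq_inv_mul]

/-- The centred second difference quotient. -/
noncomputable def dq2 (h : ℝ) (g : ℝ → ℝ) (x : ℝ) : ℝ := (dq h g x - dq h g (x - h)) / h

lemma tendsto_dq2 {g g' g'' : ℝ → ℝ} (hg : ∀ x, HasDerivAt g (g' x) x)
    (hg' : ∀ x, HasDerivAt g' (g'' x) x) (hc : Continuous g'') (x : ℝ) :
    Tendsto (fun n : ℕ => dq2 (1 / ((n:ℝ) + 1)) g x) atTop (nhds (g'' x)) := by
  have key : ∀ h > 0, ∃ y, x - h ≤ y ∧ y ≤ x + h ∧ dq2 h g x = g'' y := by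
    intro h hh
    have hd : ∀ y, HasDerivAt (dq h g) (dq h g' y) y := fun y =>
      (((hg (y + h)).comp_add_const y h).sub (hg y)).div_const h
    obtain ⟨a, ha, ea⟩ := exists_hasDerivAt_eq_slope (dq h g) (dq h g') (a := x - h) (b := x)
      (by linarith) (fun y _ => (hd y).continuousAt.continuousWithinAt) (fun y _ => hd y)
    obtain ⟨b, hb, eb⟩ := exists_hasDerivAt_eq_slope g' g'' (a := a) (b := a + h)
      (by linarith) (fun y _ => (hg' y).continuousAt.continuousWithinAt) (fun y _ => hg' y)
    refine ⟨b, by linarith [ha.1, hb.1], by linarith [ha.2, hb.2], ?_⟩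
    have e1 : x - (x - h) = h := by ring
    have e2 : a + h - a = h := by ring
    rw [e1] at ea
    rw [e2] at eb
    unfold dq2
    rw [← ea, eb]; rfl
  rw [Metric.tendsto_atTop]
  intro ε hε
  obtain ⟨δ, hδ, hδ'⟩ := Metric.continuousAt_iff.1 (hc.continuousAt (x := x)) ε hε
  obtain ⟨N, hN⟩ := Metric.tendsto_atTop.1 (tendsto_one_div_add_atTop_nhds_zero_nat (𝕜 := ℝ)) δ hδ
  refine ⟨N, fun n hn => ?_⟩
  have h1 := hN n hn
  obtain ⟨y, hy1, hy2, e⟩ := key (1 / ((n:ℝ) + 1)) (by positivity)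
  rw [e]
  apply hδ'
  rw [Real.dist_eq] at h1 ⊢
  rw [sub_zero, abs_of_pos (by positivity)] at h1
  rw [abs_lt]; constructor <;> linarith

lemma hasDerivAt_dq {g g' : ℝ → ℝ} (hg : ∀ x, HasDerivAt g (g' x) x) (h y : ℝ) :
    HasDerivAt (dq h g) (dq h g' y) y :=
  (((hg (y + h)).comp_add_const y h).sub (hg y)).div_const h

lemma lintegral_dq2_le {g g' g'' : ℝ → ℝ} (hg : ∀ x, HasDerivAt g (g' x) x)
    (hg' : ∀ x, HasDerivAt g' (g'' x) x) (hc : Continuous g'') {h : ℝ} (hh : 0 < h) :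
    ∫⁻ x, ENNReal.ofReal (dq2 h g x ^ 2) ≤ ∫⁻ x, ENNReal.ofReal (g'' x ^ 2) := by
  have hc' : Continuous g' := continuous_iff_continuousAt.2 fun x => (hg' x).continuousAt
  have hcd : Continuous (dq h g') := by unfold dq; fun_prop
  calc ∫⁻ x, ENNReal.ofReal (dq2 h g x ^ 2)
      = ∫⁻ x, ENNReal.ofReal (dq h (dq h g) (x - h) ^ 2) := by
        refine lintegral_congr fun x => ?_
        simp [dq2, dq]
    _ = ∫⁻ x, ENNReal.ofReal (dq h (dq h g) x ^ 2) :=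
        lintegral_sub_right_eq_self (fun x => ENNReal.ofReal (dq h (dq h g) x ^ 2)) h
    _ ≤ ∫⁻ x, ENNReal.ofReal (dq h g' x ^ 2) := lintegral_dq_le (hasDerivAt_dq hg h) hcd hh
    _ ≤ _ := lintegral_dq_le hg' hc hh

/-- Summation by parts for difference quotients. -/
lemma dq_by_parts {φ χ : ℝ → ℝ} (hφ : MemLp φ 2 volume) (hχ : MemLp χ 2 volume) {h : ℝ}
    (hh : 0 < h) : ∫ x, dq h φ x * dq h χ x = -∫ x, dq2 h φ x * χ x := by
  have sh : ∀ {f : ℝ → ℝ}, MemLp f 2 volume → MemLp (fun x => f (x + h)) 2 volume := fun hf =>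
    hf.comp_measurePreserving (measurePreserving_add_right volume h)
  have sh' : ∀ {f : ℝ → ℝ}, MemLp f 2 volume → MemLp (fun x => f (x - h)) 2 volume := fun hf =>
    hf.comp_measurePreserving (measurePreserving_sub_right volume h)
  have hD : MemLp (dq h φ) 2 volume := by
    have := ((sh hφ).sub hφ).mul_const h⁻¹
    have e : dq h φ = fun x => (φ (x + h) - φ x) * h⁻¹ := by
      ext x; simp [dq, div_eq_mul_inv]
    rw [e]; exact this
  have i1 : Integrable (fun x => h⁻¹ * (dq h φ x * χ (x + h))) :=
    (hD.integrable_mul (sh hχ)).const_mul _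
  have i2 : Integrable (fun x => h⁻¹ * (dq h φ x * χ x)) :=
    (hD.integrable_mul hχ).const_mul _
  have i3 : Integrable (fun x => h⁻¹ * (dq h φ (x - h) * χ x)) :=
    ((sh' hD).integrable_mul hχ).const_mul _
  have e1 : ∫ x, dq h φ x * dq h χ x
      = (∫ x, h⁻¹ * (dq h φ x * χ (x + h))) - ∫ x, h⁻¹ * (dq h φ x * χ x) := by
    rw [← integral_sub i1 i2]; congr 1; ext x
    simp only [dq]; field_simp
  have e2 : ∫ x, h⁻¹ * (dq h φ x * χ (x + h)) = ∫ x, h⁻¹ * (dq h φ (x - h) * χ x) := by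
    rw [← integral_sub_right_eq_self (fun x => h⁻¹ * (dq h φ x * χ (x + h))) h]
    simp
  rw [e1, e2, ← integral_sub i3 i2, ← integral_neg]
  congr 1; ext x
  simp only [dq2]; field_simp; ring

/-! ### Gradient balances without mixed derivatives -/

lemma memLp_slice {f : ℝ → ℝ → ℝ} {T : ℝ} (hm : Measurable (Function.uncurry f))
    (hf : MemLp (Function.uncurry f) 2 (PT T)) :
    ∀ᵐ t ∂(volume.restrict (Ioc 0 T)), MemLp (fun x => f x t) 2 volume := by
  have h := hf.integrable_sq
  unfold PT at h
  filter_upwards [h.prod_left_ae] with t ht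
  have m : Measurable fun x => f x t := hm.comp (measurable_id.prodMk measurable_const)
  rw [memLp_two_iff_integrable_sq m.aestronglyMeasurable]
  exact ht

lemma memLp_shift {f : ℝ → ℝ → ℝ} {T : ℝ} (h : ℝ)
    (hf : MemLp (Function.uncurry f) 2 (PT T)) :
    MemLp (fun z : ℝ × ℝ => f (z.1 + h) z.2) 2 (PT T) := by
  have mp : MeasurePreserving (Prod.map (fun x : ℝ => x + h) (id : ℝ → ℝ)) (PT T) (PT T) :=
    (measurePreserving_add_right volume h).prod (MeasurePreserving.id _)
  exact hf.comp_measurePreserving mp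

lemma memLp_dq {f : ℝ → ℝ → ℝ} {T : ℝ} (h : ℝ) (hf : MemLp (Function.uncurry f) 2 (PT T)) :
    MemLp (fun z : ℝ × ℝ => dq h (fun y => f y z.2) z.1) 2 (PT T) := by
  have := ((memLp_shift h hf).sub hf).mul_const h⁻¹
  have e : (fun z : ℝ × ℝ => dq h (fun y => f y z.2) z.1)
      = fun z => (f (z.1 + h) z.2 - f z.1 z.2) * h⁻¹ := by
    ext x; simp [dq, div_eq_mul_inv]
  rw [e]; exact this

lemma measurable_dq {f : ℝ → ℝ → ℝ} (hm : Measurable (Function.uncurry f)) (h : ℝ) :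
    Measurable (fun z : ℝ × ℝ => dq h (fun y => f y z.2) z.1) := by
  have h1 : Measurable fun z : ℝ × ℝ => f (z.1 + h) z.2 :=
    hm.comp (by fun_prop : Measurable fun z : ℝ × ℝ => (z.1 + h, z.2))
  have h2 : Measurable fun z : ℝ × ℝ => f z.1 z.2 := hm
  simp only [dq]
  exact (h1.sub h2).div_const h

lemma measurable_dq2 {f : ℝ → ℝ → ℝ} (hm : Measurable (Function.uncurry f)) (h : ℝ) :
    Measurable (fun z : ℝ × ℝ => dq2 h (fun y => f y z.2) z.1) := by
  have h1 := measurable_dq hm h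
  have h2 : Measurable (fun z : ℝ × ℝ => dq h (fun y => f y z.2) (z.1 - h)) :=
    h1.comp (by fun_prop : Measurable fun z : ℝ × ℝ => (z.1 - h, z.2))
  simp only [dq2]
  exact (h1.sub h2).div_const h

lemma lintegral_strip_le {F G : ℝ → ℝ → ℝ} {T : ℝ}
    (hF : Measurable (fun z : ℝ × ℝ => F z.1 z.2)) (hG : Measurable (fun z : ℝ × ℝ => G z.1 z.2))
    (h : ∀ t, ∫⁻ x, ENNReal.ofReal (F x t ^ 2) ≤ ∫⁻ x, ENNReal.ofReal (G x t ^ 2)) :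
    ∫⁻ z, ENNReal.ofReal (F z.1 z.2 ^ 2) ∂(PT T) ≤ ∫⁻ z, ENNReal.ofReal (G z.1 z.2 ^ 2) ∂(PT T) := by
  unfold PT
  rw [lintegral_prod_symm' _ (by fun_prop), lintegral_prod_symm' _ (by fun_prop)]
  exact lintegral_mono fun t => h t

/-- Difference quotients converge to the `x`-derivative in `L²` of the strip. -/
lemma sqconv_dq_strip {g gx : ℝ → ℝ → ℝ} {T : ℝ}
    (hg : ∀ x t, HasDerivAt (fun y => g y t) (gx x t) x) (hc : ∀ t, Continuous fun x => gx x t)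
    (hm : Measurable (Function.uncurry g)) (hmx : Measurable (Function.uncurry gx))
    (h2 : MemLp (Function.uncurry gx) 2 (PT T)) :
    (∀ n : ℕ, MemLp (fun z : ℝ × ℝ => dq (1 / ((n:ℝ) + 1)) (fun y => g y z.2) z.1) 2 (PT T)) ∧
    Tendsto (fun n : ℕ => eLpNorm ((fun z : ℝ × ℝ => dq (1 / ((n:ℝ) + 1)) (fun y => g y z.2) z.1)
      - Function.uncurry gx) 2 (PT T)) atTop (nhds 0) := by
  have hfin := (memLp_two_iff h2.1).1 h2
  have hle : ∀ n : ℕ, ∫⁻ z, ENNReal.ofReal (dq (1 / ((n:ℝ) + 1)) (fun y => g y z.2) z.1 ^ 2) ∂(PT T)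
      ≤ ∫⁻ z, ENNReal.ofReal (Function.uncurry gx z ^ 2) ∂(PT T) := fun n =>
    lintegral_strip_le (F := fun x t => dq (1 / ((n:ℝ) + 1)) (fun y => g y t) x) (G := gx)
      (measurable_dq hm _) hmx fun t => lintegral_dq_le (fun x => hg x t) (hc t) (by positivity)
  exact ⟨fun n => (memLp_two_iff (measurable_dq hm _).aestronglyMeasurable).2
      ((hle n).trans_lt hfin), sqconv_of_le (fun n => measurable_dq hm _) hmx
      (fun z => tendsto_dq (hg z.1 z.2)) hle hfin⟩

lemma sqconv_dq2_strip {g gx gxx : ℝ → ℝ → ℝ} {T : ℝ}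
    (hg : ∀ x t, HasDerivAt (fun y => g y t) (gx x t) x)
    (hgx : ∀ x t, HasDerivAt (fun y => gx y t) (gxx x t) x)
    (hc : ∀ t, Continuous fun x => gxx x t)
    (hm : Measurable (Function.uncurry g)) (hmx : Measurable (Function.uncurry gxx))
    (h2 : MemLp (Function.uncurry gxx) 2 (PT T)) :
    (∀ n : ℕ, MemLp (fun z : ℝ × ℝ => dq2 (1 / ((n:ℝ) + 1)) (fun y => g y z.2) z.1) 2 (PT T)) ∧
    Tendsto (fun n : ℕ => eLpNorm ((fun z : ℝ × ℝ => dq2 (1 / ((n:ℝ) + 1)) (fun y => g y z.2) z.1)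
      - Function.uncurry gxx) 2 (PT T)) atTop (nhds 0) := by
  have hfin := (memLp_two_iff h2.1).1 h2
  have hle : ∀ n : ℕ, ∫⁻ z, ENNReal.ofReal (dq2 (1 / ((n:ℝ) + 1)) (fun y => g y z.2) z.1 ^ 2) ∂(PT T)
      ≤ ∫⁻ z, ENNReal.ofReal (Function.uncurry gxx z ^ 2) ∂(PT T) := fun n =>
    lintegral_strip_le (F := fun x t => dq2 (1 / ((n:ℝ) + 1)) (fun y => g y t) x) (G := gxx)
      (measurable_dq2 hm _) hmx
      fun t => lintegral_dq2_le (fun x => hg x t) (fun x => hgx x t) (hc t) (by positivity)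
  exact ⟨fun n => (memLp_two_iff (measurable_dq2 hm _).aestronglyMeasurable).2
      ((hle n).trans_lt hfin), sqconv_of_le (fun n => measurable_dq2 hm _) hmx
      (fun z => tendsto_dq2 (fun x => hg x z.2) (fun x => hgx x z.2) (hc z.2) z.1) hle hfin⟩

/-- Difference quotients converge to the derivative in `L²(ℝ)`. -/
lemma sqconv_dq {g g' : ℝ → ℝ} (hg : ∀ x, HasDerivAt g (g' x) x) (hc : Continuous g')
    (h2 : MemLp g' 2 volume) :
    (∀ n : ℕ, MemLp (dq (1 / ((n:ℝ) + 1)) g) 2 volume) ∧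
    Tendsto (fun n : ℕ => eLpNorm (dq (1 / ((n:ℝ) + 1)) g - g') 2 volume) atTop (nhds 0) := by
  have hfin := (memLp_two_iff h2.1).1 h2
  have hle : ∀ n : ℕ, ∫⁻ z, ENNReal.ofReal (dq (1 / ((n:ℝ) + 1)) g z ^ 2)
      ≤ ∫⁻ z, ENNReal.ofReal (g' z ^ 2) := fun n => lintegral_dq_le hg hc (by positivity)
  have hgc : Continuous g := continuous_iff_continuousAt.2 fun x => (hg x).continuousAt
  have hm : ∀ h, Measurable (dq h g) := fun h => by
    unfold dq; exact Continuous.measurable (by fun_prop)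
  exact ⟨fun n => (memLp_two_iff (hm _).aestronglyMeasurable).2 ((hle n).trans_lt hfin),
    sqconv_of_le (fun n => hm _) hc.measurable (fun z => tendsto_dq (hg z)) hle hfin⟩

/-- The balance `d/dt ∫ wₓ² = -2 ∫ wₓₓ w_t`, in integrated form, for functions which need not
possess a mixed derivative `w_{xt}`. -/
lemma grad_balance {w wx wxx wt : ℝ → ℝ → ℝ} {T : ℝ} (hT : 0 ≤ T)
    (hc : ∀ x, Continuous (w x)) (hd : ∀ x, ∀ t > 0, HasDerivAt (w x) (wt x t) t)
    (hw : ∀ x t, HasDerivAt (fun y => w y t) (wx x t) x)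
    (hwx : ∀ x t, HasDerivAt (fun y => wx y t) (wxx x t) x)
    (hcx : ∀ t, Continuous fun x => wxx x t)
    (m : Measurable (Function.uncurry w)) (mxx : Measurable (Function.uncurry wxx))
    (mt : Measurable (Function.uncurry wt))
    (s : MemLp (Function.uncurry w) 2 (PT T))
    (sx : ∀ t, MemLp (fun x => wx x t) 2 volume)
    (sxx : MemLp (Function.uncurry wxx) 2 (PT T)) (st : MemLp (Function.uncurry wt) 2 (PT T)) :
    (∫ x, wx x T ^ 2) - ∫ x, wx x 0 ^ 2 = ∫ z, (-2 * (wxx z.1 z.2 * wt z.1 z.2)) ∂(PT T) := by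
  have hcx1 : ∀ t, Continuous fun x => wx x t := fun t =>
    continuous_iff_continuousAt.2 fun x => (hwx x t).continuousAt
  obtain ⟨M2, C2⟩ := sqconv_dq2_strip hw hwx hcx m mxx sxx
  have S := fun t => sqconv_dq (fun x => hw x t) (hcx1 t) (sx t)
  have step : ∀ n : ℕ, (∫ x, dq (1 / ((n:ℝ) + 1)) (fun y => w y T) x * dq (1 / ((n:ℝ) + 1)) (fun y => w y T) x)
      - ∫ x, dq (1 / ((n:ℝ) + 1)) (fun y => w y 0) x * dq (1 / ((n:ℝ) + 1)) (fun y => w y 0) x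
      = -2 * ∫ z, dq2 (1 / ((n:ℝ) + 1)) (fun y => w y z.2) z.1 * Function.uncurry wt z ∂(PT T) := by
    intro n
    set h : ℝ := 1 / ((n:ℝ) + 1) with hh
    have hpos : 0 < h := by positivity
    rw [← integral_const_mul]
    refine energy_balance (f := fun x t => dq h (fun y => w y t) x * dq h (fun y => w y t) x)
      (g := fun x t => 2 * (dq h (fun y => w y t) x * dq h (fun y => wt y t) x))
      (r := fun x t => -2 * (dq2 h (fun y => w y t) x * wt x t)) hT ?_ ?_ ?_ ?_ ?_ ?_ ?_
    · intro x
      have h1 := hc (x + h)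
      have h2 := hc x
      simp only [dq]; fun_prop
    · intro x t ht
      have h1 : HasDerivAt (fun t => dq h (fun y => w y t) x) (dq h (fun y => wt y t) x) t :=
        ((hd (x + h) t ht).sub (hd x t ht)).div_const h
      exact (h1.mul h1).congr_deriv (by ring)
    · exact ((S 0).1 n).integrable_mul ((S 0).1 n)
    · exact ((S T).1 n).integrable_mul ((S T).1 n)
    · exact ((memLp_dq h s).integrable_mul (memLp_dq h st)).const_mul 2
    · exact ((M2 n).integrable_mul st).const_mul (-2)
    · filter_upwards [memLp_slice m s, memLp_slice mt st] with t h1 h2 _ _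
      rw [integral_const_mul, integral_const_mul, dq_by_parts h1 h2 hpos]
      ring
  have L1 : ∀ t, Tendsto (fun n : ℕ => ∫ x, dq (1 / ((n:ℝ) + 1)) (fun y => w y t) x
      * dq (1 / ((n:ℝ) + 1)) (fun y => w y t) x) atTop (nhds (∫ x, wx x t * wx x t)) := fun t =>
    tendsto_integral_mul (S t).1 (sx t) (S t).1 (sx t) (S t).2 (S t).2
  have R1 := (tendsto_integral_mul M2 sxx (fun _ => st) st C2 (by simp)).const_mul (-2)
  have := tendsto_nhds_unique (((L1 T).sub (L1 0)).congr step) R1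
  rw [integral_const_mul]
  simp only [sq]
  exact this

/-- The balance `d/dt ∫ (lₓ - u)² = 2 ∫ (lₓ - u) (kₓ - u_t)`, in integrated form, where `l_t = k`;
no mixed derivative `l_{xt}` is required. -/
lemma effective_balance {l lx k kx u ut : ℝ → ℝ → ℝ} {T : ℝ} (hT : 0 ≤ T)
    (hcl : ∀ x, Continuous (l x)) (hcu : ∀ x, Continuous (u x))
    (hdl : ∀ x, ∀ t > 0, HasDerivAt (l x) (k x t) t)
    (hdu : ∀ x, ∀ t > 0, HasDerivAt (u x) (ut x t) t)
    (hl : ∀ x t, HasDerivAt (fun y => l y t) (lx x t) x)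
    (hk : ∀ x t, HasDerivAt (fun y => k y t) (kx x t) x)
    (hclx : ∀ t, Continuous fun x => lx x t) (hckx : ∀ t, Continuous fun x => kx x t)
    (ml : Measurable (Function.uncurry l)) (mlx : Measurable (Function.uncurry lx))
    (mk : Measurable (Function.uncurry k)) (mkx : Measurable (Function.uncurry kx))
    (slx : MemLp (Function.uncurry lx) 2 (PT T)) (skx : MemLp (Function.uncurry kx) 2 (PT T))
    (su : MemLp (Function.uncurry u) 2 (PT T)) (sut : MemLp (Function.uncurry ut) 2 (PT T))
    (tlx : ∀ t, MemLp (fun x => lx x t) 2 volume) (tu : ∀ t, MemLp (fun x => u x t) 2 volume) :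
    (∫ x, (lx x T - u x T) ^ 2) - ∫ x, (lx x 0 - u x 0) ^ 2
      = ∫ z, (2 * ((lx z.1 z.2 - u z.1 z.2) * (kx z.1 z.2 - ut z.1 z.2))) ∂(PT T) := by
  obtain ⟨Ml, Cl⟩ := sqconv_dq_strip (T := T) hl hclx ml mlx slx
  obtain ⟨Mk, Ck⟩ := sqconv_dq_strip (T := T) hk hckx mk mkx skx
  have S := fun t => sqconv_dq (fun x => hl x t) (hclx t) (tlx t)
  have step : ∀ n : ℕ, (∫ x, (dq (1 / ((n:ℝ) + 1)) (fun y => l y T) x - u x T)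
        * (dq (1 / ((n:ℝ) + 1)) (fun y => l y T) x - u x T))
      - ∫ x, (dq (1 / ((n:ℝ) + 1)) (fun y => l y 0) x - u x 0)
        * (dq (1 / ((n:ℝ) + 1)) (fun y => l y 0) x - u x 0)
      = 2 * ∫ z, (dq (1 / ((n:ℝ) + 1)) (fun y => l y z.2) z.1 - Function.uncurry u z)
        * (dq (1 / ((n:ℝ) + 1)) (fun y => k y z.2) z.1 - Function.uncurry ut z) ∂(PT T) := by
    intro n
    set h : ℝ := 1 / ((n:ℝ) + 1) with hh
    rw [← integral_const_mul]
    have hi : Integrable (fun z : ℝ × ℝ => 2 * ((dq h (fun y => l y z.2) z.1 - Function.uncurry u z)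
        * (dq h (fun y => k y z.2) z.1 - Function.uncurry ut z))) (PT T) :=
      (((Ml n).sub su).integrable_mul ((Mk n).sub sut)).const_mul 2
    refine energy_balance
      (f := fun x t => (dq h (fun y => l y t) x - u x t) * (dq h (fun y => l y t) x - u x t))
      (g := fun x t => 2 * ((dq h (fun y => l y t) x - u x t) * (dq h (fun y => k y t) x - ut x t)))
      (r := fun x t => 2 * ((dq h (fun y => l y t) x - u x t) * (dq h (fun y => k y t) x - ut x t)))
      hT ?_ ?_ ?_ ?_ hi hi (ae_of_all _ fun _ _ _ => rfl)
    · intro x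
      have h1 := hcl (x + h)
      have h2 := hcl x
      have h3 := hcu x
      simp only [dq]; fun_prop
    · intro x t ht
      have h1 : HasDerivAt (fun t => dq h (fun y => l y t) x - u x t)
          (dq h (fun y => k y t) x - ut x t) t :=
        (((hdl (x + h) t ht).sub (hdl x t ht)).div_const h).sub (hdu x t ht)
      exact (h1.mul h1).congr_deriv (by ring)
    · exact (((S 0).1 n).sub (tu 0)).integrable_mul (((S 0).1 n).sub (tu 0))
    · exact (((S T).1 n).sub (tu T)).integrable_mul (((S T).1 n).sub (tu T))
  have L1 : ∀ t, Tendsto (fun n : ℕ => ∫ x, (dq (1 / ((n:ℝ) + 1)) (fun y => l y t) x - u x t)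
      * (dq (1 / ((n:ℝ) + 1)) (fun y => l y t) x - u x t)) atTop
      (nhds (∫ x, (lx x t - u x t) * (lx x t - u x t))) := fun t => by
    have c : Tendsto (fun n : ℕ => eLpNorm ((fun x => dq (1 / ((n:ℝ) + 1)) (fun y => l y t) x - u x t)
        - fun x => lx x t - u x t) 2 volume) atTop (nhds 0) := by
      refine (S t).2.congr fun n => ?_
      congr 1; ext x; simp
    have m1 := fun n => ((S t).1 n).sub (tu t)
    exact tendsto_integral_mul m1 ((tlx t).sub (tu t)) m1 ((tlx t).sub (tu t)) c c
  have R1 : Tendsto (fun n : ℕ => ∫ z, (dq (1 / ((n:ℝ) + 1)) (fun y => l y z.2) z.1 - Function.uncurry u z)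
        * (dq (1 / ((n:ℝ) + 1)) (fun y => k y z.2) z.1 - Function.uncurry ut z) ∂(PT T)) atTop
      (nhds (∫ z, (Function.uncurry lx z - Function.uncurry u z)
        * (Function.uncurry kx z - Function.uncurry ut z) ∂(PT T))) := by
    refine tendsto_integral_mul (fun n => (Ml n).sub su) (slx.sub su) (fun n => (Mk n).sub sut)
      (skx.sub sut) (Cl.congr fun n => ?_) (Ck.congr fun n => ?_)
    · congr 1; ext x; simp
    · congr 1; ext x; simp
  have := tendsto_nhds_unique (((L1 T).sub (L1 0)).congr step) (R1.const_mul 2)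
  rw [integral_const_mul]
  simp only [sq]
  exact this

/-! ### Bounded coefficients -/

/-- Essentially bounded, strongly measurable functions. -/
def Bd {α : Type*} [MeasurableSpace α] (ν : Measure α) (f : α → ℝ) : Prop := MemLp f ⊤ ν

section
variable {α : Type*} [MeasurableSpace α] {ν : Measure α} {f g a b : α → ℝ}

lemma Bd.const (c : ℝ) : Bd ν (fun _ => c) := memLp_top_const c

lemma Bd.add (hf : Bd ν f) (hg : Bd ν g) : Bd ν (fun x => f x + g x) := MemLp.add hf hg

lemma Bd.sub (hf : Bd ν f) (hg : Bd ν g) : Bd ν (fun x => f x - g x) := MemLp.sub hf hg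

lemma Bd.neg (hf : Bd ν f) : Bd ν (fun x => -f x) := MemLp.neg hf

lemma Bd.mul (hf : Bd ν f) (hg : Bd ν g) : Bd ν (fun x => f x * g x) :=
  MemLp.mul (p := ⊤) (q := ⊤) (r := ⊤) hg hf

lemma Bd.pow (hf : Bd ν f) (n : ℕ) : Bd ν (fun x => f x ^ n) := by
  induction n with
  | zero => simpa using Bd.const 1
  | succ n ih => simpa only [pow_succ] using ih.mul hf

lemma Bd.of_bound (hm : AEStronglyMeasurable f ν) {C : ℝ} (h : ∀ᵐ x ∂ν, |f x| ≤ C) : Bd ν f :=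
  memLp_top_of_bound hm C h

lemma Bd.of_pos {c C : ℝ} (hm : AEStronglyMeasurable f ν) (hc : 0 < c)
    (h : ∀ᵐ x ∂ν, c ≤ f x ∧ f x ≤ C) :
    Bd ν f ∧ Bd ν (fun x => (f x)⁻¹) ∧ Bd ν (fun x => (f x + 1)⁻¹) := by
  refine ⟨.of_bound hm (C := C) ?_, 
    .of_bound hm.aemeasurable.inv.aestronglyMeasurable (C := c⁻¹) ?_,
    .of_bound (hm.aemeasurable.add_const 1).inv.aestronglyMeasurable (C := 1) ?_⟩ <;> filter_upwards [h] with x hx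
  · rw [abs_of_nonneg (hc.le.trans hx.1)]; exact hx.2
  · rw [abs_of_nonneg (inv_nonneg.2 (hc.le.trans hx.1))]
    exact inv_anti₀ hc hx.1
  · rw [abs_of_nonneg (inv_nonneg.2 (by linarith))]
    exact inv_le_one_of_one_le₀ (by linarith)

/-- A bounded coefficient times two square-integrable factors is integrable. -/
lemma ib (hf : Bd ν f) (ha : MemLp a 2 ν) (hb : MemLp b 2 ν) :
    Integrable (fun x => f x * (a x * b x)) ν := by
  have h : MemLp (fun x => f x * a x) 2 ν := MemLp.mul (p := ⊤) (q := 2) (r := 2) ha hf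
  refine (h.integrable_mul hb).congr (ae_of_all _ fun x => ?_)
  simp [mul_assoc]

lemma Bd.l2 (hf : Bd ν f) (ha : MemLp a 2 ν) : MemLp (fun x => f x * a x) 2 ν :=
  MemLp.mul (p := ⊤) (q := 2) (r := 2) ha hf

end

/-! ### Flows -/

/-- The fields of a flow on `ℝ × ℝ` (space first), together with their relevant derivatives. -/
structure Flow where
  (v vx u ux uxx θ θx θxx ut θt : ℝ → ℝ → ℝ)

/-- A solution of the Navier–Stokes system in the form used by the energy method.  The fields are
defined for all times but the time derivatives are only prescribed for `t > 0`. -/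
structure Sol (μ κ R cv K : ℝ) (F : Flow) : Prop where
  hμ : 0 < μ
  hκ : 0 < κ
  hR : 0 < R
  hcv : 0 < cv
  hK : 1 ≤ K
  v_ge : ∀ x t, K⁻¹ ≤ F.v x t
  v_le : ∀ x t, F.v x t ≤ K
  θ_pos : ∀ x t, 0 < F.θ x t
  dv : ∀ x t, HasDerivAt (fun y => F.v y t) (F.vx x t) x
  du : ∀ x t, HasDerivAt (fun y => F.u y t) (F.ux x t) x
  dux : ∀ x t, HasDerivAt (fun y => F.ux y t) (F.uxx x t) x
  dθ : ∀ x t, HasDerivAt (fun y => F.θ y t) (F.θx x t) x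
  dθx : ∀ x t, HasDerivAt (fun y => F.θx y t) (F.θxx x t) x
  cvx : ∀ t, Continuous fun x => F.vx x t
  cuxx : ∀ t, Continuous fun x => F.uxx x t
  cθxx : ∀ t, Continuous fun x => F.θxx x t
  cv_t : ∀ x, Continuous (F.v x)
  cu_t : ∀ x, Continuous (F.u x)
  cθ_t : ∀ x, Continuous (F.θ x)
  dv_t : ∀ x, ∀ t > 0, HasDerivAt (F.v x) (F.ux x t) t
  du_t : ∀ x, ∀ t > 0, HasDerivAt (F.u x) (F.ut x t) t
  dθ_t : ∀ x, ∀ t > 0, HasDerivAt (F.θ x) (F.θt x t) t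
  eq_u : ∀ x t, F.ut x t = μ * (F.uxx x t / F.v x t - F.ux x t * F.vx x t / F.v x t ^ 2)
    - R * (F.θx x t / F.v x t - F.θ x t * F.vx x t / F.v x t ^ 2)
  eq_θ : ∀ x t, cv * F.θt x t = κ * (F.θxx x t / F.v x t - F.θx x t * F.vx x t / F.v x t ^ 2)
    - R * F.θ x t * F.ux x t / F.v x t + μ * F.ux x t ^ 2 / F.v x t
  mv : Measurable (Function.uncurry F.v)
  mu : Measurable (Function.uncurry F.u)
  mθ : Measurable (Function.uncurry F.θ)
  mvx : Measurable (Function.uncurry F.vx)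
  mux : Measurable (Function.uncurry F.ux)
  mθx : Measurable (Function.uncurry F.θx)
  muxx : Measurable (Function.uncurry F.uxx)
  mθxx : Measurable (Function.uncurry F.θxx)
  bdd : ∀ T, ∃ B > 0, ∀ x t, t ≤ T → |F.u x t| ≤ B ∧ B⁻¹ ≤ F.θ x t ∧ F.θ x t ≤ B
  sv : ∀ t, MemLp (fun x => F.v x t - 1) 2 volume
  su : ∀ t, MemLp (fun x => F.u x t) 2 volume
  sθ : ∀ t, MemLp (fun x => F.θ x t - 1) 2 volume
  svx : ∀ t, MemLp (fun x => F.vx x t) 2 volume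
  sux : ∀ t, MemLp (fun x => F.ux x t) 2 volume
  sθx : ∀ t, MemLp (fun x => F.θx x t) 2 volume
  pv : ∀ T, MemLp (fun z : ℝ × ℝ => F.v z.1 z.2 - 1) 2 (PT T)
  pu : ∀ T, MemLp (fun z : ℝ × ℝ => F.u z.1 z.2) 2 (PT T)
  pθ : ∀ T, MemLp (fun z : ℝ × ℝ => F.θ z.1 z.2 - 1) 2 (PT T)
  pvx : ∀ T, MemLp (fun z : ℝ × ℝ => F.vx z.1 z.2) 2 (PT T)
  pux : ∀ T, MemLp (fun z : ℝ × ℝ => F.ux z.1 z.2) 2 (PT T)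
  pθx : ∀ T, MemLp (fun z : ℝ × ℝ => F.θx z.1 z.2) 2 (PT T)
  puxx : ∀ T, MemLp (fun z : ℝ × ℝ => F.uxx z.1 z.2) 2 (PT T)
  pθxx : ∀ T, MemLp (fun z : ℝ × ℝ => F.θxx z.1 z.2) 2 (PT T)
  put : ∀ T, MemLp (fun z : ℝ × ℝ => F.ut z.1 z.2) 2 (PT T)
  pθt : ∀ T, MemLp (fun z : ℝ × ℝ => F.θt z.1 z.2) 2 (PT T)

/-- Quantitative bounds on the initial data of a flow. -/
structure Init (N m : ℝ) (F : Flow) : Prop where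
  hm : 0 < m
  θ_ge : ∀ x, m ≤ F.θ x 0
  v_le : ∫ x, (F.v x 0 - 1) ^ 2 ≤ N
  u_le : ∫ x, F.u x 0 ^ 2 ≤ N
  θ_le : ∫ x, (F.θ x 0 - 1) ^ 2 ≤ N
  vx_le : ∫ x, F.vx x 0 ^ 2 ≤ N
  ux_le : ∫ x, F.ux x 0 ^ 2 ≤ N
  θx_le : ∫ x, F.θx x 0 ^ 2 ≤ N

lemma ae_PT_le (T : ℝ) : ∀ᵐ z ∂(PT T), 0 < z.2 ∧ z.2 ≤ T := by
  unfold PT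
  have := Measure.quasiMeasurePreserving_snd (μ := (volume : Measure ℝ))
    (ν := (volume : Measure ℝ).restrict (Ioc 0 T))
  exact this.ae (p := fun t : ℝ => 0 < t ∧ t ≤ T) (ae_restrict_mem measurableSet_Ioc)

namespace Sol
variable {μ κ R cv K : ℝ} {F : Flow}

lemma v_pos (S : Sol μ κ R cv K F) (x t : ℝ) : 0 < F.v x t :=
  (inv_pos.2 (by linarith [S.hK])).trans_le (S.v_ge x t)

lemma mslice {f : ℝ → ℝ → ℝ} (h : Measurable (Function.uncurry f)) (t : ℝ) :
    AEStronglyMeasurable (fun x => f x t) volume :=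
  (h.comp (measurable_id.prodMk measurable_const)).aestronglyMeasurable

lemma bv_aux (S : Sol μ κ R cv K F) (t : ℝ) : Bd volume (fun x => F.v x t) ∧
    Bd volume (fun x => (F.v x t)⁻¹) ∧ Bd volume (fun x => (F.v x t + 1)⁻¹) := Bd.of_pos (mslice S.mv t)
  (inv_pos.2 (by linarith [S.hK] : (0:ℝ) < K)) (ae_of_all _ fun x => ⟨S.v_ge x t, S.v_le x t⟩)

lemma bθ_aux (S : Sol μ κ R cv K F) (t : ℝ) : Bd volume (fun x => F.θ x t) ∧
    Bd volume (fun x => (F.θ x t)⁻¹) ∧ Bd volume (fun x => (F.θ x t + 1)⁻¹) := by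
  obtain ⟨B, hB, h⟩ := S.bdd t
  exact Bd.of_pos (mslice S.mθ t) (inv_pos.2 hB)
    (ae_of_all _ fun x => ⟨(h x t le_rfl).2.1, (h x t le_rfl).2.2⟩)

lemma cv_aux (S : Sol μ κ R cv K F) (T : ℝ) : Bd (PT T) (fun z : ℝ × ℝ => F.v z.1 z.2) ∧
    Bd (PT T) (fun z : ℝ × ℝ => (F.v z.1 z.2)⁻¹) ∧
    Bd (PT T) (fun z : ℝ × ℝ => (F.v z.1 z.2 + 1)⁻¹) := Bd.of_pos (ν := PT T)
  (f := fun z : ℝ × ℝ => F.v z.1 z.2) S.mv.aestronglyMeasurable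
  (inv_pos.2 (by linarith [S.hK] : (0:ℝ) < K)) (ae_of_all _ fun x => ⟨S.v_ge _ _, S.v_le _ _⟩)

lemma cθ_aux (S : Sol μ κ R cv K F) (T : ℝ) : Bd (PT T) (fun z : ℝ × ℝ => F.θ z.1 z.2) ∧
    Bd (PT T) (fun z : ℝ × ℝ => (F.θ z.1 z.2)⁻¹) ∧
    Bd (PT T) (fun z : ℝ × ℝ => (F.θ z.1 z.2 + 1)⁻¹) := by
  obtain ⟨B, hB, h⟩ := S.bdd T
  refine Bd.of_pos (C := B) (S.mθ.aestronglyMeasurable) (inv_pos.2 hB) ?_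
  filter_upwards [ae_PT_le T] with z hz
  exact (h z.1 z.2 hz.2).2

lemma bu (S : Sol μ κ R cv K F) (t : ℝ) : Bd volume (fun x => F.u x t) := by
  obtain ⟨B, hB, h⟩ := S.bdd t
  exact .of_bound (mslice S.mu t) (ae_of_all _ fun x => (h x t le_rfl).1)

lemma bv (S : Sol μ κ R cv K F) (t : ℝ) : Bd volume (fun x => F.v x t) := (S.bv_aux t).1
lemma bvi (S : Sol μ κ R cv K F) (t : ℝ) : Bd volume (fun x => (F.v x t)⁻¹) := (S.bv_aux t).2.1
lemma bθ (S : Sol μ κ R cv K F) (t : ℝ) : Bd volume (fun x => F.θ x t) := (S.bθ_aux t).1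
lemma bθi (S : Sol μ κ R cv K F) (t : ℝ) : Bd volume (fun x => (F.θ x t)⁻¹) := (S.bθ_aux t).2.1
lemma byi (S : Sol μ κ R cv K F) (t : ℝ) : Bd volume (fun x => (F.θ x t + 1)⁻¹) :=
  (S.bθ_aux t).2.2

lemma Bu (S : Sol μ κ R cv K F) (T : ℝ) : Bd (PT T) (fun z : ℝ × ℝ => F.u z.1 z.2) := by
  obtain ⟨B, hB, h⟩ := S.bdd T
  refine .of_bound (C := B) (S.mu.aestronglyMeasurable) ?_
  filter_upwards [ae_PT_le T] with z hz
  exact (h z.1 z.2 hz.2).1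

lemma Bv (S : Sol μ κ R cv K F) (T : ℝ) : Bd (PT T) (fun z : ℝ × ℝ => F.v z.1 z.2) :=
  (S.cv_aux T).1
lemma Bvi (S : Sol μ κ R cv K F) (T : ℝ) : Bd (PT T) (fun z : ℝ × ℝ => (F.v z.1 z.2)⁻¹) :=
  (S.cv_aux T).2.1
lemma Bθ (S : Sol μ κ R cv K F) (T : ℝ) : Bd (PT T) (fun z : ℝ × ℝ => F.θ z.1 z.2) :=
  (S.cθ_aux T).1
lemma Bθi (S : Sol μ κ R cv K F) (T : ℝ) : Bd (PT T) (fun z : ℝ × ℝ => (F.θ z.1 z.2)⁻¹) :=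
  (S.cθ_aux T).2.1
lemma Byi (S : Sol μ κ R cv K F) (T : ℝ) : Bd (PT T) (fun z : ℝ × ℝ => (F.θ z.1 z.2 + 1)⁻¹) :=
  (S.cθ_aux T).2.2

lemma v_ne (S : Sol μ κ R cv K F) (x t : ℝ) : F.v x t ≠ 0 := (S.v_pos x t).ne'
lemma θ_ne (S : Sol μ κ R cv K F) (x t : ℝ) : F.θ x t ≠ 0 := (S.θ_pos x t).ne'

/-- The effective stress `μ uₓ / v - R (θ / v - 1)` has `x`-derivative `u_t`. -/
lemma dσ (S : Sol μ κ R cv K F) (x t : ℝ) :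
    HasDerivAt (fun y => μ * F.ux y t / F.v y t - R * (F.θ y t / F.v y t - 1)) (F.ut x t) x := by
  have h1 := ((S.dux x t).const_mul μ).div (S.dv x t) (S.v_ne x t)
  have h2 := (((S.dθ x t).div (S.dv x t) (S.v_ne x t)).sub_const 1).const_mul R
  refine (h1.sub h2).congr_deriv ?_
  rw [S.eq_u]
  have := S.v_ne x t
  field_simp

/-- The `x`-derivative of the heat flux, by the energy equation. -/
lemma dq (S : Sol μ κ R cv K F) (x t : ℝ) :
    HasDerivAt (fun y => κ * F.θx y t / F.v y t)
      (cv * F.θt x t + R * F.θ x t * F.ux x t / F.v x t - μ * F.ux x t ^ 2 / F.v x t) x := by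
  have h1 := ((S.dθx x t).const_mul κ).div (S.dv x t) (S.v_ne x t)
  refine h1.congr_deriv ?_
  rw [S.eq_θ]
  have := S.v_ne x t
  field_simp
  ring

end Sol

/-! ### The entropy estimate -/

/-- Sign conditions on the parameters; `N` bounds the squared norms of the initial data and `m`
bounds the initial temperature from below. -/
structure Par (μ κ R cv K N m : ℝ) : Prop where
  hμ : 0 < μ
  hκ : 0 < κ
  hR : 0 < R
  hcv : 0 < cv
  hK : 1 ≤ K
  hN : 0 ≤ N
  hm : 0 < m

/-- The convex entropy density `x - log x - 1`. -/
noncomputable def ent (x : ℝ) : ℝ := x - Real.log x - 1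

lemma ent_le {x : ℝ} (hx : 0 < x) : ent x ≤ x⁻¹ * (x - 1) ^ 2 := by
  have h := Real.one_sub_inv_le_log_of_pos hx
  have e : x⁻¹ * (x - 1) ^ 2 = x - (1 - x⁻¹) - 1 := by field_simp; ring
  rw [e, ent]; linarith

lemma ent_ge {x : ℝ} (hx : 0 < x) : (x - 1) ^ 2 / (x + 1) ≤ 2 * ent x := by
  have h1 : Real.log x = 2 * Real.log (√x) := by
    rw [Real.log_sqrt hx.le]; ring
  have h2 := Real.log_le_sub_one_of_pos (Real.sqrt_pos.2 hx)
  have h3 := Real.sq_sqrt hx.le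
  rw [div_le_iff₀ (by linarith)]
  set r := √x
  have h4 : (r - 1) ^ 2 ≤ ent x := by rw [ent, h1]; nlinarith
  have h5 : (x - 1) ^ 2 ≤ 2 * (r - 1) ^ 2 * (x + 1) := by
    rw [← h3]; nlinarith [mul_nonneg (sq_nonneg (r - 1)) (sq_nonneg (r - 1))]
  nlinarith

lemma ent_nonneg {x : ℝ} (hx : 0 < x) : 0 ≤ ent x := by
  have := Real.log_le_sub_one_of_pos hx
  rw [ent]; linarith

lemma hasDerivAt_ent {x : ℝ} (hx : 0 < x) : HasDerivAt ent (1 - x⁻¹) x := by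
  unfold ent
  exact ((hasDerivAt_id x).sub (Real.hasDerivAt_log hx.ne')).sub_const 1

lemma measurable_ent : Measurable ent := by unfold ent; fun_prop

namespace Sol
variable {μ κ R cv K N m : ℝ} {F : Flow}

lemma cont_ent {f : ℝ → ℝ} (h : Continuous f) (h0 : ∀ t, 0 < f t) : Continuous fun t => ent (f t) :=
  continuous_iff_continuousAt.2 fun t =>
    (hasDerivAt_ent (h0 t)).continuousAt.comp (f := f) h.continuousAt

lemma int_ent_v (S : Sol μ κ R cv K F) (t : ℝ) : Integrable fun x => ent (F.v x t) := by
  refine (ib (S.bvi t) (S.sv t) (S.sv t)).mono'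
    (measurable_ent.comp_aemeasurable (mslice S.mv t).aemeasurable).aestronglyMeasurable
    (ae_of_all _ fun x => ?_)
  rw [Real.norm_eq_abs, abs_of_nonneg (ent_nonneg (S.v_pos x t))]
  simpa [sq] using ent_le (S.v_pos x t)

lemma int_ent_θ (S : Sol μ κ R cv K F) (t : ℝ) : Integrable fun x => ent (F.θ x t) := by
  refine (ib (S.bθi t) (S.sθ t) (S.sθ t)).mono'
    (measurable_ent.comp_aemeasurable (mslice S.mθ t).aemeasurable).aestronglyMeasurable
    (ae_of_all _ fun x => ?_)
  rw [Real.norm_eq_abs, abs_of_nonneg (ent_nonneg (S.θ_pos x t))]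
  simpa [sq] using ent_le (S.θ_pos x t)

/-- The relative entropy balance: the exchange terms between velocity, volume and temperature form a
spatial divergence, so only the two dissipation terms remain. -/
lemma entropy_identity (S : Sol μ κ R cv K F) {T : ℝ} (hT : 0 ≤ T) :
    (∫ x, (F.u x T ^ 2 / 2 + R * ent (F.v x T) + cv * ent (F.θ x T)))
      - ∫ x, (F.u x 0 ^ 2 / 2 + R * ent (F.v x 0) + cv * ent (F.θ x 0))
    = ∫ z, (-(μ * F.ux z.1 z.2 ^ 2 / (F.v z.1 z.2 * F.θ z.1 z.2)
      + κ * F.θx z.1 z.2 ^ 2 / (F.v z.1 z.2 * F.θ z.1 z.2 ^ 2))) ∂(PT T) := by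
  have hi : ∀ t, Integrable fun x => F.u x t ^ 2 / 2 + R * ent (F.v x t) + cv * ent (F.θ x t) :=
    fun t => (((S.su t).integrable_sq.div_const 2).add ((S.int_ent_v t).const_mul R)).add
      ((S.int_ent_θ t).const_mul cv)
  refine energy_flux (f := fun x t => F.u x t ^ 2 / 2 + R * ent (F.v x t) + cv * ent (F.θ x t))
    (g := fun x t => F.u x t * F.ut x t + R * (1 - (F.v x t)⁻¹) * F.ux x t
      + cv * (1 - (F.θ x t)⁻¹) * F.θt x t)
    (r := fun x t => -(μ * F.ux x t ^ 2 / (F.v x t * F.θ x t)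
      + κ * F.θx x t ^ 2 / (F.v x t * F.θ x t ^ 2)))
    (fl := fun x t => (1 - (F.θ x t)⁻¹) * (κ * F.θx x t / F.v x t)
      + F.u x t * (μ * F.ux x t / F.v x t - R * (F.θ x t / F.v x t - 1)))
    hT ?_ ?_ (hi 0) (hi T) ?_ ?_ ?_ ?_
  · intro x
    have h1 := S.cu_t x
    have h2 := cont_ent (S.cv_t x) (S.v_pos x)
    have h3 := cont_ent (S.cθ_t x) (S.θ_pos x)
    fun_prop
  · intro x t ht
    have h1 := (((S.du_t x t ht).fun_pow 2).div_const 2)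
    have h2 := ((hasDerivAt_ent (S.v_pos x t)).comp t (S.dv_t x t ht)).const_mul R
    have h3 := ((hasDerivAt_ent (S.θ_pos x t)).comp t (S.dθ_t x t ht)).const_mul cv
    refine ((h1.add h2).add h3).congr_deriv ?_
    push_cast; ring
  · have h1 := ib (Bd.const 1) (S.pu T) (S.put T)
    have h2 := ib ((S.Bvi T).mul (Bd.const R)) (S.pv T) (S.pux T)
    have h3 := ib ((S.Bθi T).mul (Bd.const cv)) (S.pθ T) (S.pθt T)
    refine ((h1.add h2).add h3).congr (ae_of_all _ fun z => ?_)
    have := S.v_ne z.1 z.2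
    have := S.θ_ne z.1 z.2
    simp only [Pi.add_apply, Function.uncurry]
    field_simp
  · have h1 := ib (((S.Bvi T).mul (S.Bθi T)).mul (Bd.const (-μ))) (S.pux T) (S.pux T)
    have h2 := ib (((S.Bvi T).mul ((S.Bθi T).pow 2)).mul (Bd.const (-κ))) (S.pθx T) (S.pθx T)
    refine (h1.add h2).congr (ae_of_all _ fun z => ?_)
    simp only [Pi.add_apply, Function.uncurry]
    ring
  · intro t
    have h1 := ib (((S.bvi t).mul (S.bθi t)).mul (Bd.const κ)) (S.sθ t) (S.sθx t)
    have h2 := ib ((S.bvi t).mul (Bd.const μ)) (S.su t) (S.sux t)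
    have h3 := ib ((S.bvi t).mul (Bd.const (-R))) (S.su t) (S.sθ t)
    have h4 := ib ((S.bvi t).mul (Bd.const R)) (S.su t) (S.sv t)
    refine (((h1.add h2).add h3).add h4).congr (ae_of_all _ fun x => ?_)
    have := S.v_ne x t
    have := S.θ_ne x t
    simp only [Pi.add_apply]
    field_simp
    ring
  · intro x t
    have h1 := (((S.dθ x t).fun_inv (S.θ_ne x t)).const_sub 1).fun_mul (S.dq x t)
    have h2 := (S.du x t).fun_mul (S.dσ x t)
    refine (h1.add h2).congr_deriv ?_
    have := S.v_ne x t
    have := S.θ_ne x t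
    field_simp
    ring

end Sol

/-- The consequences of the relative entropy balance, using the two-sided bound on the volume. -/
theorem entropy_bound {μ κ R cv K N m : ℝ} (P : Par μ κ R cv K N m) :
    ∃ C, 0 ≤ C ∧ ∀ F, Sol μ κ R cv K F → Init N m F → ∀ T, 0 ≤ T →
      ∫ x, F.u x T ^ 2 ≤ C ∧ ∫ x, (F.v x T - 1) ^ 2 ≤ C ∧
      ∫ x, (F.θ x T - 1) ^ 2 / (F.θ x T + 1) ≤ C ∧
      ∫ x, ent (F.θ x T) ≤ C ∧
      ∫ z, F.ux z.1 z.2 ^ 2 / F.θ z.1 z.2 ∂(PT T) ≤ C ∧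
      ∫ z, F.θx z.1 z.2 ^ 2 / F.θ z.1 z.2 ^ 2 ∂(PT T) ≤ C := by
  obtain ⟨hμ, hκ, hR, hcv, hK, hN, hm⟩ := P
  have hK0 : 0 < K := by linarith
  set E := N / 2 + R * K * N + cv * m⁻¹ * N with hE
  have hE0 : 0 ≤ E := by positivity
  refine ⟨2 * E + 2 * (K + 1) / R * E + 2 / cv * E + K / μ * E + K / κ * E, by positivity, ?_⟩
  have p1 : 0 ≤ 2 * (K + 1) / R * E := by positivity
  have p2 : 0 ≤ 2 / cv * E := by positivity
  have p3 : 0 ≤ K / μ * E := by positivity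
  have p4 : 0 ≤ K / κ * E := by positivity
  intro F S I T hT
  have id := S.entropy_identity hT
  have hi : ∀ t, Integrable fun x => F.u x t ^ 2 / 2 + R * ent (F.v x t) + cv * ent (F.θ x t) :=
    fun t => (((S.su t).integrable_sq.div_const 2).add ((S.int_ent_v t).const_mul R)).add
      ((S.int_ent_θ t).const_mul cv)
  have hstart : ∫ x, (F.u x 0 ^ 2 / 2 + R * ent (F.v x 0) + cv * ent (F.θ x 0)) ≤ E := by
    have h2 : Integrable fun x => F.u x 0 ^ 2 / 2 + R * K * (F.v x 0 - 1) ^ 2 :=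
      ((S.su 0).integrable_sq.div_const 2).add ((S.sv 0).integrable_sq.const_mul _)
    have h3 : Integrable fun x => cv * m⁻¹ * (F.θ x 0 - 1) ^ 2 :=
      (S.sθ 0).integrable_sq.const_mul _
    calc _ ≤ ∫ x, (F.u x 0 ^ 2 / 2 + R * K * (F.v x 0 - 1) ^ 2 + cv * m⁻¹ * (F.θ x 0 - 1) ^ 2) := by
          refine integral_mono (hi 0) (h2.add h3) fun x => ?_
          have a1 : ent (F.v x 0) ≤ K * (F.v x 0 - 1) ^ 2 := by
            refine (ent_le (S.v_pos x 0)).trans (mul_le_mul_of_nonneg_right ?_ (sq_nonneg _))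
            exact inv_le_of_inv_le₀ hK0 (S.v_ge x 0)
          have a2 : ent (F.θ x 0) ≤ m⁻¹ * (F.θ x 0 - 1) ^ 2 := by
            refine (ent_le (S.θ_pos x 0)).trans (mul_le_mul_of_nonneg_right ?_ (sq_nonneg _))
            exact inv_anti₀ hm (I.θ_ge x)
          have := mul_le_mul_of_nonneg_left a1 hR.le
          have := mul_le_mul_of_nonneg_left a2 hcv.le
          simp only
          linarith
      _ = (∫ x, F.u x 0 ^ 2) / 2 + R * K * (∫ x, (F.v x 0 - 1) ^ 2)
          + cv * m⁻¹ * ∫ x, (F.θ x 0 - 1) ^ 2 := by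
          rw [integral_add h2 h3, integral_add ((S.su 0).integrable_sq.div_const 2)
            ((S.sv 0).integrable_sq.const_mul _), integral_const_mul, integral_const_mul,
            integral_div]
      _ ≤ E := by
          have := I.u_le
          have b1 := mul_le_mul_of_nonneg_left I.v_le (by positivity : 0 ≤ R * K)
          have b2 := mul_le_mul_of_nonneg_left I.θ_le (by positivity : 0 ≤ cv * m⁻¹)
          rw [hE]; linarith
  rw [integral_neg] at id
  set D := fun z : ℝ × ℝ => μ * F.ux z.1 z.2 ^ 2 / (F.v z.1 z.2 * F.θ z.1 z.2)
      + κ * F.θx z.1 z.2 ^ 2 / (F.v z.1 z.2 * F.θ z.1 z.2 ^ 2) with hD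
  have Dt : ∀ z : ℝ × ℝ, 0 ≤ μ * F.ux z.1 z.2 ^ 2 / (F.v z.1 z.2 * F.θ z.1 z.2)
      ∧ 0 ≤ κ * F.θx z.1 z.2 ^ 2 / (F.v z.1 z.2 * F.θ z.1 z.2 ^ 2) := fun z => by
    have := S.v_pos z.1 z.2
    have := S.θ_pos z.1 z.2
    constructor <;> positivity
  have D0 : 0 ≤ ∫ z, D z ∂(PT T) := integral_nonneg fun z => add_nonneg (Dt z).1 (Dt z).2
  have Di : Integrable D (PT T) := by
    have h1 := ib (((S.Bvi T).mul (S.Bθi T)).mul (Bd.const μ)) (S.pux T) (S.pux T)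
    have h2 := ib (((S.Bvi T).mul ((S.Bθi T).pow 2)).mul (Bd.const κ)) (S.pθx T) (S.pθx T)
    refine (h1.add h2).congr (ae_of_all _ fun z => ?_)
    simp only [Pi.add_apply, hD]
    ring
  have f0 : ∀ x t, 0 ≤ F.u x t ^ 2 / 2 ∧ 0 ≤ R * ent (F.v x t) ∧ 0 ≤ cv * ent (F.θ x t) :=
    fun x t => ⟨by positivity, mul_nonneg hR.le (ent_nonneg (S.v_pos x t)),
      mul_nonneg hcv.le (ent_nonneg (S.θ_pos x t))⟩
  have fpos : 0 ≤ ∫ x, (F.u x T ^ 2 / 2 + R * ent (F.v x T) + cv * ent (F.θ x T)) :=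
    integral_nonneg fun x => add_nonneg (add_nonneg (f0 x T).1 (f0 x T).2.1) (f0 x T).2.2
  have fE : ∫ x, (F.u x T ^ 2 / 2 + R * ent (F.v x T) + cv * ent (F.θ x T)) ≤ E := by linarith
  have DE : ∫ z, D z ∂(PT T) ≤ E := by linarith
  -- every quantity to be bounded is dominated pointwise by a multiple of the density or of `D`
  have A : ∀ (a : ℝ → ℝ) (c : ℝ), 0 ≤ c → (∀ x, 0 ≤ a x) →
      (∀ x, a x ≤ c * (F.u x T ^ 2 / 2 + R * ent (F.v x T) + cv * ent (F.θ x T))) →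
      ∫ x, a x ≤ c * E := fun a c hc ha h => by
    refine (integral_mono_of_nonneg (ae_of_all _ ha) ((hi T).const_mul c) (ae_of_all _ h)).trans ?_
    rw [integral_const_mul]; exact mul_le_mul_of_nonneg_left fE hc
  have A' : ∀ (a : ℝ × ℝ → ℝ) (c : ℝ), 0 ≤ c → (∀ x, 0 ≤ a x) →
      (∀ x, a x ≤ c * D x) → ∫ x, a x ∂(PT T) ≤ c * E := fun a c hc ha h => by
    refine (integral_mono_of_nonneg (ae_of_all _ ha) (Di.const_mul c) (ae_of_all _ h)).trans ?_
    rw [integral_const_mul]; exact mul_le_mul_of_nonneg_left DE hc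
  refine ⟨?_, ?_, ?_, ?_, ?_, ?_⟩
  · refine (A _ 2 (by norm_num) (fun x => sq_nonneg _) fun x => ?_).trans (by linarith)
    have := f0 x T; linarith
  · refine (A _ (2 * (K + 1) / R) (by positivity) (fun x => sq_nonneg _) fun x => ?_).trans
      (by linarith)
    have h := f0 x T
    have h1 := ent_ge (S.v_pos x T)
    have h2 := S.v_pos x T
    have h3 := S.v_le x T
    rw [div_le_iff₀ (by linarith)] at h1
    have h4 : (F.v x T - 1) ^ 2 ≤ 2 * ent (F.v x T) * (K + 1) :=
      h1.trans (mul_le_mul_of_nonneg_left (by linarith)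
        (by linarith [ent_nonneg h2]))
    have h5 : 2 * ent (F.v x T) * (K + 1) = 2 * (K + 1) / R * (R * ent (F.v x T)) := by
      field_simp
    have h6 : 2 * (K + 1) / R * (R * ent (F.v x T)) ≤ 2 * (K + 1) / R *
        (F.u x T ^ 2 / 2 + R * ent (F.v x T) + cv * ent (F.θ x T)) :=
      mul_le_mul_of_nonneg_left (by linarith) (by positivity)
    linarith
  · refine (A _ (2 / cv) (by positivity) (fun x => ?_) fun x => ?_).trans (by linarith)
    · have := S.θ_pos x T; positivity
    have h := f0 x T
    have h1 := ent_ge (S.θ_pos x T)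
    have h5 : 2 * ent (F.θ x T) = 2 / cv * (cv * ent (F.θ x T)) := by field_simp
    have h6 : 2 / cv * (cv * ent (F.θ x T)) ≤ 2 / cv *
        (F.u x T ^ 2 / 2 + R * ent (F.v x T) + cv * ent (F.θ x T)) :=
      mul_le_mul_of_nonneg_left (by linarith) (by positivity)
    linarith
  · refine (A _ (2 / cv) (by positivity) (fun x => ent_nonneg (S.θ_pos x T)) fun x => ?_).trans
      (by linarith)
    have h := f0 x T
    have h5 : 2 * ent (F.θ x T) = 2 / cv * (cv * ent (F.θ x T)) := by field_simp
    have h6 : 2 / cv * (cv * ent (F.θ x T)) ≤ 2 / cv *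
        (F.u x T ^ 2 / 2 + R * ent (F.v x T) + cv * ent (F.θ x T)) :=
      mul_le_mul_of_nonneg_left (by linarith) (by positivity)
    linarith [ent_nonneg (S.θ_pos x T)]
  · refine (A' _ (K / μ) (by positivity) (fun z => ?_) fun z => ?_).trans (by linarith)
    · have := S.θ_pos z.1 z.2; positivity
    have h1 := S.θ_pos z.1 z.2
    have h2 := S.v_pos z.1 z.2
    calc F.ux z.1 z.2 ^ 2 / F.θ z.1 z.2
        ≤ (K / F.v z.1 z.2) * (F.ux z.1 z.2 ^ 2 / F.θ z.1 z.2) :=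
          le_mul_of_one_le_left (by positivity) ((one_le_div h2).2 (S.v_le _ _))
      _ = K / μ * (μ * F.ux z.1 z.2 ^ 2 / (F.v z.1 z.2 * F.θ z.1 z.2)) := by field_simp
      _ ≤ _ := mul_le_mul_of_nonneg_left (le_add_of_nonneg_right (Dt z).2) (by positivity)
  · refine (A' _ (K / κ) (by positivity) (fun z => ?_) fun z => ?_).trans (by linarith)
    · have := S.θ_pos z.1 z.2; positivity
    have h1 := S.θ_pos z.1 z.2
    have h2 := S.v_pos z.1 z.2
    calc F.θx z.1 z.2 ^ 2 / F.θ z.1 z.2 ^ 2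
        ≤ (K / F.v z.1 z.2) * (F.θx z.1 z.2 ^ 2 / F.θ z.1 z.2 ^ 2) :=
          le_mul_of_one_le_left (by positivity) ((one_le_div h2).2 (S.v_le _ _))
      _ = K / κ * (κ * F.θx z.1 z.2 ^ 2 / (F.v z.1 z.2 * F.θ z.1 z.2 ^ 2)) := by field_simp
      _ ≤ _ := mul_le_mul_of_nonneg_left (le_add_of_nonneg_left (Dt z).1) (by positivity)

/-! ### Weight functions of the temperature -/

/-- `((θ-1)² / (θ+1))² / 2`, of quadratic growth. -/
noncomputable def Psi (θ : ℝ) : ℝ := ((θ - 1) ^ 2 / (θ + 1)) ^ 2 / 2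
/-- The derivative of `Psi`. -/
noncomputable def psi1 (θ : ℝ) : ℝ := (θ - 1) ^ 3 * (θ + 3) / (θ + 1) ^ 3
/-- The second derivative of `Psi`. -/
noncomputable def psi1' (θ : ℝ) : ℝ :=
  (θ - 1) ^ 2 * ((θ + 1) ^ 2 + 4 * (θ + 1) + 12) / (θ + 1) ^ 4
/-- `(θ-1)⁴ / (θ+1)³`, of linear growth. -/
noncomputable def psi (θ : ℝ) : ℝ := (θ - 1) ^ 4 / (θ + 1) ^ 3
/-- The derivative of `psi`. -/
noncomputable def psi' (θ : ℝ) : ℝ := (θ - 1) ^ 3 * (θ + 7) / (θ + 1) ^ 4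
/-- The second derivative of `psi`. -/
noncomputable def psi'' (θ : ℝ) : ℝ := 48 * (θ - 1) ^ 2 / (θ + 1) ^ 5

section
variable {θ : ℝ}

lemma hasDerivAt_sub1 : HasDerivAt (fun x : ℝ => x - 1) 1 θ := (hasDerivAt_id θ).sub_const 1
lemma hasDerivAt_addc (c : ℝ) : HasDerivAt (fun x : ℝ => x + c) 1 θ := (hasDerivAt_id θ).add_const c

lemma hasDerivAt_Psi (h : 0 < θ) : HasDerivAt Psi (psi1 θ) θ := by
  have hy : θ + 1 ≠ 0 := by linarith
  have h1 := (((hasDerivAt_sub1 (θ := θ)).fun_pow 2).fun_div (hasDerivAt_addc 1) hy).fun_pow 2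
  refine (h1.div_const 2).congr_deriv ?_
  unfold psi1; push_cast; field_simp; ring

lemma hasDerivAt_psi1 (h : 0 < θ) : HasDerivAt psi1 (psi1' θ) θ := by
  have hy : (θ + 1) ^ 3 ≠ 0 := by positivity
  have h1 := (((hasDerivAt_sub1 (θ := θ)).fun_pow 3).fun_mul (hasDerivAt_addc 3)).fun_div
    ((hasDerivAt_addc 1).fun_pow 3) hy
  refine h1.congr_deriv ?_
  unfold psi1'; push_cast; field_simp; ring

lemma hasDerivAt_psi (h : 0 < θ) : HasDerivAt psi (psi' θ) θ := by
  have hy : (θ + 1) ^ 3 ≠ 0 := by positivity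
  have h1 := ((hasDerivAt_sub1 (θ := θ)).fun_pow 4).fun_div ((hasDerivAt_addc 1).fun_pow 3) hy
  refine h1.congr_deriv ?_
  unfold psi'; push_cast; field_simp; ring

lemma hasDerivAt_psi' (h : 0 < θ) : HasDerivAt psi' (psi'' θ) θ := by
  have hy : (θ + 1) ^ 4 ≠ 0 := by positivity
  have h1 := (((hasDerivAt_sub1 (θ := θ)).fun_pow 3).fun_mul (hasDerivAt_addc 7)).fun_div
    ((hasDerivAt_addc 1).fun_pow 4) hy
  refine h1.congr_deriv ?_
  unfold psi''; push_cast; field_simp; ring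

lemma psi1_le (h : 0 < θ) : psi1 θ ≤ psi θ + 4 := by
  have e : psi1 θ = psi θ + 4 * ((θ - 1) / (θ + 1)) ^ 3 := by unfold psi1 psi; field_simp; ring
  have h1 : (θ - 1) / (θ + 1) ≤ 1 := by rw [div_le_one (by linarith)]; linarith
  have h2 : ((θ - 1) / (θ + 1)) ^ 3 ≤ 1 := by
    nlinarith [sq_nonneg ((θ - 1) / (θ + 1)), sq_nonneg ((θ - 1) / (θ + 1) + 1)]
  linarith

lemma psi_ge (h : 0 < θ) : (θ + 1) - 8 ≤ psi θ := by
  unfold psi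
  rw [le_div_iff₀ (by positivity)]
  nlinarith [sq_nonneg (θ - 1), sq_nonneg (θ + 1), sq_nonneg (3 * (θ + 1) - 2)]

lemma psi_nonneg (h : 0 < θ) : 0 ≤ psi θ := by unfold psi; positivity

lemma psi''_nonneg (h : 0 < θ) : 0 ≤ psi'' θ := by unfold psi''; positivity

lemma psi1'_ge (h : 0 < θ) : 1 - 32 / θ ^ 2 ≤ psi1' θ := by
  have h1 : 1 - 32 / (θ + 1) ^ 3 ≤ psi1' θ := by
    have e : psi1' θ = 1 - 32 / (θ + 1) ^ 3 + 48 / (θ + 1) ^ 4 := by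
      unfold psi1'; field_simp; ring
    have : 0 ≤ 48 / (θ + 1) ^ 4 := by positivity
    linarith
  have h2 : 32 / (θ + 1) ^ 3 ≤ 32 / θ ^ 2 := by
    apply div_le_div_of_nonneg_left (by norm_num) (by positivity)
    nlinarith [mul_pos h h, mul_pos (mul_pos h h) h]
  linarith

lemma abs_psi1_le (h : 0 < θ) : |psi1 θ| * θ ≤ 3 * ((θ - 1) ^ 2 / (θ + 1)) * |θ - 1| := by
  have e : |psi1 θ| * θ = ((θ - 1) ^ 2 / (θ + 1)) * |θ - 1| * (θ * (θ + 3) / (θ + 1) ^ 2) := by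
    unfold psi1
    rw [abs_div, abs_mul, abs_pow, abs_of_pos (by linarith : 0 < θ + 3),
      abs_of_pos (by positivity : 0 < (θ + 1) ^ 3), pow_succ, sq_abs]
    field_simp
  have h1 : θ * (θ + 3) / (θ + 1) ^ 2 ≤ 3 := by
    rw [div_le_iff₀ (by positivity)]; nlinarith
  rw [e]
  calc _ ≤ ((θ - 1) ^ 2 / (θ + 1)) * |θ - 1| * 3 := mul_le_mul_of_nonneg_left h1 (by positivity)
    _ = _ := by ring

lemma abs_sub_one_le (h : 0 < θ) : |θ - 1| ≤ θ + 1 := abs_le.2 ⟨by linarith, by linarith⟩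

lemma abs_psi'_le (h : 0 < θ) : |psi' θ| * (θ + 1) ≤ 7 * ((θ - 1) ^ 2 / (θ + 1)) := by
  have e : |psi' θ| * (θ + 1) = ((θ - 1) ^ 2 / (θ + 1)) * (|θ - 1| / (θ + 1) * ((θ + 7) / (θ + 1))) := by
    unfold psi'
    rw [abs_div, abs_mul, abs_pow, abs_of_pos (by linarith : 0 < θ + 7),
      abs_of_pos (by positivity : 0 < (θ + 1) ^ 4), pow_succ, sq_abs]
    field_simp
  have h1 : |θ - 1| / (θ + 1) ≤ 1 := (div_le_one (by linarith)).2 (abs_sub_one_le h)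
  have h2 : (θ + 7) / (θ + 1) ≤ 7 := by rw [div_le_iff₀ (by positivity)]; linarith
  rw [e, mul_comm 7]
  refine mul_le_mul_of_nonneg_left ?_ (by positivity)
  calc _ ≤ 1 * (7:ℝ) := mul_le_mul h1 h2 (by positivity) (by norm_num)
    _ = 7 := by norm_num

lemma w_le_y (h : 0 < θ) : (θ - 1) ^ 2 / (θ + 1) ≤ θ + 1 := by
  rw [div_le_iff₀ (by positivity)]; nlinarith

lemma abs_psi'_le' (h : 0 < θ) : |psi' θ| ≤ 7 := by
  have h1 := abs_psi'_le h
  have h2 := w_le_y h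
  have : |psi' θ| * (θ + 1) ≤ 7 * (θ + 1) := by linarith
  exact le_of_mul_le_mul_right this (by linarith)

lemma psi_mul_y (h : 0 < θ) : psi θ * (θ + 1) = ((θ - 1) ^ 2 / (θ + 1)) ^ 2 := by
  unfold psi; field_simp

lemma y_le_w (h : 0 < θ) : θ + 1 ≤ 4 + (θ - 1) ^ 2 / (θ + 1) := by
  rw [← sub_le_iff_le_add', le_div_iff₀ (by linarith)]; nlinarith

end

lemma young {e : ℝ} (he : 0 < e) (a b : ℝ) : a * b ≤ e * a ^ 2 + b ^ 2 / (4 * e) := by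
  have : e * a ^ 2 + b ^ 2 / (4 * e) - a * b = (2 * e * a - b) ^ 2 / (4 * e) := by
    field_simp; ring
  have h2 : 0 ≤ (2 * e * a - b) ^ 2 / (4 * e) := by positivity
  linarith

set_option maxHeartbeats 2000000 in
/-- The pointwise estimate behind the second energy inequality: all terms of indefinite sign in
the production of `cᵥ Ψ(θ) + u² ψ(θ) + Λ u⁴` are absorbed by dissipation, up to terms which are
controlled by the entropy estimate or which carry sup-norms integrable in time. -/
lemma pointwise_second {μ κ R cv K Λ v u θ ux θx : ℝ} (hμ : 0 < μ) (hκ : 0 < κ) (hR : 0 < R)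
    (hcv : 0 < cv) (hK : 1 ≤ K) (hv : 0 < v) (hvK : v ≤ K) (hθ : 0 < θ)
    (hΛ : 12 * Λ * μ = 2 + 7 * μ / cv + 2 / κ * ((14 * κ / cv) ^ 2 + (14 * μ) ^ 2)) :
    -R * psi1 θ * θ * ux + μ * psi1 θ * ux ^ 2 - κ * psi1' θ * θx ^ 2
      - R / cv * u ^ 2 * psi' θ * θ * ux + μ / cv * u ^ 2 * psi' θ * ux ^ 2
      - 2 * κ / cv * u * psi' θ * ux * θx - κ / cv * u ^ 2 * psi'' θ * θx ^ 2
      - 2 * μ * psi θ * ux ^ 2 + 2 * R * psi θ * ux * (θ - v)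
      - 2 * μ * u * psi' θ * θx * ux + 2 * R * u * psi' θ * θx * (θ - v)
      - 12 * Λ * μ * u ^ 2 * ux ^ 2 + 12 * Λ * R * u ^ 2 * ux * (θ - v)
    ≤ ((12 * μ + 1) * ux ^ 2 + 32 * κ * (θx ^ 2 / θ ^ 2)
      + (9 * R ^ 2 / μ + 4 * R ^ 2 * K ^ 2 / μ + 49 * R ^ 2 / (4 * cv ^ 2)
          + 2 / κ * (14 * R * K) ^ 2 + 36 * Λ ^ 2 * R ^ 2)
        * ((u ^ 2 + (θ - 1) ^ 2 / (θ + 1)) * ((θ - 1) ^ 2 / (θ + 1)) ^ 2)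
      + 288 * Λ ^ 2 * R ^ 2 * (((θ - 1) ^ 2 / (θ + 1) + (v - 1) ^ 2) * u ^ 4))
      - (μ / 2 * ((θ + 1) * ux ^ 2) + κ / 2 * θx ^ 2) := by
  have hK0 : 0 < K := by linarith
  have f1 := psi1_le hθ
  have f2 := psi_ge hθ
  have f3 := psi_nonneg hθ
  have f4 := psi''_nonneg hθ
  have f5 := psi1'_ge hθ
  have f6 := abs_psi1_le hθ
  have f7 := abs_psi'_le hθ
  have f8 := abs_psi'_le' hθ
  have f9 := psi_mul_y hθ
  have f10 := w_le_y hθ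
  have f11 : (θ - 1) ^ 2 = (θ - 1) ^ 2 / (θ + 1) * (θ + 1) := by field_simp
  have f12 : (θ - 1) = 2 * ((θ - 1) / (θ + 1)) + (θ - 1) ^ 2 / (θ + 1) := by field_simp; ring
  have f13 : ((θ - 1) / (θ + 1)) ^ 2 ≤ (θ - 1) ^ 2 / (θ + 1) := by
    rw [div_pow]
    apply div_le_div_of_nonneg_left (by positivity) (by positivity)
    nlinarith
  have hw0 : 0 ≤ (θ - 1) ^ 2 / (θ + 1) := by positivity
  have hy : 0 < θ + 1 := by linarith
  have hd : |θ - v| ≤ K * (θ + 1) := abs_le.2 ⟨by nlinarith, by nlinarith⟩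
  set w := (θ - 1) ^ 2 / (θ + 1) with hw
  set y := θ + 1 with hyd
  set p1 := psi1 θ
  set p1' := psi1' θ
  set p := psi θ
  set p' := psi' θ
  set p'' := psi'' θ
  have au : 0 ≤ |ux| := abs_nonneg _
  have aU : 0 ≤ |u| := abs_nonneg _
  have aθ : 0 ≤ |θx| := abs_nonneg _
  have ta : -R * p1 * θ * ux ≤ μ / 4 * (y * ux ^ 2) + 9 * R ^ 2 / μ * w ^ 3 := by
    calc -R * p1 * θ * ux ≤ |-R * p1 * θ * ux| := le_abs_self _
      _ = R * (|p1| * θ) * |ux| := by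
        rw [abs_mul, abs_mul, abs_mul, abs_neg, abs_of_pos hR, abs_of_pos hθ]; ring
      _ ≤ R * (3 * w * |θ - 1|) * |ux| := by gcongr
      _ = |ux| * (3 * R * w * |θ - 1|) := by ring
      _ ≤ (μ / 4 * y) * |ux| ^ 2 + (3 * R * w * |θ - 1|) ^ 2 / (4 * (μ / 4 * y)) :=
        young (by positivity) _ _
      _ = μ / 4 * (y * ux ^ 2) + 9 * R ^ 2 / μ * w ^ 2 * ((θ - 1) ^ 2 / y) := by
        rw [sq_abs, mul_pow, sq_abs]; field_simp; ring
      _ = _ := by rw [← hw]; ring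
  have ti : 2 * R * p * ux * (θ - v) ≤ μ / 4 * (y * ux ^ 2) + 4 * R ^ 2 * K ^ 2 / μ * w ^ 3 := by
    calc 2 * R * p * ux * (θ - v) ≤ |2 * R * p * ux * (θ - v)| := le_abs_self _
      _ = 2 * R * p * |ux| * |θ - v| := by
        rw [abs_mul, abs_mul, abs_of_nonneg (by positivity : 0 ≤ 2 * R * p)]
      _ ≤ 2 * R * p * |ux| * (K * y) := by gcongr
      _ = |ux| * (2 * R * K * (p * y)) := by ring
      _ = |ux| * (2 * R * K * w ^ 2) := by rw [f9]
      _ ≤ (μ / 4 * y) * |ux| ^ 2 + (2 * R * K * w ^ 2) ^ 2 / (4 * (μ / 4 * y)) :=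
        young (by positivity) _ _
      _ = μ / 4 * (y * ux ^ 2) + 4 * R ^ 2 * K ^ 2 / μ * w ^ 3 * (w / y) := by
        rw [sq_abs]; field_simp; ring
      _ ≤ μ / 4 * (y * ux ^ 2) + 4 * R ^ 2 * K ^ 2 / μ * w ^ 3 * 1 := by
        gcongr; exact (div_le_one hy).2 f10
      _ = _ := by ring
  have td : -(R / cv * u ^ 2 * p' * θ * ux) ≤ u ^ 2 * ux ^ 2
      + 49 * R ^ 2 / (4 * cv ^ 2) * (u ^ 2 * w ^ 2) := by
    calc -(R / cv * u ^ 2 * p' * θ * ux) ≤ |R / cv * u ^ 2 * p' * θ * ux| := neg_le_abs _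
      _ = R / cv * u ^ 2 * (|p'| * θ) * |ux| := by
        rw [abs_mul, abs_mul, abs_mul, abs_of_nonneg (by positivity : 0 ≤ R / cv * u ^ 2),
          abs_of_pos hθ]; ring
      _ ≤ R / cv * u ^ 2 * (7 * w) * |ux| := by
        have f14 : |p'| * θ ≤ 7 * w :=
          (mul_le_mul_of_nonneg_left (by linarith : θ ≤ y) (abs_nonneg _)).trans f7
        exact mul_le_mul_of_nonneg_right (mul_le_mul_of_nonneg_left f14 (by positivity)) au
      _ = u ^ 2 * (|ux| * (7 * R / cv * w)) := by ring
      _ ≤ u ^ 2 * (1 * |ux| ^ 2 + (7 * R / cv * w) ^ 2 / (4 * 1)) := by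
        gcongr; exact young (by norm_num) _ _
      _ = _ := by rw [sq_abs]; field_simp; ring
  have te : μ / cv * u ^ 2 * p' * ux ^ 2 ≤ 7 * μ / cv * (u ^ 2 * ux ^ 2) := by
    calc _ ≤ μ / cv * u ^ 2 * 7 * ux ^ 2 := by gcongr; exact (le_abs_self _).trans f8
      _ = _ := by ring
  have tf : -(2 * κ / cv * u * p' * ux * θx) ≤ κ / 8 * θx ^ 2
      + 2 / κ * (14 * κ / cv) ^ 2 * (u ^ 2 * ux ^ 2) := by
    calc -(2 * κ / cv * u * p' * ux * θx) ≤ |2 * κ / cv * u * p' * ux * θx| := neg_le_abs _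
      _ = 2 * κ / cv * |u| * |p'| * |ux| * |θx| := by
        rw [abs_mul, abs_mul, abs_mul, abs_mul, abs_of_pos (by positivity : 0 < 2 * κ / cv)]
      _ ≤ 2 * κ / cv * |u| * 7 * |ux| * |θx| := by gcongr
      _ = |θx| * (14 * κ / cv * (|u| * |ux|)) := by ring
      _ ≤ κ / 8 * |θx| ^ 2 + (14 * κ / cv * (|u| * |ux|)) ^ 2 / (4 * (κ / 8)) :=
        young (by positivity) _ _
      _ = _ := by rw [mul_pow, mul_pow |u|, sq_abs, sq_abs, sq_abs]; field_simp; ring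
  have tj : -(2 * μ * u * p' * θx * ux) ≤ κ / 8 * θx ^ 2
      + 2 / κ * (14 * μ) ^ 2 * (u ^ 2 * ux ^ 2) := by
    calc -(2 * μ * u * p' * θx * ux) ≤ |2 * μ * u * p' * θx * ux| := neg_le_abs _
      _ = 2 * μ * |u| * |p'| * |θx| * |ux| := by
        rw [abs_mul, abs_mul, abs_mul, abs_mul, abs_of_pos (by positivity : 0 < 2 * μ)]
      _ ≤ 2 * μ * |u| * 7 * |θx| * |ux| := by gcongr
      _ = |θx| * (14 * μ * (|u| * |ux|)) := by ring
      _ ≤ κ / 8 * |θx| ^ 2 + (14 * μ * (|u| * |ux|)) ^ 2 / (4 * (κ / 8)) :=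
        young (by positivity) _ _
      _ = _ := by rw [mul_pow, mul_pow |u|, sq_abs, sq_abs, sq_abs]; field_simp; ring
  have tk : 2 * R * u * p' * θx * (θ - v) ≤ κ / 8 * θx ^ 2
      + 2 / κ * (14 * R * K) ^ 2 * (u ^ 2 * w ^ 2) := by
    calc 2 * R * u * p' * θx * (θ - v) ≤ |2 * R * u * p' * θx * (θ - v)| := le_abs_self _
      _ = 2 * R * |u| * |p'| * |θx| * |θ - v| := by
        rw [abs_mul, abs_mul, abs_mul, abs_mul, abs_of_pos (by positivity : 0 < 2 * R)]
      _ ≤ 2 * R * |u| * |p'| * |θx| * (K * y) := by gcongr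
      _ = 2 * R * K * |u| * (|p'| * y) * |θx| := by ring
      _ ≤ 2 * R * K * |u| * (7 * w) * |θx| := by gcongr
      _ = |θx| * (14 * R * K * (|u| * w)) := by ring
      _ ≤ κ / 8 * |θx| ^ 2 + (14 * R * K * (|u| * w)) ^ 2 / (4 * (κ / 8)) :=
        young (by positivity) _ _
      _ = _ := by rw [mul_pow, mul_pow |u|, sq_abs, sq_abs]; field_simp; ring
  have tm : 12 * Λ * R * u ^ 2 * ux * (θ - v) ≤ u ^ 2 * ux ^ 2 + 36 * Λ ^ 2 * R ^ 2 * (u ^ 2 * w ^ 2)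
      + ux ^ 2 + 288 * Λ ^ 2 * R ^ 2 * ((w + (v - 1) ^ 2) * u ^ 4) := by
    set b := 2 * ((θ - 1) / y) - (v - 1) with hb
    have e : θ - v = w + b := by rw [hb]; linarith
    have hb2 : b ^ 2 ≤ 8 * (w + (v - 1) ^ 2) := by
      have : b ^ 2 ≤ 2 * (4 * ((θ - 1) / y) ^ 2 + (v - 1) ^ 2) := by
        rw [hb]; nlinarith [sq_nonneg (2 * ((θ - 1) / y) + (v - 1))]
      nlinarith [sq_nonneg (v - 1)]
    have h1 : ux * (12 * Λ * R * w) ≤ 1 * ux ^ 2 + (12 * Λ * R * w) ^ 2 / (4 * 1) :=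
      young (by norm_num) _ _
    have h2 : ux * (12 * Λ * R * u ^ 2 * b) ≤ 1 * ux ^ 2 + (12 * Λ * R * u ^ 2 * b) ^ 2 / (4 * 1) :=
      young (by norm_num) _ _
    have h3 := mul_le_mul_of_nonneg_left h1 (sq_nonneg u)
    have h4 := mul_le_mul_of_nonneg_left hb2 (by positivity : 0 ≤ 36 * Λ ^ 2 * R ^ 2 * u ^ 4)
    rw [e]
    calc 12 * Λ * R * u ^ 2 * ux * (w + b)
        = u ^ 2 * (ux * (12 * Λ * R * w)) + ux * (12 * Λ * R * u ^ 2 * b) := by ring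
      _ ≤ u ^ 2 * (1 * ux ^ 2 + (12 * Λ * R * w) ^ 2 / (4 * 1))
          + (1 * ux ^ 2 + (12 * Λ * R * u ^ 2 * b) ^ 2 / (4 * 1)) := add_le_add h3 h2
      _ = u ^ 2 * ux ^ 2 + 36 * Λ ^ 2 * R ^ 2 * (u ^ 2 * w ^ 2) + ux ^ 2
          + 36 * Λ ^ 2 * R ^ 2 * u ^ 4 * b ^ 2 := by ring
      _ ≤ _ := by linarith
  have tbh : μ * p1 * ux ^ 2 - 2 * μ * p * ux ^ 2 ≤ 12 * μ * ux ^ 2 - μ * (y * ux ^ 2) := by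
    have : p1 - 2 * p ≤ 12 - y := by linarith
    have := mul_le_mul_of_nonneg_left this (by positivity : 0 ≤ μ * ux ^ 2)
    linarith
  have tc : -(κ * p1' * θx ^ 2) ≤ -(κ * θx ^ 2) + 32 * κ * (θx ^ 2 / θ ^ 2) := by
    have := mul_le_mul_of_nonneg_left f5 (by positivity : 0 ≤ κ * θx ^ 2)
    have e : κ * θx ^ 2 * (1 - 32 / θ ^ 2) = κ * θx ^ 2 - 32 * κ * (θx ^ 2 / θ ^ 2) := by ring
    linarith
  have tg : 0 ≤ κ / cv * u ^ 2 * p'' * θx ^ 2 := by positivity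
  have tl : 12 * Λ * μ * u ^ 2 * ux ^ 2 = (2 + 7 * μ / cv
      + 2 / κ * ((14 * κ / cv) ^ 2 + (14 * μ) ^ 2)) * (u ^ 2 * ux ^ 2) := by rw [← hΛ]; ring
  have hκθ : 0 ≤ κ * θx ^ 2 := by positivity
  have x1 : 0 ≤ 9 * R ^ 2 / μ * (u ^ 2 * w ^ 2) := by positivity
  have x2 : 0 ≤ 4 * R ^ 2 * K ^ 2 / μ * (u ^ 2 * w ^ 2) := by positivity
  have x3 : 0 ≤ 49 * R ^ 2 / (4 * cv ^ 2) * w ^ 3 := by positivity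
  have x4 : 0 ≤ 2 / κ * (14 * R * K) ^ 2 * w ^ 3 := by positivity
  have x5 : 0 ≤ 36 * Λ ^ 2 * R ^ 2 * w ^ 3 := by positivity
  rw [tl]
  linarith

/-! ### The second energy estimate -/

section
variable {α : Type*} [MeasurableSpace α] {ν : Measure α} {f : α → ℝ}

lemma Bd.psi (h : Bd ν f) (hi : Bd ν fun x => (f x + 1)⁻¹) : Bd ν fun x => psi (f x) := by
  have : Bd ν fun x => (f x - 1) ^ 4 * ((f x + 1)⁻¹) ^ 3 := by
    apply_rules [Bd.mul, Bd.pow, Bd.sub, Bd.add, Bd.const]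
  simpa only [NS.psi, div_eq_mul_inv, inv_pow] using this

lemma Bd.psi' (h : Bd ν f) (hi : Bd ν fun x => (f x + 1)⁻¹) : Bd ν fun x => psi' (f x) := by
  have : Bd ν fun x => (f x - 1) ^ 3 * (f x + 7) * ((f x + 1)⁻¹) ^ 4 := by
    apply_rules [Bd.mul, Bd.pow, Bd.sub, Bd.add, Bd.const]
  simpa only [NS.psi', div_eq_mul_inv, inv_pow] using this

lemma Bd.psi'' (h : Bd ν f) (hi : Bd ν fun x => (f x + 1)⁻¹) : Bd ν fun x => psi'' (f x) := by
  have : Bd ν fun x => 48 * (f x - 1) ^ 2 * ((f x + 1)⁻¹) ^ 5 := by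
    apply_rules [Bd.mul, Bd.pow, Bd.sub, Bd.add, Bd.const]
  simpa only [NS.psi'', div_eq_mul_inv, inv_pow] using this

lemma Bd.psi1' (h : Bd ν f) (hi : Bd ν fun x => (f x + 1)⁻¹) : Bd ν fun x => psi1' (f x) := by
  have : Bd ν fun x => (f x - 1) ^ 2 * ((f x + 1) ^ 2 + 4 * (f x + 1) + 12)
      * ((f x + 1)⁻¹) ^ 4 := by
    apply_rules [Bd.mul, Bd.pow, Bd.sub, Bd.add, Bd.const]
  simpa only [NS.psi1', div_eq_mul_inv, inv_pow] using this

lemma Bd.psi1 (h : Bd ν f) (hi : Bd ν fun x => (f x + 1)⁻¹) : Bd ν fun x => psi1 (f x) := by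
  have : Bd ν fun x => (f x - 1) ^ 3 * (f x + 3) * ((f x + 1)⁻¹) ^ 3 := by
    apply_rules [Bd.mul, Bd.pow, Bd.sub, Bd.add, Bd.const]
  simpa only [NS.psi1, div_eq_mul_inv, inv_pow] using this

lemma psi1_eq (θ : ℝ) :
    NS.psi1 θ = (θ - 1) * ((θ - 1) ^ 2 * (θ + 3) * ((θ + 1)⁻¹) ^ 3) := by
  rw [NS.psi1, inv_pow, div_eq_mul_inv]; ring

lemma psi_eq (θ : ℝ) : NS.psi θ = (θ - 1) * ((θ - 1) ^ 3 * ((θ + 1)⁻¹) ^ 3) := by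
  rw [NS.psi, inv_pow, div_eq_mul_inv]; ring

end

/-- The production rate of `cᵥ Ψ(θ) + u² ψ(θ) + Λ u⁴`, multiplied by `v`. -/
noncomputable def prod2 (μ κ R cv Λ v u θ ux θx : ℝ) : ℝ :=
  -R * psi1 θ * θ * ux + μ * psi1 θ * ux ^ 2 - κ * psi1' θ * θx ^ 2
      - R / cv * u ^ 2 * psi' θ * θ * ux + μ / cv * u ^ 2 * psi' θ * ux ^ 2
      - 2 * κ / cv * u * psi' θ * ux * θx - κ / cv * u ^ 2 * psi'' θ * θx ^ 2
      - 2 * μ * psi θ * ux ^ 2 + 2 * R * psi θ * ux * (θ - v)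
      - 2 * μ * u * psi' θ * θx * ux + 2 * R * u * psi' θ * θx * (θ - v)
      - 12 * Λ * μ * u ^ 2 * ux ^ 2 + 12 * Λ * R * u ^ 2 * ux * (θ - v)

namespace Sol
variable {μ κ R cv K N m : ℝ} {F : Flow}

lemma int_second (S : Sol μ κ R cv K F) (Λ t : ℝ) :
    Integrable fun x => cv * Psi (F.θ x t) + F.u x t ^ 2 * psi (F.θ x t) + Λ * F.u x t ^ 4 := by
  have bu := S.bu t
  have bθ := S.bθ t
  have by' := S.byi t
  have bp := bθ.psi by'
  have h1 := ib (f := fun x => cv / 2 * ((F.θ x t - 1) ^ 2 * ((F.θ x t + 1)⁻¹) ^ 2))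
    (by apply_rules [Bd.mul, Bd.pow, Bd.sub, Bd.add, Bd.const]) (S.sθ t) (S.sθ t)
  have h2 := ib (f := fun x => psi (F.θ x t) + Λ * F.u x t ^ 2)
    (by apply_rules [Bd.mul, Bd.pow, Bd.sub, Bd.add, Bd.const]) (S.su t) (S.su t)
  refine (h1.add h2).congr (ae_of_all _ fun x => ?_)
  simp only [Pi.add_apply, Psi]
  ring

lemma int_prod2 (S : Sol μ κ R cv K F) (Λ T : ℝ) :
    Integrable (fun z : ℝ × ℝ => prod2 μ κ R cv Λ (F.v z.1 z.2) (F.u z.1 z.2) (F.θ z.1 z.2)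
      (F.ux z.1 z.2) (F.θx z.1 z.2) / F.v z.1 z.2) (PT T) := by
  have bu := S.Bu T
  have bθ := S.Bθ T
  have by' := S.Byi T
  have bv := S.Bv T
  have bvi := S.Bvi T
  have bp := bθ.psi by'
  have bp' := bθ.psi' by'
  have bp'' := bθ.psi'' by'
  have b1 := bθ.psi1 by'
  have b1' := bθ.psi1' by'
  have c1 : Bd (PT T) fun z : ℝ × ℝ =>
      (F.θ z.1 z.2 - 1) ^ 2 * (F.θ z.1 z.2 + 3) * ((F.θ z.1 z.2 + 1)⁻¹) ^ 3 := by
    apply_rules [Bd.mul, Bd.pow, Bd.sub, Bd.add, Bd.const]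
  have c2 : Bd (PT T) fun z : ℝ × ℝ =>
      (F.θ z.1 z.2 - 1) ^ 3 * ((F.θ z.1 z.2 + 1)⁻¹) ^ 3 := by
    apply_rules [Bd.mul, Bd.pow, Bd.sub, Bd.add, Bd.const]
  have h1 := ib (f := fun z : ℝ × ℝ => (F.v z.1 z.2)⁻¹ * (-R * F.θ z.1 z.2 *
      ((F.θ z.1 z.2 - 1) ^ 2 * (F.θ z.1 z.2 + 3) * ((F.θ z.1 z.2 + 1)⁻¹) ^ 3)
      + 2 * R * (F.θ z.1 z.2 - F.v z.1 z.2) *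
        ((F.θ z.1 z.2 - 1) ^ 3 * ((F.θ z.1 z.2 + 1)⁻¹) ^ 3)))
    (bvi.mul ((((Bd.const _).mul bθ).mul c1).add (((Bd.const _).mul (bθ.sub bv)).mul c2)))
    (S.pθ T) (S.pux T)
  have h2 := ib (f := fun z : ℝ × ℝ => (F.v z.1 z.2)⁻¹ * (μ * psi1 (F.θ z.1 z.2)
      + μ / cv * F.u z.1 z.2 ^ 2 * psi' (F.θ z.1 z.2) - 2 * μ * psi (F.θ z.1 z.2)
      - 12 * Λ * μ * F.u z.1 z.2 ^ 2))
    (by apply_rules [Bd.mul, Bd.pow, Bd.sub, Bd.add, Bd.const]) (S.pux T) (S.pux T)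
  have h3 := ib (f := fun z : ℝ × ℝ => (F.v z.1 z.2)⁻¹ * (-κ * psi1' (F.θ z.1 z.2)
      - κ / cv * F.u z.1 z.2 ^ 2 * psi'' (F.θ z.1 z.2)))
    (by apply_rules [Bd.mul, Bd.pow, Bd.sub, Bd.add, Bd.const]) (S.pθx T) (S.pθx T)
  have h4 := ib (f := fun z : ℝ × ℝ => (F.v z.1 z.2)⁻¹ * (-R / cv * F.u z.1 z.2
      * psi' (F.θ z.1 z.2) * F.θ z.1 z.2
      + 12 * Λ * R * F.u z.1 z.2 * (F.θ z.1 z.2 - F.v z.1 z.2)))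
    (by apply_rules [Bd.mul, Bd.pow, Bd.sub, Bd.add, Bd.const]) (S.pu T) (S.pux T)
  have h5 := ib (f := fun z : ℝ × ℝ => (F.v z.1 z.2)⁻¹ * ((-2 * κ / cv - 2 * μ) * F.u z.1 z.2
      * psi' (F.θ z.1 z.2)))
    (by apply_rules [Bd.mul, Bd.pow, Bd.sub, Bd.add, Bd.const]) (S.pux T) (S.pθx T)
  have h6 := ib (f := fun z : ℝ × ℝ => (F.v z.1 z.2)⁻¹ * (2 * R
      * psi' (F.θ z.1 z.2) * (F.θ z.1 z.2 - F.v z.1 z.2)))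
    (by apply_rules [Bd.mul, Bd.pow, Bd.sub, Bd.add, Bd.const]) (S.pu T) (S.pθx T)
  refine (((((h1.add h2).add h3).add h4).add h5).add h6).congr (ae_of_all _ fun z => ?_)
  simp only [Pi.add_apply, prod2]
  rw [psi1_eq, psi_eq]
  generalize (F.θ z.1 z.2 + 1)⁻¹ = y
  ring

set_option maxHeartbeats 1000000 in
/-- The balance of `cᵥ Ψ(θ) + u² ψ(θ) + Λ u⁴`, with production `prod2 / v`. -/
lemma second_identity (S : Sol μ κ R cv K F) (Λ : ℝ) {T : ℝ} (hT : 0 ≤ T) :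
    (∫ x, (cv * Psi (F.θ x T) + F.u x T ^ 2 * psi (F.θ x T) + Λ * F.u x T ^ 4))
      - ∫ x, (cv * Psi (F.θ x 0) + F.u x 0 ^ 2 * psi (F.θ x 0) + Λ * F.u x 0 ^ 4)
    = ∫ z, prod2 μ κ R cv Λ (F.v z.1 z.2) (F.u z.1 z.2) (F.θ z.1 z.2)
      (F.ux z.1 z.2) (F.θx z.1 z.2) / F.v z.1 z.2 ∂(PT T) := by
  refine energy_flux
    (f := fun x t => cv * Psi (F.θ x t) + F.u x t ^ 2 * psi (F.θ x t) + Λ * F.u x t ^ 4)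
    (g := fun x t => cv * (psi1 (F.θ x t) * F.θt x t) + (2 * F.u x t * F.ut x t * psi (F.θ x t)
      + F.u x t ^ 2 * (psi' (F.θ x t) * F.θt x t)) + Λ * (4 * F.u x t ^ 3 * F.ut x t))
    (r := fun x t => prod2 μ κ R cv Λ (F.v x t) (F.u x t) (F.θ x t) (F.ux x t) (F.θx x t)
      / F.v x t)
    (fl := fun x t => (psi1 (F.θ x t) + F.u x t ^ 2 * psi' (F.θ x t) / cv)
        * (κ * F.θx x t / F.v x t)
      + (2 * F.u x t * psi (F.θ x t) + 4 * Λ * F.u x t ^ 3)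
        * (μ * F.ux x t / F.v x t - R * (F.θ x t / F.v x t - 1)))
    hT ?_ ?_ (S.int_second Λ 0) (S.int_second Λ T) ?_ (S.int_prod2 Λ T) ?_ ?_
  · intro x
    have h1 := S.cu_t x
    have h2 : Continuous fun t => Psi (F.θ x t) := continuous_iff_continuousAt.2 fun t =>
      (hasDerivAt_Psi (S.θ_pos x t)).continuousAt.comp (f := F.θ x) (S.cθ_t x).continuousAt
    have h3 : Continuous fun t => psi (F.θ x t) := continuous_iff_continuousAt.2 fun t =>
      (hasDerivAt_psi (S.θ_pos x t)).continuousAt.comp (f := F.θ x) (S.cθ_t x).continuousAt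
    fun_prop
  · intro x t ht
    have h1 := ((hasDerivAt_Psi (S.θ_pos x t)).comp t (S.dθ_t x t ht)).const_mul cv
    have h2 := ((S.du_t x t ht).fun_pow 2).fun_mul
      ((hasDerivAt_psi (S.θ_pos x t)).comp t (S.dθ_t x t ht))
    have h3 := ((S.du_t x t ht).fun_pow 4).const_mul Λ
    refine ((h1.add h2).add h3).congr_deriv ?_
    simp only [Function.comp]
    push_cast; ring
  · have bu := S.Bu T
    have bθ := S.Bθ T
    have by' := S.Byi T
    have bp := bθ.psi by'
    have bp' := bθ.psi' by'
    have h1 := ib (f := fun z : ℝ × ℝ => cv *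
      ((F.θ z.1 z.2 - 1) ^ 2 * (F.θ z.1 z.2 + 3) * ((F.θ z.1 z.2 + 1)⁻¹) ^ 3))
      (by apply_rules [Bd.mul, Bd.pow, Bd.sub, Bd.add, Bd.const]) (S.pθ T) (S.pθt T)
    have h2 := ib (f := fun z : ℝ × ℝ => 2 * psi (F.θ z.1 z.2) + 4 * Λ * F.u z.1 z.2 ^ 2)
      (by apply_rules [Bd.mul, Bd.pow, Bd.sub, Bd.add, Bd.const]) (S.pu T) (S.put T)
    have h3 := ib (f := fun z : ℝ × ℝ => F.u z.1 z.2 * psi' (F.θ z.1 z.2))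
      (by apply_rules [Bd.mul, Bd.pow, Bd.sub, Bd.add, Bd.const]) (S.pu T) (S.pθt T)
    refine ((h1.add h2).add h3).congr (ae_of_all _ fun z => ?_)
    simp only [Pi.add_apply, Function.uncurry]
    rw [psi1_eq]
    ring
  · intro t
    have bu := S.bu t
    have bθ := S.bθ t
    have by' := S.byi t
    have bvi := S.bvi t
    have bp := bθ.psi by'
    have bp' := bθ.psi' by'
    have h1 := ib (f := fun x => κ * (F.v x t)⁻¹ *
      ((F.θ x t - 1) ^ 2 * (F.θ x t + 3) * ((F.θ x t + 1)⁻¹) ^ 3))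
      (by apply_rules [Bd.mul, Bd.pow, Bd.sub, Bd.add, Bd.const]) (S.sθ t) (S.sθx t)
    have h2 := ib (f := fun x => κ * (F.v x t)⁻¹ * (F.u x t * psi' (F.θ x t) * cv⁻¹))
      (by apply_rules [Bd.mul, Bd.pow, Bd.sub, Bd.add, Bd.const]) (S.su t) (S.sθx t)
    have bc : Bd volume fun x => (2 * psi (F.θ x t) + 4 * Λ * F.u x t ^ 2) * (F.v x t)⁻¹ := by
      apply_rules [Bd.mul, Bd.pow, Bd.sub, Bd.add, Bd.const]
    have h3 := ib ((Bd.const μ).mul bc) (S.su t) (S.sux t)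
    have h4 := ib ((Bd.const (-R)).mul bc) (S.su t) (S.sθ t)
    have h5 := ib ((Bd.const R).mul bc) (S.su t) (S.sv t)
    refine ((((h1.add h2).add h3).add h4).add h5).congr (ae_of_all _ fun x => ?_)
    have hv : R * (F.θ x t / F.v x t - 1) = R * (F.θ x t - F.v x t) * (F.v x t)⁻¹ := by
      have := S.v_ne x t
      field_simp
    simp only [Pi.add_apply]
    rw [hv, psi1_eq]
    ring
  · intro x t
    have h1 := (((hasDerivAt_psi1 (S.θ_pos x t)).comp x (S.dθ x t)).fun_add
      ((((S.du x t).fun_pow 2).fun_mul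
        ((hasDerivAt_psi' (S.θ_pos x t)).comp x (S.dθ x t))).div_const cv)).fun_mul (S.dq x t)
    have h2 := ((((S.du x t).const_mul 2).fun_mul
      ((hasDerivAt_psi (S.θ_pos x t)).comp x (S.dθ x t))).fun_add
        (((S.du x t).fun_pow 3).const_mul (4 * Λ))).fun_mul (S.dσ x t)
    refine (h1.add h2).congr_deriv ?_
    have hv := S.v_ne x t
    have hc := S.hcv.ne'
    simp only [Function.comp, prod2]
    push_cast
    field_simp
    ring

end Sol

/-- The convex function `(θ-1)² / (θ+1)` of the temperature, comparable to the entropy. -/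
noncomputable def Flow.w (F : Flow) (x t : ℝ) : ℝ := (F.θ x t - 1) ^ 2 / (F.θ x t + 1)

/-- The weighted temperature gradient `θₓ / √(θ+1)`. -/
noncomputable def Flow.p (F : Flow) (x t : ℝ) : ℝ := F.θx x t / √(F.θ x t + 1)

namespace Sol
variable {μ κ R cv K N m : ℝ} {F : Flow}

lemma w_nonneg (S : Sol μ κ R cv K F) (x t : ℝ) : 0 ≤ F.w x t := by
  have := S.θ_pos x t
  unfold Flow.w; positivity

lemma p_sq (S : Sol μ κ R cv K F) (x t : ℝ) : F.p x t ^ 2 = F.θx x t ^ 2 / (F.θ x t + 1) := by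
  have := S.θ_pos x t
  rw [Flow.p, div_pow, Real.sq_sqrt (by linarith)]

lemma p_sq_le (S : Sol μ κ R cv K F) (x t : ℝ) : F.p x t ^ 2 ≤ F.θx x t ^ 2 := by
  have := S.θ_pos x t
  rw [S.p_sq]
  exact div_le_self (sq_nonneg _) (by linarith)

lemma int_w (S : Sol μ κ R cv K F) (t : ℝ) : Integrable fun x => F.w x t := by
  refine (ib (S.byi t) (S.sθ t) (S.sθ t)).congr (ae_of_all _ fun x => ?_)
  simp only [Flow.w, div_eq_mul_inv]; ring

lemma Bw (S : Sol μ κ R cv K F) (T : ℝ) : Bd (PT T) fun z : ℝ × ℝ => F.w z.1 z.2 := by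
  have := (((S.Bθ T).sub (Bd.const 1)).pow 2).mul (S.Byi T)
  simpa only [Flow.w, div_eq_mul_inv] using this

lemma bw (S : Sol μ κ R cv K F) (t : ℝ) : Bd volume fun x => F.w x t := by
  have := (((S.bθ t).sub (Bd.const 1)).pow 2).mul (S.byi t)
  simpa only [Flow.w, div_eq_mul_inv] using this

lemma int_w_sq (S : Sol μ κ R cv K F) (t : ℝ) : Integrable fun x => F.w x t ^ 2 := by
  refine (ib ((S.bw t).mul (S.byi t)) (S.sθ t) (S.sθ t)).congr (ae_of_all _ fun x => ?_)
  simp only [Flow.w, div_eq_mul_inv]; ring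

lemma abs_inv_sqrt_le (S : Sol μ κ R cv K F) (x t : ℝ) : |(√(F.θ x t + 1))⁻¹| ≤ 1 := by
  have := S.θ_pos x t
  rw [abs_of_nonneg (by positivity)]
  exact inv_le_one_of_one_le₀ (Real.one_le_sqrt.2 (by linarith))

lemma bsq (S : Sol μ κ R cv K F) (t : ℝ) : Bd volume fun x => (√(F.θ x t + 1))⁻¹ :=
  .of_bound ((mslice S.mθ t).aemeasurable.add_const 1).sqrt.inv.aestronglyMeasurable
    (ae_of_all _ fun x => S.abs_inv_sqrt_le x t)

lemma sp (S : Sol μ κ R cv K F) (t : ℝ) : MemLp (fun x => F.p x t) 2 volume := by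
  simpa only [Flow.p, div_eq_mul_inv, mul_comm] using (S.bsq t).l2 (S.sθx t)

lemma pp (S : Sol μ κ R cv K F) (T : ℝ) : MemLp (fun z : ℝ × ℝ => F.p z.1 z.2) 2 (PT T) := by
  have : Bd (PT T) fun z : ℝ × ℝ => (√(F.θ z.1 z.2 + 1))⁻¹ :=
    .of_bound ((S.mθ.add_const 1).sqrt.inv).aestronglyMeasurable
      (ae_of_all _ fun z => S.abs_inv_sqrt_le z.1 z.2)
  simpa only [Flow.p, div_eq_mul_inv, mul_comm] using this.l2 (S.pθx T)

/-- Sup-norm control of `w` by the entropy and the weighted temperature gradient. -/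
lemma w_sq_le (S : Sol μ κ R cv K F) (x t : ℝ) :
    F.w x t ^ 2 ≤ 3 ^ 2 * ((∫ x, F.w x t) * ∫ x, F.p x t ^ 2) := by
  have hd : ∀ x, HasDerivAt (fun x => F.w x t)
      ((F.θ x t - 1) * (F.θ x t + 3) / (F.θ x t + 1) ^ 2 * F.θx x t) x := fun x => by
    have hy : F.θ x t + 1 ≠ 0 := by linarith [S.θ_pos x t]
    refine ((((S.dθ x t).sub_const 1).fun_pow 2).fun_div ((S.dθ x t).add_const 1) hy).congr_deriv ?_
    push_cast; field_simp; ring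
  have ha : MemLp (fun x => (√(F.θ x t + 1))⁻¹ * (F.θ x t - 1)) 2 volume := (S.bsq t).l2 (S.sθ t)
  have hi := ib (f := fun x => (F.θ x t + 3) * ((F.θ x t + 1)⁻¹) ^ 2)
    (((S.bθ t).add (Bd.const 3)).mul ((S.byi t).pow 2)) (S.sθ t) (S.sθx t)
  have hi' : Integrable fun x => (F.θ x t - 1) * (F.θ x t + 3) / (F.θ x t + 1) ^ 2 * F.θx x t := by
    refine hi.congr (ae_of_all _ fun x => ?_)
    simp only [div_eq_mul_inv, inv_pow]; ring
  have h := sq_le_of_deriv (c := 3) hd hi'.1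
    (tendsto_zero_of_hasDerivAt_of_integrableOn_Iic (a := 0) (fun x _ => hd x)
      hi'.integrableOn (S.int_w t).integrableOn) (fun x => ?_) ha (S.sp t) x
  · have e : ∀ x, ((√(F.θ x t + 1))⁻¹ * (F.θ x t - 1)) ^ 2 = F.w x t := fun x => by
      have := S.θ_pos x t
      rw [mul_pow, inv_pow, Real.sq_sqrt (by linarith), Flow.w]; ring
    simpa only [e] using h
  · have h0 := S.θ_pos x t
    have hs := Real.mul_self_sqrt (by linarith : 0 ≤ F.θ x t + 1)
    have e : (√(F.θ x t + 1))⁻¹ * (F.θ x t - 1) * F.p x t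
        = (F.θ x t - 1) * F.θx x t / (F.θ x t + 1) := by
      rw [Flow.p]; nth_rw 3 [← hs]; field_simp
    have e2 : (F.θ x t - 1) * (F.θ x t + 3) / (F.θ x t + 1) ^ 2 * F.θx x t
        = ((F.θ x t + 3) / (F.θ x t + 1)) * ((F.θ x t - 1) * F.θx x t / (F.θ x t + 1)) := by
      field_simp
    rw [e, e2, abs_mul, abs_of_pos (by positivity : 0 < (F.θ x t + 3) / (F.θ x t + 1))]
    refine mul_le_mul_of_nonneg_right ?_ (abs_nonneg _)
    rw [div_le_iff₀ (by linarith)]; linarith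

end Sol

/-- Interpolation between the entropy dissipation `uₓ² / θ` and the weighted one `(θ+1) uₓ²`. -/
lemma sq_split {δ θ a : ℝ} (hδ : 0 < δ) (hθ : 0 < θ) :
    a ^ 2 ≤ δ * ((θ + 1) * a ^ 2) + δ⁻¹ * (a ^ 2 / θ) := by
  have h := young (e := δ * θ) (by positivity) 1 1
  have e : δ * θ + 1 / (δ * θ) ≥ 1 := by
    have : 1 / (4 * (δ * θ)) ≤ 1 / (δ * θ) := by
      apply one_div_le_one_div_of_le (by positivity); nlinarith [mul_pos hδ hθ]
    linarith
  have h2 : a ^ 2 * 1 ≤ a ^ 2 * (δ * θ + 1 / (δ * θ)) := mul_le_mul_of_nonneg_left e (sq_nonneg a)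
  have h3 : a ^ 2 * (δ * θ + 1 / (δ * θ)) = δ * (θ * a ^ 2) + δ⁻¹ * (a ^ 2 / θ) := by field_simp
  nlinarith [mul_nonneg hδ.le (sq_nonneg a)]

/-- Interpolation between the entropy dissipation `θₓ² / θ²` and the unweighted one `θₓ²`. -/
lemma grad_split {δ θ a : ℝ} (hδ : 0 < δ) (hθ : 0 < θ) :
    a ^ 2 / (θ + 1) ≤ δ * a ^ 2 + (4 * δ)⁻¹ * (a ^ 2 / θ ^ 2) := by
  have h := young hδ 1 (θ + 1)⁻¹
  have h1 : ((θ + 1)⁻¹) ^ 2 ≤ (θ⁻¹) ^ 2 := by gcongr; linarith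
  have h2 : ((θ + 1)⁻¹) ^ 2 / (4 * δ) ≤ (θ⁻¹) ^ 2 / (4 * δ) := by gcongr
  have h3 : (θ + 1)⁻¹ ≤ δ + (θ⁻¹) ^ 2 / (4 * δ) := by linarith
  have h4 := mul_le_mul_of_nonneg_left h3 (sq_nonneg a)
  calc a ^ 2 / (θ + 1) = a ^ 2 * (θ + 1)⁻¹ := by ring
    _ ≤ _ := h4
    _ = _ := by field_simp

set_option maxHeartbeats 1000000 in
/-- The second energy bound: `(θ-1)² / (θ+1)` is bounded in `L²`, and the entropy dissipation
improves to `(θ+1) uₓ²` and `θₓ²`. -/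
theorem second_bound {μ κ R cv K N m : ℝ} (P : Par μ κ R cv K N m) :
    ∃ C, 0 ≤ C ∧ ∀ F, Sol μ κ R cv K F → Init N m F → ∀ T, 0 ≤ T →
      ∫ x, F.w x T ^ 2 ≤ C ∧
      ∫ z, (F.θ z.1 z.2 + 1) * F.ux z.1 z.2 ^ 2 ∂(PT T) ≤ C ∧
      ∫ z, F.θx z.1 z.2 ^ 2 ∂(PT T) ≤ C := by
  obtain ⟨C1, hC1, H⟩ := entropy_bound P
  obtain ⟨hμ, hκ, hR, hcv, hK, hN, hm⟩ := P
  have hK0 : 0 < K := by linarith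
  obtain ⟨Λ, hΛ⟩ : ∃ Λ : ℝ, 12 * Λ * μ = 2 + 7 * μ / cv
      + 2 / κ * ((14 * κ / cv) ^ 2 + (14 * μ) ^ 2) :=
    ⟨(2 + 7 * μ / cv + 2 / κ * ((14 * κ / cv) ^ 2 + (14 * μ) ^ 2)) / (12 * μ), by field_simp⟩
  have hΛ0 : 0 < Λ := by
    have : 0 < 12 * Λ * μ := by rw [hΛ]; positivity
    by_contra hn
    nlinarith
  obtain ⟨A1, hA1⟩ : ∃ A : ℝ, A = (9 * R ^ 2 / μ + 4 * R ^ 2 * K ^ 2 / μ + 49 * R ^ 2 / (4 * cv ^ 2)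
          + 2 / κ * (14 * R * K) ^ 2 + 36 * Λ ^ 2 * R ^ 2) := ⟨_, rfl⟩
  obtain ⟨A2, hA2⟩ : ∃ A : ℝ, A = 288 * Λ ^ 2 * R ^ 2 := ⟨_, rfl⟩
  have hA1' : 0 ≤ A1 := by rw [hA1]; positivity
  have hA2' : 0 ≤ A2 := by rw [hA2]; positivity
  obtain ⟨cZ, hcZ⟩ : ∃ c, c = K * (12 * μ + 1) + K * A2 * (2 * C1 * (4 * C1)) := ⟨_, rfl⟩
  obtain ⟨cY, hcY⟩ : ∃ c, c = K * A1 * (2 * C1 * (9 * C1)) := ⟨_, rfl⟩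
  have hcZ' : 0 ≤ cZ := by rw [hcZ]; positivity
  have hcY' : 0 ≤ cY := by rw [hcY]; positivity
  obtain ⟨d1, hd1⟩ : ∃ d, d = μ / (4 * K * (cZ + 1)) := ⟨_, rfl⟩
  obtain ⟨d2, hd2⟩ : ∃ d, d = κ / (4 * K * (cY + 1)) := ⟨_, rfl⟩
  have hd1' : 0 < d1 := by rw [hd1]; positivity
  have hd2' : 0 < d2 := by rw [hd2]; positivity
  have hs1 : cZ * d1 ≤ μ / (4 * K) := by
    rw [hd1, ← mul_div_assoc, div_le_div_iff₀ (by positivity) (by positivity)]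
    nlinarith [mul_pos hμ hK0]
  have hs2 : cY * d2 ≤ κ / (4 * K) := by
    rw [hd2, ← mul_div_assoc, div_le_div_iff₀ (by positivity) (by positivity)]
    nlinarith [mul_pos hκ hK0]
  obtain ⟨E, hE⟩ : ∃ E, E = (cv / 2 * N + 2 * N * N + Λ * (2 * N) * N) + K * (32 * κ) * C1
    + cZ * (d1⁻¹ * C1) + cY * ((4 * d2)⁻¹ * C1) := ⟨_, rfl⟩
  have hE' : 0 ≤ E := by rw [hE]; positivity
  refine ⟨2 / cv * E + 4 * K / μ * E + 4 * K / κ * E, by positivity, ?_⟩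
  have p1 : 0 ≤ 2 / cv * E := by positivity
  have p2 : 0 ≤ 4 * K / μ * E := by positivity
  have p3 : 0 ≤ 4 * K / κ * E := by positivity
  intro F S I T hT
  obtain ⟨-, -, -, -, hD1, hD2⟩ := H F S I T hT
  have id := S.second_identity Λ hT
  -- integrability on the strip
  have iX : Integrable (fun z : ℝ × ℝ => (F.θ z.1 z.2 + 1) * F.ux z.1 z.2 ^ 2) (PT T) :=
    (ib ((S.Bθ T).add (Bd.const 1)) (S.pux T) (S.pux T)).congr
      (ae_of_all _ fun z => by simp only [sq])
  have iY := (S.pθx T).integrable_sq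
  have iZ := (S.pux T).integrable_sq
  have iP := (S.pp T).integrable_sq
  have iD1 : Integrable (fun z : ℝ × ℝ => F.ux z.1 z.2 ^ 2 / F.θ z.1 z.2) (PT T) :=
    (ib (S.Bθi T) (S.pux T) (S.pux T)).congr (ae_of_all _ fun z => by ring)
  have iD2 : Integrable (fun z : ℝ × ℝ => F.θx z.1 z.2 ^ 2 / F.θ z.1 z.2 ^ 2) (PT T) :=
    (ib ((S.Bθi T).pow 2) (S.pθx T) (S.pθx T)).congr (ae_of_all _ fun z => by
      simp only [div_eq_mul_inv, inv_pow]; ring)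
  have iW1 : Integrable (fun z : ℝ × ℝ => (F.u z.1 z.2 ^ 2 + F.w z.1 z.2) * F.w z.1 z.2 ^ 2)
      (PT T) :=
    (ib ((((S.Bu T).pow 2).add (S.Bw T)).mul ((S.Bw T).mul (S.Byi T))) (S.pθ T) (S.pθ T)).congr
      (ae_of_all _ fun z => by simp only [Flow.w, div_eq_mul_inv]; ring)
  have iW2 : Integrable (fun z : ℝ × ℝ => (F.w z.1 z.2 + (F.v z.1 z.2 - 1) ^ 2) * F.u z.1 z.2 ^ 4)
      (PT T) :=
    (ib (((S.Bw T).add (((S.Bv T).sub (Bd.const 1)).pow 2)).mul ((S.Bu T).pow 2))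
      (S.pu T) (S.pu T)).congr (ae_of_all _ fun z => by ring)
  -- the terms carrying sup-norms
  have hW1 := weighted_le (q := fun x t => F.u x t ^ 2 + F.w x t) (f := fun x t => F.w x t ^ 2)
    (b := F.p) (T := T) (Q := 2 * C1) (c := 9 * C1)
    (fun x t => add_nonneg (sq_nonneg _) (S.w_nonneg x t)) (by positivity)
    (fun t ht _ => by
      obtain ⟨h1, -, h2, -⟩ := H F S I t ht.le
      rw [integral_add (S.su t).integrable_sq (S.int_w t)]
      exact (add_le_add h1 h2).trans_eq (by ring))
    (fun t => (S.su t).integrable_sq.add (S.int_w t))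
    (fun x t ht _ => by
      obtain ⟨-, -, h2, -⟩ := H F S I t ht.le
      refine (S.w_sq_le x t).trans ?_
      have h0 : 0 ≤ ∫ x, F.p x t ^ 2 := integral_nonneg fun _ => sq_nonneg _
      have h3 : ∫ x, F.w x t ≤ C1 := h2
      have := mul_le_mul_of_nonneg_right h3 h0
      linarith) iW1 iP
  have hW2 := weighted_le (q := fun x t => F.w x t + (F.v x t - 1) ^ 2)
    (f := fun x t => F.u x t ^ 4)
    (b := F.ux) (T := T) (Q := 2 * C1) (c := 4 * C1)
    (fun x t => add_nonneg (S.w_nonneg x t) (sq_nonneg _)) (by positivity)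
    (fun t ht _ => by
      obtain ⟨-, h1, h2, -⟩ := H F S I t ht.le
      rw [integral_add (S.int_w t) (S.sv t).integrable_sq]
      exact (add_le_add h2 h1).trans_eq (by ring))
    (fun t => (S.int_w t).add (S.sv t).integrable_sq)
    (fun x t ht _ => by
      obtain ⟨h1, -⟩ := H F S I t ht.le
      have h := agmon (fun x => S.du x t) (S.su t) (S.sux t) x
      have h0 : 0 ≤ ∫ x, F.ux x t ^ 2 := integral_nonneg fun _ => sq_nonneg _
      have := mul_le_mul_of_nonneg_right h1 h0
      have e : F.u x t ^ 4 = (F.u x t ^ 2) ^ 2 := by ring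
      rw [e]; linarith) iW2 iZ
  -- splitting the unweighted dissipation
  have hZ : ∫ z, F.ux z.1 z.2 ^ 2 ∂(PT T) ≤ d1 * (∫ z, (F.θ z.1 z.2 + 1) * F.ux z.1 z.2 ^ 2 ∂(PT T))
      + d1⁻¹ * ∫ z, F.ux z.1 z.2 ^ 2 / F.θ z.1 z.2 ∂(PT T) := by
    rw [← integral_const_mul, ← integral_const_mul,
      ← integral_add (iX.const_mul _) (iD1.const_mul _)]
    exact integral_mono iZ ((iX.const_mul _).add (iD1.const_mul _)) fun z =>
      sq_split hd1' (S.θ_pos z.1 z.2)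
  have hP : ∫ z, F.p z.1 z.2 ^ 2 ∂(PT T) ≤ d2 * (∫ z, F.θx z.1 z.2 ^ 2 ∂(PT T))
      + (4 * d2)⁻¹ * ∫ z, F.θx z.1 z.2 ^ 2 / F.θ z.1 z.2 ^ 2 ∂(PT T) := by
    rw [← integral_const_mul, ← integral_const_mul,
      ← integral_add (iY.const_mul _) (iD2.const_mul _)]
    refine integral_mono iP ((iY.const_mul _).add (iD2.const_mul _)) fun z => ?_
    simp only [S.p_sq]
    exact grad_split hd2' (S.θ_pos z.1 z.2)
  -- the production term
  have hr : ∫ z, prod2 μ κ R cv Λ (F.v z.1 z.2) (F.u z.1 z.2) (F.θ z.1 z.2)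
      (F.ux z.1 z.2) (F.θx z.1 z.2) / F.v z.1 z.2 ∂(PT T)
      ≤ K * (12 * μ + 1) * (∫ z, F.ux z.1 z.2 ^ 2 ∂(PT T))
        + K * (32 * κ) * (∫ z, F.θx z.1 z.2 ^ 2 / F.θ z.1 z.2 ^ 2 ∂(PT T))
        + K * A1 * (∫ z, (F.u z.1 z.2 ^ 2 + F.w z.1 z.2) * F.w z.1 z.2 ^ 2 ∂(PT T))
        + K * A2 * (∫ z, (F.w z.1 z.2 + (F.v z.1 z.2 - 1) ^ 2) * F.u z.1 z.2 ^ 4 ∂(PT T))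
        + (-(μ / (2 * K))) * (∫ z, (F.θ z.1 z.2 + 1) * F.ux z.1 z.2 ^ 2 ∂(PT T))
        + (-(κ / (2 * K))) * (∫ z, F.θx z.1 z.2 ^ 2 ∂(PT T)) := by
    have j1 := (iZ.const_mul (K * (12 * μ + 1))).fun_add (iD2.const_mul (K * (32 * κ)))
    have j2 := j1.fun_add (iW1.const_mul (K * A1))
    have j3 := j2.fun_add (iW2.const_mul (K * A2))
    have j4 := j3.fun_add (iX.const_mul (-(μ / (2 * K))))
    have j5 := j4.fun_add (iY.const_mul (-(κ / (2 * K))))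
    simp only [← integral_const_mul]
    rw [← integral_add (iZ.const_mul _) (iD2.const_mul _), ← integral_add j1 (iW1.const_mul _),
      ← integral_add j2 (iW2.const_mul _), ← integral_add j3 (iX.const_mul _),
      ← integral_add j4 (iY.const_mul _)]
    refine integral_mono (S.int_prod2 Λ T) j5 fun z => ?_
    have hv := S.v_pos z.1 z.2
    have hvK := S.v_le z.1 z.2
    have hvi : (F.v z.1 z.2)⁻¹ ≤ K := inv_le_of_inv_le₀ hK0 (S.v_ge z.1 z.2)
    have hvi' : K⁻¹ ≤ (F.v z.1 z.2)⁻¹ := inv_anti₀ hv hvK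
    have hθ := S.θ_pos z.1 z.2
    have h := pointwise_second (u := F.u z.1 z.2) (ux := F.ux z.1 z.2) (θx := F.θx z.1 z.2)
      hμ hκ hR hcv hK hv hvK hθ hΛ
    rw [← hA1, ← hA2] at h
    change prod2 μ κ R cv Λ (F.v z.1 z.2) (F.u z.1 z.2) (F.θ z.1 z.2)
      (F.ux z.1 z.2) (F.θx z.1 z.2) ≤ _ at h
    change _ ≤ (12 * μ + 1) * F.ux z.1 z.2 ^ 2 + 32 * κ * (F.θx z.1 z.2 ^ 2 / F.θ z.1 z.2 ^ 2)
      + A1 * ((F.u z.1 z.2 ^ 2 + F.w z.1 z.2) * F.w z.1 z.2 ^ 2)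
      + A2 * ((F.w z.1 z.2 + (F.v z.1 z.2 - 1) ^ 2) * F.u z.1 z.2 ^ 4)
      - (μ / 2 * ((F.θ z.1 z.2 + 1) * F.ux z.1 z.2 ^ 2) + κ / 2 * F.θx z.1 z.2 ^ 2) at h
    have hw := S.w_nonneg z.1 z.2
    simp only
    have q1 : 0 ≤ (12 * μ + 1) * F.ux z.1 z.2 ^ 2 + 32 * κ * (F.θx z.1 z.2 ^ 2 / F.θ z.1 z.2 ^ 2)
      + A1 * ((F.u z.1 z.2 ^ 2 + F.w z.1 z.2) * F.w z.1 z.2 ^ 2)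
      + A2 * ((F.w z.1 z.2 + (F.v z.1 z.2 - 1) ^ 2) * F.u z.1 z.2 ^ 4) := by positivity
    have q2 : 0 ≤ μ / 2 * ((F.θ z.1 z.2 + 1) * F.ux z.1 z.2 ^ 2) + κ / 2 * F.θx z.1 z.2 ^ 2 := by
      positivity
    have h2 := mul_le_mul_of_nonneg_right h (inv_nonneg.2 hv.le)
    have h3 := mul_le_mul_of_nonneg_left hvi q1
    have h4 := mul_le_mul_of_nonneg_left hvi' q2
    rw [sub_mul, ← div_eq_mul_inv] at h2
    have e : μ / (2 * K) = μ / 2 * K⁻¹ := by field_simp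
    have e' : κ / (2 * K) = κ / 2 * K⁻¹ := by field_simp
    rw [e, e']
    linarith
  -- the initial value
  have hstart : ∫ x, (cv * Psi (F.θ x 0) + F.u x 0 ^ 2 * psi (F.θ x 0) + Λ * F.u x 0 ^ 4)
      ≤ cv / 2 * N + 2 * N * N + Λ * (2 * N) * N := by
    have i1 := (S.sθ 0).integrable_sq
    have i2 := (S.su 0).integrable_sq
    have hu : ∀ x, F.u x 0 ^ 2 ≤ 2 * N := fun x =>
      (agmon' (fun x => S.du x 0) (S.su 0) (S.sux 0) x).trans (by linarith [I.u_le, I.ux_le])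
    calc _ ≤ ∫ x, ((cv / 2 + 2 * N) * (F.θ x 0 - 1) ^ 2 + Λ * (2 * N) * F.u x 0 ^ 2) := by
          refine integral_mono (S.int_second Λ 0)
            ((i1.const_mul _).add (i2.const_mul _)) fun x => ?_
          have hθ := S.θ_pos x 0
          have ha : |F.θ x 0 - 1| / (F.θ x 0 + 1) ≤ 1 :=
            (div_le_one (by linarith)).2 (abs_sub_one_le hθ)
          have ha2 : ((F.θ x 0 - 1) / (F.θ x 0 + 1)) ^ 2 ≤ 1 := by
            rw [← sq_abs, abs_div, abs_of_pos (by linarith : 0 < F.θ x 0 + 1)]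
            exact pow_le_one₀ (by positivity) ha
          have b1 : Psi (F.θ x 0) ≤ (F.θ x 0 - 1) ^ 2 / 2 := by
            have e : Psi (F.θ x 0) = (F.θ x 0 - 1) ^ 2 / 2 *
              ((F.θ x 0 - 1) / (F.θ x 0 + 1)) ^ 2 := by unfold Psi; field_simp
            rw [e]; exact mul_le_of_le_one_right (by positivity) ha2
          have b2 : psi (F.θ x 0) ≤ (F.θ x 0 - 1) ^ 2 := by
            have e : psi (F.θ x 0) = (F.θ x 0 - 1) ^ 2 *
              (((F.θ x 0 - 1) / (F.θ x 0 + 1)) ^ 2 / (F.θ x 0 + 1)) := by unfold psi; field_simp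
            rw [e]; refine mul_le_of_le_one_right (by positivity) ?_
            rw [div_le_one (by linarith)]; linarith
          have c1 := mul_le_mul_of_nonneg_left b1 hcv.le
          have c2 : F.u x 0 ^ 2 * psi (F.θ x 0) ≤ 2 * N * (F.θ x 0 - 1) ^ 2 :=
            mul_le_mul (hu x) b2 (psi_nonneg hθ) (by positivity)
          have c3 := mul_le_mul_of_nonneg_left (hu x) (by positivity : 0 ≤ Λ * F.u x 0 ^ 2)
          simp only
          linarith
      _ = (cv / 2 + 2 * N) * (∫ x, (F.θ x 0 - 1) ^ 2) + Λ * (2 * N) * ∫ x, F.u x 0 ^ 2 := by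
          rw [integral_add (i1.const_mul _) (i2.const_mul _), integral_const_mul,
            integral_const_mul]
      _ ≤ (cv / 2 + 2 * N) * N + Λ * (2 * N) * N :=
          add_le_add (mul_le_mul_of_nonneg_left I.θ_le (by positivity))
            (mul_le_mul_of_nonneg_left I.u_le (by positivity))
      _ = _ := by ring
  have hfT : cv / 2 * (∫ x, F.w x T ^ 2)
      ≤ ∫ x, (cv * Psi (F.θ x T) + F.u x T ^ 2 * psi (F.θ x T) + Λ * F.u x T ^ 4) := by
    rw [← integral_const_mul]
    refine integral_mono ((S.int_w_sq T).const_mul _) (S.int_second Λ T) fun x => ?_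
    have h1 := mul_nonneg (sq_nonneg (F.u x T)) (psi_nonneg (S.θ_pos x T))
    have h2 : 0 ≤ Λ * F.u x T ^ 4 := by positivity
    simp only [Psi, Flow.w]
    linarith
  have n1 : 0 ≤ ∫ x, F.w x T ^ 2 := integral_nonneg fun _ => sq_nonneg _
  have n2 : 0 ≤ ∫ z, (F.θ z.1 z.2 + 1) * F.ux z.1 z.2 ^ 2 ∂(PT T) :=
    integral_nonneg fun z => mul_nonneg (by linarith [S.θ_pos z.1 z.2]) (sq_nonneg _)
  have n3 : 0 ≤ ∫ z, F.θx z.1 z.2 ^ 2 ∂(PT T) := integral_nonneg fun _ => sq_nonneg _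
  generalize (∫ z, (F.θ z.1 z.2 + 1) * F.ux z.1 z.2 ^ 2 ∂(PT T)) = X at *
  generalize (∫ z, F.θx z.1 z.2 ^ 2 ∂(PT T)) = Y at *
  generalize (∫ z, F.ux z.1 z.2 ^ 2 ∂(PT T)) = Z at *
  generalize (∫ x, F.w x T ^ 2) = W at *
  generalize (∫ z, F.p z.1 z.2 ^ 2 ∂(PT T)) = Pp at *
  generalize (∫ z, F.ux z.1 z.2 ^ 2 / F.θ z.1 z.2 ∂(PT T)) = D1 at *
  generalize (∫ z, F.θx z.1 z.2 ^ 2 / F.θ z.1 z.2 ^ 2 ∂(PT T)) = D2 at *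
  have y1 := mul_le_mul_of_nonneg_left hW1 (by positivity : 0 ≤ K * A1)
  have y2 := mul_le_mul_of_nonneg_left hW2 (by positivity : 0 ≤ K * A2)
  have y3 := mul_le_mul_of_nonneg_left hZ hcZ'
  have y4 := mul_le_mul_of_nonneg_left hP hcY'
  have y5 := mul_le_mul_of_nonneg_left hD1 (by positivity : 0 ≤ cZ * d1⁻¹)
  have y6 := mul_le_mul_of_nonneg_left hD2 (by positivity : 0 ≤ cY * (4 * d2)⁻¹)
  have y7 := mul_le_mul_of_nonneg_left hD2 (by positivity : 0 ≤ K * (32 * κ))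
  have y8 := mul_le_mul_of_nonneg_right hs1 n2
  have y9 := mul_le_mul_of_nonneg_right hs2 n3
  have ez : cZ * Z = K * (12 * μ + 1) * Z + K * A2 * (2 * C1 * (4 * C1) * Z) := by rw [hcZ]; ring
  have ey : cY * Pp = K * A1 * (2 * C1 * (9 * C1) * Pp) := by rw [hcY]; ring
  have z1 : μ / (2 * K) = 2 * (μ / (4 * K)) := by field_simp; norm_num
  have z2 : κ / (2 * K) = 2 * (κ / (4 * K)) := by field_simp; norm_num
  rw [z1, z2] at hr
  have tot : cv / 2 * W + μ / (4 * K) * X + κ / (4 * K) * Y ≤ E := by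
    rw [hE]; linarith
  have m1 : 0 ≤ cv / 2 * W := by positivity
  have m2 : 0 ≤ μ / (4 * K) * X := by positivity
  have m3 : 0 ≤ κ / (4 * K) * Y := by positivity
  refine ⟨?_, ?_, ?_⟩
  · have := mul_le_mul_of_nonneg_left (by linarith : cv / 2 * W ≤ E) (by positivity : 0 ≤ 2 / cv)
    have e : 2 / cv * (cv / 2 * W) = W := by field_simp
    linarith
  · have := mul_le_mul_of_nonneg_left (by linarith : μ / (4 * K) * X ≤ E)
      (by positivity : 0 ≤ 4 * K / μ)
    have e : 4 * K / μ * (μ / (4 * K) * X) = X := by field_simp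
    linarith
  · have := mul_le_mul_of_nonneg_left (by linarith : κ / (4 * K) * Y ≤ E)
      (by positivity : 0 ≤ 4 * K / κ)
    have e : 4 * K / κ * (κ / (4 * K) * Y) = Y := by field_simp
    linarith

/-! ### The volume gradient -/

/-- The pressure gradient `(R θ / v)ₓ`. -/
noncomputable def Flow.px (F : Flow) (R x t : ℝ) : ℝ :=
  R * (F.θx x t / F.v x t - F.θ x t * F.vx x t / F.v x t ^ 2)

/-- The effective velocity `μ vₓ / v - u`. -/
noncomputable def Flow.Z (F : Flow) (μ x t : ℝ) : ℝ := μ * F.vx x t / F.v x t - F.u x t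

namespace Sol
variable {μ κ R cv K N m : ℝ} {F : Flow}

lemma ppx (S : Sol μ κ R cv K F) (T : ℝ) :
    MemLp (fun z : ℝ × ℝ => F.px R z.1 z.2) 2 (PT T) := by
  have h1 := ((Bd.const R).mul (S.Bvi T)).l2 (S.pθx T)
  have h2 := (((Bd.const R).mul (S.Bθ T)).mul ((S.Bvi T).pow 2)).l2 (S.pvx T)
  refine (h1.sub h2).ae_eq (ae_of_all _ fun z => ?_)
  simp only [Pi.sub_apply, Flow.px, div_eq_mul_inv, inv_pow]
  ring

lemma pZ (S : Sol μ κ R cv K F) (T : ℝ) :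
    MemLp (fun z : ℝ × ℝ => F.Z μ z.1 z.2) 2 (PT T) := by
  have h1 := ((Bd.const μ).mul (S.Bvi T)).l2 (S.pvx T)
  refine (h1.sub (S.pu T)).ae_eq (ae_of_all _ fun z => ?_)
  simp only [Pi.sub_apply, Flow.Z, div_eq_mul_inv]
  ring

lemma slx (S : Sol μ κ R cv K F) (t : ℝ) :
    MemLp (fun x => μ * F.vx x t / F.v x t) 2 volume := by
  have h1 := ((Bd.const μ).mul (S.bvi t)).l2 (S.svx t)
  refine h1.ae_eq (ae_of_all _ fun z => ?_)
  simp only [div_eq_mul_inv]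
  ring

lemma sZ (S : Sol μ κ R cv K F) (t : ℝ) : MemLp (fun x => F.Z μ x t) 2 volume :=
  (S.slx t).sub (S.su t)

lemma cux (S : Sol μ κ R cv K F) (t : ℝ) : Continuous fun x => F.ux x t :=
  continuous_iff_continuousAt.2 fun x => (S.dux x t).continuousAt
lemma cθx (S : Sol μ κ R cv K F) (t : ℝ) : Continuous fun x => F.θx x t :=
  continuous_iff_continuousAt.2 fun x => (S.dθx x t).continuousAt
lemma cv_x (S : Sol μ κ R cv K F) (t : ℝ) : Continuous fun x => F.v x t :=
  continuous_iff_continuousAt.2 fun x => (S.dv x t).continuousAt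
lemma cu_x (S : Sol μ κ R cv K F) (t : ℝ) : Continuous fun x => F.u x t :=
  continuous_iff_continuousAt.2 fun x => (S.du x t).continuousAt
lemma cθ_x (S : Sol μ κ R cv K F) (t : ℝ) : Continuous fun x => F.θ x t :=
  continuous_iff_continuousAt.2 fun x => (S.dθ x t).continuousAt

/-- The balance of the effective velocity: its time derivative is the pressure gradient. -/
lemma effective_identity (S : Sol μ κ R cv K F) {T : ℝ} (hT : 0 ≤ T) :
    (∫ x, F.Z μ x T ^ 2) - ∫ x, F.Z μ x 0 ^ 2
      = ∫ z, 2 * (F.Z μ z.1 z.2 * F.px R z.1 z.2) ∂(PT T) := by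
  have hkx : ∀ x t, μ * (F.uxx x t / F.v x t - F.ux x t * F.vx x t / F.v x t ^ 2)
      = F.ut x t + F.px R x t := fun x t => by rw [S.eq_u, Flow.px]; ring
  have h := effective_balance (l := fun x t => μ * Real.log (F.v x t))
    (lx := fun x t => μ * F.vx x t / F.v x t) (k := fun x t => μ * F.ux x t / F.v x t)
    (kx := fun x t => μ * (F.uxx x t / F.v x t - F.ux x t * F.vx x t / F.v x t ^ 2))
    (u := F.u) (ut := F.ut) hT ?_ S.cu_t ?_ S.du_t ?_ ?_ ?_ ?_ ?_ ?_ ?_ ?_ ?_ ?_ (S.pu T) (S.put T)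
    S.slx S.su
  · simp only [hkx, add_sub_cancel_left] at h
    exact h
  · exact fun x => ((S.cv_t x).log (S.v_ne x)).const_mul μ
  · intro x t ht
    refine (((S.dv_t x t ht).log (S.v_ne x t)).const_mul μ).congr_deriv ?_
    ring
  · intro x t
    refine (((S.dv x t).log (S.v_ne x t)).const_mul μ).congr_deriv ?_
    ring
  · intro x t
    refine (((S.dux x t).const_mul μ).div (S.dv x t) (S.v_ne x t)).congr_deriv ?_
    have := S.v_ne x t
    field_simp
  · exact fun t => ((S.cvx t).const_mul μ).div (S.cv_x t) (fun x => S.v_ne x t)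
  · exact fun t => (((S.cuxx t).div (S.cv_x t) (fun x => S.v_ne x t)).sub
      (((S.cux t).mul (S.cvx t)).div ((S.cv_x t).pow 2) (fun x => pow_ne_zero 2 (S.v_ne x t)))).const_mul μ
  · exact (Real.measurable_log.comp S.mv).const_mul μ
  · exact (S.mvx.const_mul μ).div S.mv
  · exact (S.mux.const_mul μ).div S.mv
  · exact ((S.muxx.div S.mv).sub ((S.mux.mul S.mvx).div (S.mv.pow_const 2))).const_mul μ
  · have h1 := ((Bd.const μ).mul (S.Bvi T)).l2 (S.pvx T)
    refine h1.ae_eq (ae_of_all _ fun z => ?_)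
    simp only [div_eq_mul_inv, Function.uncurry]
    ring
  · refine ((S.put T).add (S.ppx T)).ae_eq (ae_of_all _ fun z => ?_)
    simp only [Function.uncurry, Pi.add_apply]
    rw [hkx]

lemma int_ent (S : Sol μ κ R cv K F) (t : ℝ) :
    Integrable fun x => R * ent (F.v x t) + cv * ent (F.θ x t) :=
  ((S.int_ent_v t).const_mul R).add ((S.int_ent_θ t).const_mul cv)

lemma int_r3 (S : Sol μ κ R cv K F) (T : ℝ) :
    Integrable (fun z : ℝ × ℝ => (1 - (F.θ z.1 z.2)⁻¹) * (μ * F.ux z.1 z.2 ^ 2 / F.v z.1 z.2)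
      - κ * F.θx z.1 z.2 ^ 2 / (F.v z.1 z.2 * F.θ z.1 z.2 ^ 2)) (PT T) := by
  have h1 := ib (((Bd.const μ).mul (S.Bvi T)).mul ((Bd.const 1).sub (S.Bθi T))) (S.pux T) (S.pux T)
  have h2 := ib (((Bd.const κ).mul (S.Bvi T)).mul ((S.Bθi T).pow 2)) (S.pθx T) (S.pθx T)
  refine (h1.sub h2).congr (ae_of_all _ fun z => ?_)
  simp only [Pi.sub_apply]
  ring

/-- The entropy balance of volume and temperature without the kinetic energy.  Its term `u pₓ` cancels
the velocity part of the production in `effective_identity`. -/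
lemma third_identity (S : Sol μ κ R cv K F) {T : ℝ} (hT : 0 ≤ T) :
    (∫ x, (R * ent (F.v x T) + cv * ent (F.θ x T)))
      - ∫ x, (R * ent (F.v x 0) + cv * ent (F.θ x 0))
    = ∫ z, (F.u z.1 z.2 * F.px R z.1 z.2
      + ((1 - (F.θ z.1 z.2)⁻¹) * (μ * F.ux z.1 z.2 ^ 2 / F.v z.1 z.2)
      - κ * F.θx z.1 z.2 ^ 2 / (F.v z.1 z.2 * F.θ z.1 z.2 ^ 2))) ∂(PT T) := by
  refine energy_flux (f := fun x t => R * ent (F.v x t) + cv * ent (F.θ x t))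
    (g := fun x t => R * (1 - (F.v x t)⁻¹) * F.ux x t
      + cv * (1 - (F.θ x t)⁻¹) * F.θt x t)
    (r := fun x t => F.u x t * F.px R x t
      + ((1 - (F.θ x t)⁻¹) * (μ * F.ux x t ^ 2 / F.v x t)
      - κ * F.θx x t ^ 2 / (F.v x t * F.θ x t ^ 2)))
    (fl := fun x t => (1 - (F.θ x t)⁻¹) * (κ * F.θx x t / F.v x t)
      - F.u x t * (R * (F.θ x t / F.v x t - 1)))
    hT ?_ ?_ (S.int_ent 0) (S.int_ent T) ?_ ?_ ?_ ?_
  · intro x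
    have h2 := cont_ent (S.cv_t x) (S.v_pos x)
    have h3 := cont_ent (S.cθ_t x) (S.θ_pos x)
    fun_prop
  · intro x t ht
    have h2 := ((hasDerivAt_ent (S.v_pos x t)).comp t (S.dv_t x t ht)).const_mul R
    have h3 := ((hasDerivAt_ent (S.θ_pos x t)).comp t (S.dθ_t x t ht)).const_mul cv
    refine (h2.add h3).congr_deriv ?_
    ring
  · have h2 := ib ((S.Bvi T).mul (Bd.const R)) (S.pv T) (S.pux T)
    have h3 := ib ((S.Bθi T).mul (Bd.const cv)) (S.pθ T) (S.pθt T)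
    refine (h2.add h3).congr (ae_of_all _ fun z => ?_)
    have := S.v_ne z.1 z.2
    have := S.θ_ne z.1 z.2
    simp only [Pi.add_apply, Function.uncurry]
    field_simp
  · exact ((S.pu T).integrable_mul (S.ppx T)).add (S.int_r3 T)
  · intro t
    have h1 := ib (((S.bvi t).mul (S.bθi t)).mul (Bd.const κ)) (S.sθ t) (S.sθx t)
    have h3 := ib ((S.bvi t).mul (Bd.const (-R))) (S.su t) (S.sθ t)
    have h4 := ib ((S.bvi t).mul (Bd.const R)) (S.su t) (S.sv t)
    refine ((h1.add h3).add h4).congr (ae_of_all _ fun x => ?_)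
    have := S.v_ne x t
    have := S.θ_ne x t
    simp only [Pi.add_apply]
    field_simp
    ring
  · intro x t
    have h1 := (((S.dθ x t).fun_inv (S.θ_ne x t)).const_sub 1).fun_mul (S.dq x t)
    have h2 := (S.du x t).fun_mul
      ((((S.dθ x t).fun_div (S.dv x t) (S.v_ne x t)).sub_const 1).const_mul R)
    refine (h1.sub h2).congr_deriv ?_
    have := S.v_ne x t
    have := S.θ_ne x t
    simp only [Flow.px]
    field_simp
    ring

end Sol

section
variable {μ κ R K v θ vx θx ux : ℝ}

/-- The production of the effective velocity balance: the dissipation `θ vₓ²` with a good sign,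
up to quantities already under control. -/
lemma pointwise_third (hμ : 0 < μ) (hκ : 0 < κ) (hR : 0 < R) (hK : 1 ≤ K) (hvi : v⁻¹ ≤ K)
    (hvi' : K⁻¹ ≤ v⁻¹) (hv : 0 < v) (hθ : 0 < θ) :
    μ * vx / v * (R * (θx / v - θ * vx / v ^ 2))
      + ((1 - θ⁻¹) * (μ * ux ^ 2 / v) - κ * θx ^ 2 / (v * θ ^ 2))
    ≤ μ * R * K / 2 * θx ^ 2 + μ * R * K / 2 * (θx ^ 2 / θ ^ 2) + μ * K * ((θ + 1) * ux ^ 2)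
      + (-(μ * R / 2 * K⁻¹ ^ 3)) * (θ * vx ^ 2) := by
  have hK0 : 0 < K := by linarith
  have hvi0 : 0 < v⁻¹ := inv_pos.2 hv
  have a1 : θx * vx * v⁻¹ ^ 2 ≤ θ * vx ^ 2 * v⁻¹ ^ 3 / 2 + θx ^ 2 * θ⁻¹ * v⁻¹ / 2 := by
    have : 0 ≤ θ * v⁻¹ * (vx * v⁻¹ - θx * θ⁻¹) ^ 2 := by positivity
    have e : θ * v⁻¹ * (vx * v⁻¹ - θx * θ⁻¹) ^ 2
      = θ * vx ^ 2 * v⁻¹ ^ 3 - 2 * (θx * vx * v⁻¹ ^ 2) + θx ^ 2 * θ⁻¹ * v⁻¹ := by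
      field_simp; ring
    linarith
  have a2 : θx ^ 2 * θ⁻¹ * v⁻¹ ≤ (θx ^ 2 + θx ^ 2 / θ ^ 2) * K := by
    refine mul_le_mul ?_ hvi hvi0.le (by positivity)
    have : 0 ≤ θx ^ 2 * (1 - θ⁻¹) ^ 2 := by positivity
    have e : θx ^ 2 * (1 - θ⁻¹) ^ 2 = θx ^ 2 - 2 * (θx ^ 2 * θ⁻¹) + θx ^ 2 / θ ^ 2 := by
      field_simp; ring
    have : 0 ≤ θx ^ 2 * θ⁻¹ := by positivity
    linarith
  have a3 : K⁻¹ ^ 3 * (θ * vx ^ 2) ≤ θ * vx ^ 2 * v⁻¹ ^ 3 := by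
    rw [mul_comm]
    exact mul_le_mul_of_nonneg_left (pow_le_pow_left₀ (by positivity) hvi' 3) (by positivity)
  have a4 : (1 - θ⁻¹) * (μ * ux ^ 2 / v) ≤ μ * K * ((θ + 1) * ux ^ 2) := by
    have e : (1 - θ⁻¹) * (μ * ux ^ 2 / v) = μ * ux ^ 2 * (v⁻¹ * (1 - θ⁻¹)) := by
      field_simp
    have e' : μ * K * ((θ + 1) * ux ^ 2) = μ * ux ^ 2 * (K * (θ + 1)) := by ring
    rw [e, e']
    refine mul_le_mul_of_nonneg_left ?_ (by positivity)
    have h0 : 0 < θ⁻¹ := inv_pos.2 hθ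
    calc v⁻¹ * (1 - θ⁻¹) ≤ v⁻¹ * (θ + 1) := mul_le_mul_of_nonneg_left (by linarith) hvi0.le
      _ ≤ K * (θ + 1) := mul_le_mul_of_nonneg_right hvi (by linarith)
  have a5 : 0 ≤ κ * θx ^ 2 / (v * θ ^ 2) := by positivity
  have e : μ * vx / v * (R * (θx / v - θ * vx / v ^ 2))
      = μ * R * (θx * vx * v⁻¹ ^ 2 - θ * vx ^ 2 * v⁻¹ ^ 3) := by
    field_simp
  have b : θx * vx * v⁻¹ ^ 2 - θ * vx ^ 2 * v⁻¹ ^ 3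
      ≤ (θx ^ 2 + θx ^ 2 / θ ^ 2) * K / 2 - K⁻¹ ^ 3 * (θ * vx ^ 2) / 2 := by linarith
  have c := mul_le_mul_of_nonneg_left b (by positivity : 0 ≤ μ * R)
  rw [e]
  linarith

/-- Where the temperature is small, `(θ-1)² / (θ+1)` is bounded below; hence `∬ vₓ²` is controlled by
`∬ θ vₓ²` and `∬ w² vₓ²`. -/
lemma one_le_split (hθ : 0 < θ) : 1 ≤ 2 * θ + 36 * ((θ - 1) ^ 2 / (θ + 1)) ^ 2 := by
  by_cases h : 1 / 2 ≤ θ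
  · have : 0 ≤ 36 * ((θ - 1) ^ 2 / (θ + 1)) ^ 2 := by positivity
    linarith
  · push Not at h
    have : 1 / 6 ≤ (θ - 1) ^ 2 / (θ + 1) := by
      rw [le_div_iff₀ (by linarith)]; nlinarith
    nlinarith
end

variable {μ κ R cv K N m : ℝ}

lemma Sol.bound_w_sq {F : Flow} (S : Sol μ κ R cv K F) {x t C : ℝ} (h : ∫ x, F.w x t ≤ C) :
    F.w x t ^ 2 ≤ 9 * C * ∫ x, F.p x t ^ 2 := by
  refine (S.w_sq_le x t).trans ?_
  have h0 : 0 ≤ ∫ x, F.p x t ^ 2 := integral_nonneg fun _ => sq_nonneg _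
  have := mul_le_mul_of_nonneg_right h h0
  linarith

set_option maxHeartbeats 1600000 in
/-- The volume gradient is bounded in `L²`, uniformly in time and on the strip: half the balance of the
squared effective velocity is added to `third_identity`, and the sum is damped by `θ vₓ²`. -/
lemma third_bound (P : Par μ κ R cv K N m) : ∃ C, 0 ≤ C ∧ ∀ F, Sol μ κ R cv K F → Init N m F →
    ∀ T, 0 ≤ T → ∫ x, F.vx x T ^ 2 ≤ C ∧ ∫ z, F.vx z.1 z.2 ^ 2 ∂(PT T) ≤ C := by
  obtain ⟨C1, hC1, H1⟩ := entropy_bound P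
  obtain ⟨C2, hC2, H2⟩ := second_bound P
  obtain ⟨hμ, hκ, hR, hcv, hK, hN, hm⟩ := P
  have hK0 : 0 < K := by linarith
  set E : ℝ := (μ ^ 2 * K ^ 2 + 1) * N + (R * K * N + cv * m⁻¹ * N) + μ * R * K / 2 * C2
    + μ * R * K / 2 * C1 + μ * K * C2 with hE
  have hE0 : 0 ≤ E := by positivity
  set d : ℝ := μ * R / 2 * K⁻¹ ^ 3 with hd
  have hd0 : 0 < d := by positivity
  set Cv : ℝ := 2 * K ^ 2 / μ ^ 2 * (2 * E + C1) with hCv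
  have hCv0 : 0 ≤ Cv := by positivity
  set Cx : ℝ := 2 * (d⁻¹ * E) + 36 * (Cv * (9 * C1) * C2) with hCx
  have hCx0 : 0 ≤ Cx := by positivity
  have main : ∀ F, Sol μ κ R cv K F → Init N m F → ∀ T, 0 ≤ T →
      1 / 2 * (∫ x, F.Z μ x T ^ 2) + d * (∫ z, F.θ z.1 z.2 * F.vx z.1 z.2 ^ 2 ∂(PT T)) ≤ E := by
    intro F S I T hT
    obtain ⟨-, -, -, -, hD1, hD2⟩ := H1 F S I T hT
    obtain ⟨-, hX, hY⟩ := H2 F S I T hT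
    have h1 := S.effective_identity hT
    have h2 := S.third_identity hT
    have iX : Integrable (fun z : ℝ × ℝ => (F.θ z.1 z.2 + 1) * F.ux z.1 z.2 ^ 2) (PT T) :=
      (ib ((S.Bθ T).add (Bd.const 1)) (S.pux T) (S.pux T)).congr (ae_of_all _ fun z => by ring)
    have iY := (S.pθx T).integrable_sq
    have iD2 : Integrable (fun z : ℝ × ℝ => F.θx z.1 z.2 ^ 2 / F.θ z.1 z.2 ^ 2) (PT T) :=
      (ib ((S.Bθi T).pow 2) (S.pθx T) (S.pθx T)).congr (ae_of_all _ fun z => by ring)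
    have iV : Integrable (fun z : ℝ × ℝ => F.θ z.1 z.2 * F.vx z.1 z.2 ^ 2) (PT T) :=
      (ib (S.Bθ T) (S.pvx T) (S.pvx T)).congr (ae_of_all _ fun z => by ring)
    have iZp : Integrable (fun z : ℝ × ℝ => F.Z μ z.1 z.2 * F.px R z.1 z.2) (PT T) :=
      (S.pZ T).integrable_mul (S.ppx T)
    have iup : Integrable (fun z : ℝ × ℝ => F.u z.1 z.2 * F.px R z.1 z.2) (PT T) :=
      (S.pu T).integrable_mul (S.ppx T)
    have i3 := iup.add (S.int_r3 T)
    rw [integral_const_mul] at h1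
    have hsum : (∫ z, F.Z μ z.1 z.2 * F.px R z.1 z.2 ∂(PT T))
        + (∫ z, (F.u z.1 z.2 * F.px R z.1 z.2
      + ((1 - (F.θ z.1 z.2)⁻¹) * (μ * F.ux z.1 z.2 ^ 2 / F.v z.1 z.2)
      - κ * F.θx z.1 z.2 ^ 2 / (F.v z.1 z.2 * F.θ z.1 z.2 ^ 2))) ∂(PT T))
      ≤ μ * R * K / 2 * (∫ z, F.θx z.1 z.2 ^ 2 ∂(PT T))
        + μ * R * K / 2 * (∫ z, F.θx z.1 z.2 ^ 2 / F.θ z.1 z.2 ^ 2 ∂(PT T))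
        + μ * K * (∫ z, (F.θ z.1 z.2 + 1) * F.ux z.1 z.2 ^ 2 ∂(PT T))
        + (-d) * (∫ z, F.θ z.1 z.2 * F.vx z.1 z.2 ^ 2 ∂(PT T)) := by
      have j1 := (iY.const_mul (μ * R * K / 2)).fun_add (iD2.const_mul (μ * R * K / 2))
      have j2 := j1.fun_add (iX.const_mul (μ * K))
      have j3 := j2.fun_add (iV.const_mul (-d))
      simp only [← integral_const_mul]
      rw [← integral_add (iY.const_mul _) (iD2.const_mul _), ← integral_add j1 (iX.const_mul _),
        ← integral_add j2 (iV.const_mul _)]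
      refine (integral_add iZp i3).symm.trans_le ?_
      refine integral_mono (iZp.add i3) j3 fun z => ?_
      have h := pointwise_third (vx := F.vx z.1 z.2) (θx := F.θx z.1 z.2) (ux := F.ux z.1 z.2)
        hμ hκ hR hK (inv_le_of_inv_le₀ hK0 (S.v_ge z.1 z.2))
        (inv_anti₀ (S.v_pos z.1 z.2) (S.v_le z.1 z.2)) (S.v_pos z.1 z.2) (S.θ_pos z.1 z.2)
      refine le_trans (le_of_eq ?_) h
      simp only [Flow.Z, Flow.px, Pi.add_apply]
      ring
    have init1 : ∫ x, F.Z μ x 0 ^ 2 ≤ 2 * ((μ ^ 2 * K ^ 2 + 1) * N) := by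
      have i1 := (S.svx 0).integrable_sq
      have i2 := (S.su 0).integrable_sq
      calc _ ≤ ∫ x, (2 * (μ ^ 2 * K ^ 2) * F.vx x 0 ^ 2 + 2 * F.u x 0 ^ 2) := by
            refine integral_mono (S.sZ 0).integrable_sq
              ((i1.const_mul _).add (i2.const_mul _)) fun x => ?_
            have hv := S.v_pos x 0
            have hvi := inv_le_of_inv_le₀ hK0 (S.v_ge x 0)
            have h := mul_le_mul_of_nonneg_left (pow_le_pow_left₀ (inv_pos.2 hv).le hvi 2)
              (by positivity : 0 ≤ μ ^ 2 * F.vx x 0 ^ 2)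
            have e : (μ * F.vx x 0 / F.v x 0) ^ 2 = μ ^ 2 * F.vx x 0 ^ 2 * (F.v x 0)⁻¹ ^ 2 := by
              field_simp
            simp only [Flow.Z]
            nlinarith [sq_nonneg (μ * F.vx x 0 / F.v x 0 + F.u x 0)]
        _ = 2 * (μ ^ 2 * K ^ 2) * (∫ x, F.vx x 0 ^ 2) + 2 * ∫ x, F.u x 0 ^ 2 := by
            rw [integral_add (i1.const_mul _) (i2.const_mul _), integral_const_mul,
              integral_const_mul]
        _ ≤ 2 * (μ ^ 2 * K ^ 2) * N + 2 * N :=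
            add_le_add (mul_le_mul_of_nonneg_left I.vx_le (by positivity))
              (mul_le_mul_of_nonneg_left I.u_le (by positivity))
        _ = _ := by ring
    have init2 : ∫ x, (R * ent (F.v x 0) + cv * ent (F.θ x 0)) ≤ R * K * N + cv * m⁻¹ * N := by
      have i1 := (S.sv 0).integrable_sq
      have i2 := (S.sθ 0).integrable_sq
      calc _ ≤ ∫ x, (R * K * (F.v x 0 - 1) ^ 2 + cv * m⁻¹ * (F.θ x 0 - 1) ^ 2) := by
            refine integral_mono (S.int_ent 0)
              ((i1.const_mul _).add (i2.const_mul _)) fun x => ?_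
            have a1 : ent (F.v x 0) ≤ K * (F.v x 0 - 1) ^ 2 := by
              refine (ent_le (S.v_pos x 0)).trans (mul_le_mul_of_nonneg_right ?_ (sq_nonneg _))
              exact inv_le_of_inv_le₀ hK0 (S.v_ge x 0)
            have a2 : ent (F.θ x 0) ≤ m⁻¹ * (F.θ x 0 - 1) ^ 2 :=
              (ent_le (S.θ_pos x 0)).trans (mul_le_mul_of_nonneg_right
                (inv_anti₀ hm (I.θ_ge x)) (sq_nonneg _))
            have b1 := mul_le_mul_of_nonneg_left a1 hR.le
            have b2 := mul_le_mul_of_nonneg_left a2 hcv.le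
            simp only
            linarith
        _ = R * K * (∫ x, (F.v x 0 - 1) ^ 2) + cv * m⁻¹ * ∫ x, (F.θ x 0 - 1) ^ 2 := by
            rw [integral_add (i1.const_mul _) (i2.const_mul _), integral_const_mul,
              integral_const_mul]
        _ ≤ _ := add_le_add (mul_le_mul_of_nonneg_left I.v_le (by positivity))
              (mul_le_mul_of_nonneg_left I.θ_le (by positivity))
    have hent : 0 ≤ ∫ x, (R * ent (F.v x T) + cv * ent (F.θ x T)) :=
      integral_nonneg fun x => add_nonneg (mul_nonneg hR.le (ent_nonneg (S.v_pos x T)))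
        (mul_nonneg hcv.le (ent_nonneg (S.θ_pos x T)))
    have y1 := mul_le_mul_of_nonneg_left hY (by positivity : 0 ≤ μ * R * K / 2)
    have y2 := mul_le_mul_of_nonneg_left hD2 (by positivity : 0 ≤ μ * R * K / 2)
    have y3 := mul_le_mul_of_nonneg_left hX (by positivity : 0 ≤ μ * K)
    rw [hE]
    linarith
  have nθ : ∀ F, Sol μ κ R cv K F → ∀ T, 0 ≤ ∫ z, F.θ z.1 z.2 * F.vx z.1 z.2 ^ 2 ∂(PT T) :=
    fun F S T => integral_nonneg fun z => mul_nonneg (S.θ_pos z.1 z.2).le (sq_nonneg _)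
  have hv : ∀ F, Sol μ κ R cv K F → Init N m F → ∀ T, 0 ≤ T → ∫ x, F.vx x T ^ 2 ≤ Cv := by
    intro F S I T hT
    have h := main F S I T hT
    have n1 := mul_nonneg hd0.le (nθ F S T)
    obtain ⟨hu, -⟩ := H1 F S I T hT
    have i1 := (S.sZ T).integrable_sq
    have i2 := (S.su T).integrable_sq
    calc ∫ x, F.vx x T ^ 2 ≤ ∫ x, (2 * K ^ 2 / μ ^ 2) * (F.Z μ x T ^ 2 + F.u x T ^ 2) := by
          refine integral_mono (S.svx T).integrable_sq ((i1.add i2).const_mul _) fun x => ?_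
          have hv := S.v_pos x T
          have hvK := S.v_le x T
          have e : F.vx x T = F.v x T / μ * (F.Z μ x T + F.u x T) := by
            rw [Flow.Z]; field_simp; ring
          have h1 : (F.v x T) ^ 2 ≤ K ^ 2 := pow_le_pow_left₀ hv.le hvK 2
          have h2 : (F.Z μ x T + F.u x T) ^ 2 ≤ 2 * (F.Z μ x T ^ 2 + F.u x T ^ 2) := by
            nlinarith [sq_nonneg (F.Z μ x T - F.u x T)]
          simp only
          rw [e, mul_pow, div_pow]
          calc _ ≤ K ^ 2 / μ ^ 2 * (2 * (F.Z μ x T ^ 2 + F.u x T ^ 2)) := by gcongr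
            _ = _ := by ring
      _ = 2 * K ^ 2 / μ ^ 2 * ((∫ x, F.Z μ x T ^ 2) + ∫ x, F.u x T ^ 2) := by
          rw [integral_const_mul, integral_add i1 i2]
      _ ≤ _ := by
          rw [hCv]
          exact mul_le_mul_of_nonneg_left (by linarith) (by positivity)
  refine ⟨Cv + Cx, by positivity, fun F S I T hT => ⟨(hv F S I T hT).trans (by linarith), ?_⟩⟩
  obtain ⟨-, -, hY⟩ := H2 F S I T hT
  have iP := (S.pp T).integrable_sq
  have iW : Integrable (fun z : ℝ × ℝ => F.vx z.1 z.2 ^ 2 * F.w z.1 z.2 ^ 2) (PT T) :=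
    (ib ((S.Bw T).pow 2) (S.pvx T) (S.pvx T)).congr (ae_of_all _ fun z => by ring)
  have iV : Integrable (fun z : ℝ × ℝ => F.θ z.1 z.2 * F.vx z.1 z.2 ^ 2) (PT T) :=
    (ib (S.Bθ T) (S.pvx T) (S.pvx T)).congr (ae_of_all _ fun z => by ring)
  have hW := weighted_le (q := fun x t => F.vx x t ^ 2) (f := fun x t => F.w x t ^ 2)
    (b := F.p) (T := T) (Q := Cv) (c := 9 * C1) (fun x t => sq_nonneg _) (by positivity)
    (fun t ht _ => hv F S I t ht.le) (fun t => (S.svx t).integrable_sq)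
    (fun x t ht _ => S.bound_w_sq (H1 F S I t ht.le).2.2.1) iW iP
  have hp : ∫ z, F.p z.1 z.2 ^ 2 ∂(PT T) ≤ C2 :=
    (integral_mono iP (S.pθx T).integrable_sq fun z => S.p_sq_le _ _).trans hY
  have hm' := main F S I T hT
  have n1 : 0 ≤ ∫ x, F.Z μ x T ^ 2 := integral_nonneg fun _ => sq_nonneg _
  have hX : ∫ z, F.θ z.1 z.2 * F.vx z.1 z.2 ^ 2 ∂(PT T) ≤ d⁻¹ * E := by
    rw [inv_mul_eq_div, le_div_iff₀ hd0]; linarith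
  have key : ∫ z, F.vx z.1 z.2 ^ 2 ∂(PT T) ≤ 2 * (∫ z, F.θ z.1 z.2 * F.vx z.1 z.2 ^ 2 ∂(PT T))
      + 36 * ∫ z, F.vx z.1 z.2 ^ 2 * F.w z.1 z.2 ^ 2 ∂(PT T) := by
    rw [← integral_const_mul, ← integral_const_mul,
      ← integral_add (iV.const_mul _) (iW.const_mul _)]
    refine integral_mono (S.pvx T).integrable_sq
      ((iV.const_mul _).add (iW.const_mul _)) fun z => ?_
    have h := mul_le_mul_of_nonneg_left (one_le_split (S.θ_pos z.1 z.2))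
      (sq_nonneg (F.vx z.1 z.2))
    simp only [Flow.w]
    linarith
  have q := mul_le_mul_of_nonneg_left hp (by positivity : 0 ≤ Cv * (9 * C1))
  rw [hCx]
  linarith

end NS

namespace NS

/-! ### Gradients of velocity and temperature -/

lemma agmon_eps {g g' : ℝ → ℝ} (hg : ∀ x, HasDerivAt g (g' x) x)
    (h2 : MemLp g 2 volume) (h2' : MemLp g' 2 volume) {e : ℝ} (he : 0 < e) (x : ℝ) :
    g x ^ 2 ≤ e⁻¹ * (∫ x, g x ^ 2) + e * ∫ x, g' x ^ 2 := by
  have h := agmon hg h2 h2' x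
  have h3 : 0 ≤ ∫ x, g x ^ 2 := integral_nonneg fun _ => sq_nonneg _
  have h4 : 0 ≤ ∫ x, g' x ^ 2 := integral_nonneg fun _ => sq_nonneg _
  generalize (∫ x, g x ^ 2) = A at *
  generalize (∫ x, g' x ^ 2) = B at *
  refine le_of_sq_le_sq ?_ (by positivity)
  have e1 : (e⁻¹ * A + e * B) ^ 2 = (e⁻¹ * A - e * B) ^ 2 + 4 * (A * B) := by field_simp; ring
  rw [e1]
  nlinarith [sq_nonneg (e⁻¹ * A - e * B)]

/-- A product `g q` with `g` and `gₓ` square-integrable on the strip and `q` bounded in time with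
values in `L²` is square-integrable on the strip, with an interpolated bound. -/
lemma prod_l2 {g gx q : ℝ → ℝ → ℝ} {T Q e : ℝ} (he : 0 < e)
    (hd : ∀ x t, HasDerivAt (fun y => g y t) (gx x t) x)
    (mg : Measurable (Function.uncurry g)) (mgx : Measurable (Function.uncurry gx))
    (mq : Measurable (Function.uncurry q))
    (hg : MemLp (fun z : ℝ × ℝ => g z.1 z.2) 2 (PT T))
    (hgx : MemLp (fun z : ℝ × ℝ => gx z.1 z.2) 2 (PT T))
    (hq : ∀ t, 0 < t → t ≤ T → MemLp (fun x => q x t) 2 volume)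
    (hQ : ∀ t, 0 < t → t ≤ T → ∫ x, q x t ^ 2 ≤ Q) :
    Integrable (fun z : ℝ × ℝ => g z.1 z.2 ^ 2 * q z.1 z.2 ^ 2) (PT T) ∧
      ∫ z, g z.1 z.2 ^ 2 * q z.1 z.2 ^ 2 ∂(PT T)
        ≤ Q * (e⁻¹ * (∫ z, g z.1 z.2 ^ 2 ∂(PT T)) + e * ∫ z, gx z.1 z.2 ^ 2 ∂(PT T)) := by
  have s1 := memLp_slice mg hg
  have s2 := memLp_slice mgx hgx
  have i1 := hg.integrable_sq
  have i2 := hgx.integrable_sq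
  have m : Measurable (fun z : ℝ × ℝ => g z.1 z.2 ^ 2 * q z.1 z.2 ^ 2) :=
    (mg.pow_const 2).mul (mq.pow_const 2)
  have key : ∀ᵐ t ∂(volume.restrict (Ioc 0 T)),
      Integrable (fun x => g x t ^ 2 * q x t ^ 2) ∧ ∫ x, g x t ^ 2 * q x t ^ 2
        ≤ Q * (e⁻¹ * (∫ x, g x t ^ 2) + e * ∫ x, gx x t ^ 2) := by
    filter_upwards [s1, s2, ae_restrict_mem measurableSet_Ioc] with t h1 h2 ht
    have hq2 := (hq t ht.1 ht.2).integrable_sq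
    have hb := fun x => agmon_eps (fun x => hd x t) h1 h2 he x
    have n1 : 0 ≤ ∫ x, g x t ^ 2 := integral_nonneg fun _ => sq_nonneg _
    have n2 : 0 ≤ ∫ x, gx x t ^ 2 := integral_nonneg fun _ => sq_nonneg _
    set A := e⁻¹ * (∫ x, g x t ^ 2) + e * ∫ x, gx x t ^ 2 with hA
    have hA0 : 0 ≤ A := by positivity
    have hi : Integrable (fun x => g x t ^ 2 * q x t ^ 2) := by
      refine (hq2.const_mul A).mono'
        (m.comp (measurable_id.prodMk measurable_const)).aestronglyMeasurable
        (ae_of_all _ fun x => ?_)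
      rw [Real.norm_eq_abs, abs_of_nonneg (by positivity)]
      exact mul_le_mul_of_nonneg_right (hb x) (sq_nonneg _)
    refine ⟨hi, ?_⟩
    calc ∫ x, g x t ^ 2 * q x t ^ 2 ≤ ∫ x, A * q x t ^ 2 :=
          integral_mono hi (hq2.const_mul A) fun x =>
            mul_le_mul_of_nonneg_right (hb x) (sq_nonneg _)
      _ = A * ∫ x, q x t ^ 2 := integral_const_mul _ _
      _ ≤ A * Q := mul_le_mul_of_nonneg_left (hQ t ht.1 ht.2) hA0
      _ = _ := mul_comm _ _
  unfold PT at *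
  have i3 : Integrable (fun t => Q * (e⁻¹ * (∫ x, g x t ^ 2) + e * ∫ x, gx x t ^ 2))
      (volume.restrict (Ioc 0 T)) :=
    ((i1.integral_prod_right.const_mul _).add (i2.integral_prod_right.const_mul _)).const_mul _
  have hI : Integrable (fun z : ℝ × ℝ => g z.1 z.2 ^ 2 * q z.1 z.2 ^ 2)
      (volume.prod (volume.restrict (Ioc 0 T))) := by
    rw [integrable_prod_iff' m.aestronglyMeasurable]
    refine ⟨key.mono fun t h => h.1, i3.mono'
      (m.norm.stronglyMeasurable.integral_prod_left').aestronglyMeasurable ?_⟩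
    filter_upwards [key] with t h
    rw [Real.norm_eq_abs, abs_of_nonneg (integral_nonneg fun _ => norm_nonneg _)]
    refine le_trans (le_of_eq ?_) h.2
    refine integral_congr_ae (ae_of_all _ fun x => ?_)
    simp only [Real.norm_eq_abs]
    exact abs_of_nonneg (by positivity)
  refine ⟨hI, ?_⟩
  rw [integral_prod_symm _ hI, integral_prod_symm _ i1, integral_prod_symm _ i2,
    ← integral_const_mul, ← integral_const_mul, ← integral_add
      (i1.integral_prod_right.const_mul _) (i2.integral_prod_right.const_mul _),
      ← integral_const_mul]
  exact integral_mono_ae hI.integral_prod_right i3 (key.mono fun t h => h.2)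

section
variable {μ κ R K v θ vx θx θxx ux uxx : ℝ}

lemma sq_div_le (hv : 0 < v) (hvi : v⁻¹ ≤ K) (a : ℝ) : (a / v) ^ 2 ≤ K ^ 2 * a ^ 2 := by
  rw [div_eq_mul_inv, mul_pow, mul_comm]
  exact mul_le_mul_of_nonneg_right (pow_le_pow_left₀ (inv_pos.2 hv).le hvi 2) (sq_nonneg _)

lemma sq_div_sq_le (hv : 0 < v) (hvi : v⁻¹ ≤ K) (a : ℝ) :
    (a / v ^ 2) ^ 2 ≤ K ^ 4 * a ^ 2 := by
  rw [div_eq_mul_inv, mul_pow, mul_comm, ← inv_pow, ← pow_mul]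
  exact mul_le_mul_of_nonneg_right (pow_le_pow_left₀ (inv_pos.2 hv).le hvi 4) (sq_nonneg _)

lemma θ_sq_le (hθ : 0 < θ) : θ ^ 2 ≤ 32 + 2 * ((θ - 1) ^ 2 / (θ + 1)) ^ 2 := by
  have h := y_le_w hθ
  generalize (θ - 1) ^ 2 / (θ + 1) = w at *
  nlinarith [sq_nonneg (w - 4)]

/-- The production `-2 uₓₓ u_t` of `∫ uₓ²`, with the indefinite terms absorbed by Young. -/
lemma pointwise_u (hμ : 0 < μ) (hK : 0 < K) (hvi : v⁻¹ ≤ K)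
    (hvi' : K⁻¹ ≤ v⁻¹) (hv : 0 < v) (hθ : 0 < θ) :
    -2 * (uxx * (μ * (uxx / v - ux * vx / v ^ 2) - R * (θx / v - θ * vx / v ^ 2)))
    ≤ (-(μ * K⁻¹)) * uxx ^ 2 + 3 * (μ * K⁻¹)⁻¹ * μ ^ 2 * K ^ 4 * (ux ^ 2 * vx ^ 2)
      + 3 * (μ * K⁻¹)⁻¹ * R ^ 2 * K ^ 2 * θx ^ 2
      + 3 * (μ * K⁻¹)⁻¹ * R ^ 2 * K ^ 4 * 32 * vx ^ 2
      + 3 * (μ * K⁻¹)⁻¹ * R ^ 2 * K ^ 4 * 2 * (vx ^ 2 * ((θ - 1) ^ 2 / (θ + 1)) ^ 2) := by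
  have b1 := sq_div_sq_le hv hvi (ux * vx)
  have b2 := sq_div_le hv hvi θx
  have b3 := sq_div_sq_le hv hvi (θ * vx)
  have b4 := mul_le_mul_of_nonneg_right (θ_sq_le hθ) (sq_nonneg vx)
  have b5 : μ * K⁻¹ * uxx ^ 2 ≤ uxx * (μ * (uxx / v)) := by
    have := mul_le_mul_of_nonneg_left hvi' (by positivity : 0 ≤ μ * uxx ^ 2)
    have e : uxx * (μ * (uxx / v)) = μ * uxx ^ 2 * v⁻¹ := by field_simp
    rw [e]; linarith
  set a := μ * K⁻¹ with ha
  have ha0 : 0 < a := by positivity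
  set p := ux * vx / v ^ 2
  set q := θx / v
  set r := θ * vx / v ^ 2
  have c : (μ * p + R * q - R * r) ^ 2 ≤ 3 * (μ ^ 2 * p ^ 2 + R ^ 2 * q ^ 2 + R ^ 2 * r ^ 2) := by
    nlinarith [sq_nonneg (μ * p - R * q), sq_nonneg (μ * p + R * r), sq_nonneg (R * q + R * r)]
  have y3 := young (e := a) (by positivity) uxx (2 * (μ * p + R * q - R * r))
  have e3 : (2 * (μ * p + R * q - R * r)) ^ 2 / (4 * a)
    = a⁻¹ * (μ * p + R * q - R * r) ^ 2 := by field_simp; ring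
  rw [e3] at y3
  have ai : 0 < a⁻¹ := inv_pos.2 ha0
  have c1 := mul_le_mul_of_nonneg_left b1 (by positivity : 0 ≤ 3 * a⁻¹ * μ ^ 2)
  have c2 := mul_le_mul_of_nonneg_left b2 (by positivity : 0 ≤ 3 * a⁻¹ * R ^ 2)
  have c3 := mul_le_mul_of_nonneg_left b3 (by positivity : 0 ≤ 3 * a⁻¹ * R ^ 2)
  have c4 := mul_le_mul_of_nonneg_left b4 (by positivity : 0 ≤ 3 * a⁻¹ * R ^ 2 * K ^ 4)
  have c5 := mul_le_mul_of_nonneg_left c ai.le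
  generalize (θ - 1) ^ 2 / (θ + 1) = w at *
  linarith

/-- The production `-2 cᵥ θₓₓ θ_t` of `cᵥ ∫ θₓ²`, with the indefinite terms absorbed by Young. -/
lemma pointwise_θ (hκ : 0 < κ) (hK : 0 < K) (hvi : v⁻¹ ≤ K)
    (hvi' : K⁻¹ ≤ v⁻¹) (hv : 0 < v) (hθ : 0 < θ) :
    -2 * (θxx * (κ * (θxx / v - θx * vx / v ^ 2) - R * θ * ux / v + μ * ux ^ 2 / v))
    ≤ (-(κ * K⁻¹)) * θxx ^ 2 + 3 * (κ * K⁻¹)⁻¹ * κ ^ 2 * K ^ 4 * (θx ^ 2 * vx ^ 2)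
      + 3 * (κ * K⁻¹)⁻¹ * R ^ 2 * K ^ 2 * 32 * ux ^ 2
      + 3 * (κ * K⁻¹)⁻¹ * R ^ 2 * K ^ 2 * 2 * (ux ^ 2 * ((θ - 1) ^ 2 / (θ + 1)) ^ 2)
      + 3 * (κ * K⁻¹)⁻¹ * μ ^ 2 * K ^ 2 * (ux ^ 2 * ux ^ 2) := by
  have b1 := sq_div_sq_le hv hvi (θx * vx)
  have b2 := sq_div_le hv hvi (ux ^ 2)
  have b3 := sq_div_le hv hvi (θ * ux)
  have b4 := mul_le_mul_of_nonneg_right (θ_sq_le hθ) (sq_nonneg ux)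
  have b5 : κ * K⁻¹ * θxx ^ 2 ≤ θxx * (κ * (θxx / v)) := by
    have := mul_le_mul_of_nonneg_left hvi' (by positivity : 0 ≤ κ * θxx ^ 2)
    have e : θxx * (κ * (θxx / v)) = κ * θxx ^ 2 * v⁻¹ := by field_simp
    rw [e]; linarith
  have f1 : R * θ * ux / v = R * (θ * ux / v) := by ring
  have f2 : μ * ux ^ 2 / v = μ * (ux ^ 2 / v) := by ring
  rw [f1, f2]
  set a := κ * K⁻¹ with ha
  have ha0 : 0 < a := by positivity
  set p := θx * vx / v ^ 2
  set q := ux ^ 2 / v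
  set r := θ * ux / v
  have c : (κ * p + R * r - μ * q) ^ 2 ≤ 3 * (κ ^ 2 * p ^ 2 + R ^ 2 * r ^ 2 + μ ^ 2 * q ^ 2) := by
    nlinarith [sq_nonneg (κ * p - R * r), sq_nonneg (κ * p + μ * q), sq_nonneg (R * r + μ * q)]
  have y3 := young (e := a) (by positivity) θxx (2 * (κ * p + R * r - μ * q))
  have e3 : (2 * (κ * p + R * r - μ * q)) ^ 2 / (4 * a)
    = a⁻¹ * (κ * p + R * r - μ * q) ^ 2 := by field_simp; ring
  rw [e3] at y3
  have ai : 0 < a⁻¹ := inv_pos.2 ha0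
  have c1 := mul_le_mul_of_nonneg_left b1 (by positivity : 0 ≤ 3 * a⁻¹ * κ ^ 2)
  have c2 := mul_le_mul_of_nonneg_left b2 (by positivity : 0 ≤ 3 * a⁻¹ * μ ^ 2)
  have c3 := mul_le_mul_of_nonneg_left b3 (by positivity : 0 ≤ 3 * a⁻¹ * R ^ 2)
  have c4 := mul_le_mul_of_nonneg_left b4 (by positivity : 0 ≤ 3 * a⁻¹ * R ^ 2 * K ^ 2)
  have c5 := mul_le_mul_of_nonneg_left c ai.le
  generalize (θ - 1) ^ 2 / (θ + 1) = w at *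
  linarith
end

end NS

namespace NS
variable {μ κ R cv K N m : ℝ}

lemma θ_l2_bound (P : Par μ κ R cv K N m) : ∃ C, 0 ≤ C ∧ ∀ F, Sol μ κ R cv K F → Init N m F →
    ∀ T, 0 ≤ T → ∫ x, (F.θ x T - 1) ^ 2 ≤ C := by
  obtain ⟨C1, hC1, H1⟩ := entropy_bound P
  obtain ⟨C2, hC2, H2⟩ := second_bound P
  refine ⟨4 * C1 + C2, by positivity, fun F S I T hT => ?_⟩
  have h1 : ∫ x, F.w x T ≤ C1 := (H1 F S I T hT).2.2.1
  have h2 := (H2 F S I T hT).1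
  calc ∫ x, (F.θ x T - 1) ^ 2 ≤ ∫ x, (4 * F.w x T + F.w x T ^ 2) := by
        refine integral_mono (S.sθ T).integrable_sq
          (((S.int_w T).const_mul _).add (S.int_w_sq T)) fun x => ?_
        have hθ := S.θ_pos x T
        have hy := mul_le_mul_of_nonneg_left (y_le_w hθ) (S.w_nonneg x T)
        have e : F.w x T * (F.θ x T + 1) = (F.θ x T - 1) ^ 2 := by
          rw [Flow.w]; field_simp
        have e' : (F.θ x T - 1) ^ 2 / (F.θ x T + 1) = F.w x T := rfl
        rw [e, e'] at hy
        simp only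
        linarith
    _ = 4 * (∫ x, F.w x T) + ∫ x, F.w x T ^ 2 := by
        rw [integral_add ((S.int_w T).const_mul _) (S.int_w_sq T), integral_const_mul]
    _ ≤ _ := by linarith

set_option maxHeartbeats 1600000 in
/-- The velocity gradient: in the production of `∫ uₓ²`, the product `uₓ vₓ` is absorbed by `uₓₓ`
through `prod_l2`, and `w vₓ` by the sup-norm control of `w`. -/
lemma u_grad_bound (P : Par μ κ R cv K N m) : ∃ C, 0 ≤ C ∧ ∀ F, Sol μ κ R cv K F → Init N m F →
    ∀ T, 0 ≤ T → ∫ x, F.ux x T ^ 2 ≤ C ∧ ∫ z, F.ux z.1 z.2 ^ 2 ∂(PT T) ≤ C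
      ∧ ∫ z, F.uxx z.1 z.2 ^ 2 ∂(PT T) ≤ C := by
  obtain ⟨C1, hC1, H1⟩ := entropy_bound P
  obtain ⟨C2, hC2, H2⟩ := second_bound P
  obtain ⟨C3, hC3, H3⟩ := third_bound P
  obtain ⟨hμ, hκ, hR, hcv, hK, hN, hm⟩ := P
  have hK0 : 0 < K := by linarith
  set a := μ * K⁻¹ with ha
  have ha0 : 0 < a := by positivity
  set k1 := 3 * a⁻¹ * μ ^ 2 * K ^ 4 with hk1
  set k2 := 3 * a⁻¹ * R ^ 2 * K ^ 2 with hk2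
  set k3 := 3 * a⁻¹ * R ^ 2 * K ^ 4 * 32 with hk3
  set k4 := 3 * a⁻¹ * R ^ 2 * K ^ 4 * 2 with hk4
  have h1 : 0 ≤ k1 := by positivity
  have h2 : 0 ≤ k2 := by positivity
  have h3 : 0 ≤ k3 := by positivity
  have h4 : 0 ≤ k4 := by positivity
  set e := a / (2 * (k1 * C3 + 1)) with he
  have he0 : 0 < e := by positivity
  have hke : k1 * C3 * e ≤ a / 2 := by
    rw [he, mul_div_assoc', div_le_div_iff₀ (by positivity) (by positivity)]
    nlinarith
  set E := N + k1 * (C3 * (e⁻¹ * C2)) + k2 * C2 + k3 * C3 + k4 * (C3 * (9 * C1) * C2) with hE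
  have hE0 : 0 ≤ E := by positivity
  refine ⟨E + C2 + (a / 2)⁻¹ * E, by positivity, fun F S I T hT => ?_⟩
  obtain ⟨-, hX, hY⟩ := H2 F S I T hT
  obtain ⟨-, hV⟩ := H3 F S I T hT
  have hb := grad_balance hT S.cu_t S.du_t S.du S.dux S.cuxx S.mu S.muxx
    (by
      have : Function.uncurry F.ut = fun z : ℝ × ℝ => μ * (F.uxx z.1 z.2 / F.v z.1 z.2
        - F.ux z.1 z.2 * F.vx z.1 z.2 / F.v z.1 z.2 ^ 2)
        - R * (F.θx z.1 z.2 / F.v z.1 z.2 - F.θ z.1 z.2 * F.vx z.1 z.2 / F.v z.1 z.2 ^ 2) := by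
        funext z; exact S.eq_u _ _
      rw [this]
      exact (((S.muxx.div S.mv).sub ((S.mux.mul S.mvx).div (S.mv.pow_const 2))).const_mul μ).sub
        (((S.mθx.div S.mv).sub ((S.mθ.mul S.mvx).div (S.mv.pow_const 2))).const_mul R))
    (S.pu T) S.sux (S.puxx T) (S.put T)
  have iU := (S.pux T).integrable_sq
  have iUU := (S.puxx T).integrable_sq
  have iY := (S.pθx T).integrable_sq
  have iV := (S.pvx T).integrable_sq
  have iP := (S.pp T).integrable_sq
  have iX : Integrable (fun z : ℝ × ℝ => (F.θ z.1 z.2 + 1) * F.ux z.1 z.2 ^ 2) (PT T) :=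
    (ib ((S.Bθ T).add (Bd.const 1)) (S.pux T) (S.pux T)).congr (ae_of_all _ fun z => by ring)
  have iW : Integrable (fun z : ℝ × ℝ => F.vx z.1 z.2 ^ 2 * F.w z.1 z.2 ^ 2) (PT T) :=
    (ib ((S.Bw T).pow 2) (S.pvx T) (S.pvx T)).congr (ae_of_all _ fun z => by ring)
  have hW := weighted_le (q := fun x t => F.vx x t ^ 2) (f := fun x t => F.w x t ^ 2)
    (b := F.p) (T := T) (Q := C3) (c := 9 * C1) (fun x t => sq_nonneg _) (by positivity)
    (fun t ht _ => (H3 F S I t ht.le).1) (fun t => (S.svx t).integrable_sq)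
    (fun x t ht _ => S.bound_w_sq (H1 F S I t ht.le).2.2.1) iW iP
  have hp : ∫ z, F.p z.1 z.2 ^ 2 ∂(PT T) ≤ C2 :=
    (integral_mono iP iY fun z => S.p_sq_le _ _).trans hY
  have hU : ∫ z, F.ux z.1 z.2 ^ 2 ∂(PT T) ≤ C2 := by
    refine (integral_mono iU iX fun z => ?_).trans hX
    have := mul_nonneg (S.θ_pos z.1 z.2).le (sq_nonneg (F.ux z.1 z.2))
    simp only; linarith
  obtain ⟨iQ, hQ⟩ := prod_l2 (T := T) (Q := C3) he0 S.dux S.mux S.muxx S.mvx (S.pux T) (S.puxx T)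
    (fun t _ _ => S.svx t) (fun t ht _ => (H3 F S I t ht.le).1)
  have hr : ∫ z, (-2 * (F.uxx z.1 z.2 * F.ut z.1 z.2)) ∂(PT T)
      ≤ (-a) * (∫ z, F.uxx z.1 z.2 ^ 2 ∂(PT T))
        + k1 * (∫ z, F.ux z.1 z.2 ^ 2 * F.vx z.1 z.2 ^ 2 ∂(PT T))
        + k2 * (∫ z, F.θx z.1 z.2 ^ 2 ∂(PT T)) + k3 * (∫ z, F.vx z.1 z.2 ^ 2 ∂(PT T))
        + k4 * (∫ z, F.vx z.1 z.2 ^ 2 * F.w z.1 z.2 ^ 2 ∂(PT T)) := by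
    have j1 := (iUU.const_mul (-a)).fun_add (iQ.const_mul k1)
    have j2 := j1.fun_add (iY.const_mul k2)
    have j3 := j2.fun_add (iV.const_mul k3)
    have j4 := j3.fun_add (iW.const_mul k4)
    simp only [← integral_const_mul]
    rw [← integral_add (iUU.const_mul _) (iQ.const_mul _), ← integral_add j1 (iY.const_mul _),
      ← integral_add j2 (iV.const_mul _), ← integral_add j3 (iW.const_mul _)]
    refine integral_mono (((S.puxx T).integrable_mul (S.put T)).const_mul (-2)) j4 fun z => ?_
    have h := pointwise_u (vx := F.vx z.1 z.2) (θx := F.θx z.1 z.2) (ux := F.ux z.1 z.2)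
      (uxx := F.uxx z.1 z.2) (R := R)
      hμ hK0 (inv_le_of_inv_le₀ hK0 (S.v_ge z.1 z.2))
      (inv_anti₀ (S.v_pos z.1 z.2) (S.v_le z.1 z.2)) (S.v_pos z.1 z.2) (S.θ_pos z.1 z.2)
    rw [← S.eq_u] at h
    exact h
  have n1 : 0 ≤ ∫ x, F.ux x T ^ 2 := integral_nonneg fun _ => sq_nonneg _
  have n2 : 0 ≤ ∫ z, F.uxx z.1 z.2 ^ 2 ∂(PT T) := integral_nonneg fun _ => sq_nonneg _
  have hI := I.ux_le
  generalize (∫ z, F.uxx z.1 z.2 ^ 2 ∂(PT T)) = UU at *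
  generalize (∫ z, F.ux z.1 z.2 ^ 2 ∂(PT T)) = U at *
  have y1 := mul_le_mul_of_nonneg_left hQ h1
  have y2 := mul_le_mul_of_nonneg_left hU (by positivity : 0 ≤ k1 * (C3 * e⁻¹))
  have y3 := mul_le_mul_of_nonneg_right hke n2
  have y4 := mul_le_mul_of_nonneg_left hY h2
  have y5 := mul_le_mul_of_nonneg_left hV h3
  have y6 := mul_le_mul_of_nonneg_left hW h4
  have y7 := mul_le_mul_of_nonneg_left hp (by positivity : 0 ≤ k4 * (C3 * (9 * C1)))
  have tot : (∫ x, F.ux x T ^ 2) + a / 2 * UU ≤ E := by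
    rw [hE]; linarith
  have hUU : UU ≤ (a / 2)⁻¹ * E := by
    rw [inv_mul_eq_div, le_div_iff₀ (by positivity)]; linarith
  have m1 : 0 ≤ a / 2 * UU := by positivity
  have m2 : 0 ≤ (a / 2)⁻¹ * E := by positivity
  exact ⟨by linarith, by linarith, by linarith⟩

set_option maxHeartbeats 1600000 in
/-- The temperature gradient: in the production of `∫ θₓ²`, the product `θₓ vₓ` is absorbed by `θₓₓ`
through `prod_l2`, while `uₓ²` and `w uₓ` are controlled by the bounds on the velocity gradient. -/
lemma θ_grad_bound (P : Par μ κ R cv K N m) : ∃ C, 0 ≤ C ∧ ∀ F, Sol μ κ R cv K F → Init N m F →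
    ∀ T, 0 ≤ T → ∫ x, F.θx x T ^ 2 ≤ C ∧ ∫ z, F.θxx z.1 z.2 ^ 2 ∂(PT T) ≤ C := by
  obtain ⟨C1, hC1, H1⟩ := entropy_bound P
  obtain ⟨C2, hC2, H2⟩ := second_bound P
  obtain ⟨C3, hC3, H3⟩ := third_bound P
  obtain ⟨C4, hC4, H4⟩ := u_grad_bound P
  obtain ⟨hμ, hκ, hR, hcv, hK, hN, hm⟩ := P
  have hK0 : 0 < K := by linarith
  set a := κ * K⁻¹ with ha
  have ha0 : 0 < a := by positivity
  set k1 := 3 * a⁻¹ * κ ^ 2 * K ^ 4 with hk1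
  set k2 := 3 * a⁻¹ * R ^ 2 * K ^ 2 * 32 with hk2
  set k3 := 3 * a⁻¹ * R ^ 2 * K ^ 2 * 2 with hk3
  set k4 := 3 * a⁻¹ * μ ^ 2 * K ^ 2 with hk4
  have h1 : 0 ≤ k1 := by positivity
  have h2 : 0 ≤ k2 := by positivity
  have h3 : 0 ≤ k3 := by positivity
  have h4 : 0 ≤ k4 := by positivity
  set e := a / (2 * (k1 * C3 + 1)) with he
  have he0 : 0 < e := by positivity
  have hke : k1 * C3 * e ≤ a / 2 := by
    rw [he, mul_div_assoc', div_le_div_iff₀ (by positivity) (by positivity)]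
    nlinarith
  set E := cv * N + k1 * (C3 * (e⁻¹ * C2)) + k2 * C4 + k3 * (C4 * (9 * C1) * C2)
    + k4 * (C4 * (2 * C4)) with hE
  have hE0 : 0 ≤ E := by positivity
  refine ⟨cv⁻¹ * E + (a / 2)⁻¹ * E, by positivity, fun F S I T hT => ?_⟩
  obtain ⟨-, hX, hY⟩ := H2 F S I T hT
  obtain ⟨-, hU, hUU⟩ := H4 F S I T hT
  have hb := grad_balance (w := fun x t => F.θ x t - 1) hT (fun x => (S.cθ_t x).sub continuous_const)
    (fun x t ht => (S.dθ_t x t ht).sub_const 1) (fun x t => (S.dθ x t).sub_const 1)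
    S.dθx S.cθxx (S.mθ.sub_const 1) S.mθxx
    (by
      have : Function.uncurry F.θt = fun z : ℝ × ℝ => cv⁻¹ * (κ * (F.θxx z.1 z.2 / F.v z.1 z.2
        - F.θx z.1 z.2 * F.vx z.1 z.2 / F.v z.1 z.2 ^ 2)
        - R * F.θ z.1 z.2 * F.ux z.1 z.2 / F.v z.1 z.2
        + μ * F.ux z.1 z.2 ^ 2 / F.v z.1 z.2) := by
        funext z
        rw [← S.eq_θ, inv_mul_cancel_left₀ hcv.ne']
        rfl
      rw [this]
      exact (((((S.mθxx.div S.mv).sub ((S.mθx.mul S.mvx).div (S.mv.pow_const 2))).const_mul κ).sub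
        (((S.mθ.const_mul R).mul S.mux).div S.mv)).add
          (((S.mux.pow_const 2).const_mul μ).div S.mv)).const_mul _)
    (S.pθ T) S.sθx (S.pθxx T) (S.pθt T)
  have iU := (S.pux T).integrable_sq
  have iHH := (S.pθxx T).integrable_sq
  have iY := (S.pθx T).integrable_sq
  have iP := (S.pp T).integrable_sq
  have iW : Integrable (fun z : ℝ × ℝ => F.ux z.1 z.2 ^ 2 * F.w z.1 z.2 ^ 2) (PT T) :=
    (ib ((S.Bw T).pow 2) (S.pux T) (S.pux T)).congr (ae_of_all _ fun z => by ring)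
  have hW := weighted_le (q := fun x t => F.ux x t ^ 2) (f := fun x t => F.w x t ^ 2)
    (b := F.p) (T := T) (Q := C4) (c := 9 * C1) (fun x t => sq_nonneg _) (by positivity)
    (fun t ht _ => (H4 F S I t ht.le).1) (fun t => (S.sux t).integrable_sq)
    (fun x t ht _ => S.bound_w_sq (H1 F S I t ht.le).2.2.1) iW iP
  have hp : ∫ z, F.p z.1 z.2 ^ 2 ∂(PT T) ≤ C2 :=
    (integral_mono iP iY fun z => S.p_sq_le _ _).trans hY
  obtain ⟨iQ, hQ⟩ := prod_l2 (T := T) (Q := C3) he0 S.dθx S.mθx S.mθxx S.mvx (S.pθx T) (S.pθxx T)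
    (fun t _ _ => S.svx t) (fun t ht _ => (H3 F S I t ht.le).1)
  obtain ⟨iG, hG⟩ := prod_l2 (T := T) (Q := C4) one_pos S.dux S.mux S.muxx S.mux (S.pux T)
    (S.puxx T) (fun t _ _ => S.sux t) (fun t ht _ => (H4 F S I t ht.le).1)
  have hr : cv * ∫ z, (-2 * (F.θxx z.1 z.2 * F.θt z.1 z.2)) ∂(PT T)
      ≤ (-a) * (∫ z, F.θxx z.1 z.2 ^ 2 ∂(PT T))
        + k1 * (∫ z, F.θx z.1 z.2 ^ 2 * F.vx z.1 z.2 ^ 2 ∂(PT T))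
        + k2 * (∫ z, F.ux z.1 z.2 ^ 2 ∂(PT T))
        + k3 * (∫ z, F.ux z.1 z.2 ^ 2 * F.w z.1 z.2 ^ 2 ∂(PT T))
        + k4 * (∫ z, F.ux z.1 z.2 ^ 2 * F.ux z.1 z.2 ^ 2 ∂(PT T)) := by
    have j1 := (iHH.const_mul (-a)).fun_add (iQ.const_mul k1)
    have j2 := j1.fun_add (iU.const_mul k2)
    have j3 := j2.fun_add (iW.const_mul k3)
    have j4 := j3.fun_add (iG.const_mul k4)
    simp only [← integral_const_mul]
    rw [← integral_add (iHH.const_mul _) (iQ.const_mul _), ← integral_add j1 (iU.const_mul _),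
      ← integral_add j2 (iW.const_mul _), ← integral_add j3 (iG.const_mul _)]
    refine integral_mono ((((S.pθxx T).integrable_mul (S.pθt T)).const_mul (-2)).const_mul cv) j4
      fun z => ?_
    have h := pointwise_θ (vx := F.vx z.1 z.2) (θx := F.θx z.1 z.2) (ux := F.ux z.1 z.2)
      (θxx := F.θxx z.1 z.2) (R := R) (μ := μ)
      hκ hK0 (inv_le_of_inv_le₀ hK0 (S.v_ge z.1 z.2))
      (inv_anti₀ (S.v_pos z.1 z.2) (S.v_le z.1 z.2)) (S.v_pos z.1 z.2) (S.θ_pos z.1 z.2)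
    rw [← S.eq_θ] at h
    refine le_trans (le_of_eq ?_) h
    simp only
    ring
  rw [← hb, mul_sub] at hr
  have n1 : 0 ≤ ∫ x, F.θx x T ^ 2 := integral_nonneg fun _ => sq_nonneg _
  have n2 : 0 ≤ ∫ z, F.θxx z.1 z.2 ^ 2 ∂(PT T) := integral_nonneg fun _ => sq_nonneg _
  have hI := mul_le_mul_of_nonneg_left I.θx_le hcv.le
  generalize (∫ z, F.θxx z.1 z.2 ^ 2 ∂(PT T)) = HH at *
  generalize (∫ z, F.θx z.1 z.2 ^ 2 ∂(PT T)) = H at *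
  have y1 := mul_le_mul_of_nonneg_left hQ h1
  have y2 := mul_le_mul_of_nonneg_left hY (by positivity : 0 ≤ k1 * (C3 * e⁻¹))
  have y3 := mul_le_mul_of_nonneg_right hke n2
  have y4 := mul_le_mul_of_nonneg_left hU h2
  have y5 := mul_le_mul_of_nonneg_left hW h3
  have y6 := mul_le_mul_of_nonneg_left hp (by positivity : 0 ≤ k3 * (C4 * (9 * C1)))
  have y7 : k4 * (∫ z, F.ux z.1 z.2 ^ 2 * F.ux z.1 z.2 ^ 2 ∂(PT T)) ≤ k4 * (C4 * (2 * C4)) := by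
    refine mul_le_mul_of_nonneg_left (hG.trans (mul_le_mul_of_nonneg_left ?_ hC4)) h4
    rw [inv_one, one_mul, one_mul]
    linarith
  have tot : cv * (∫ x, F.θx x T ^ 2) + a / 2 * HH ≤ E := by
    rw [hE]; linarith
  have m1 : 0 ≤ a / 2 * HH := by positivity
  have m2 : 0 ≤ (a / 2)⁻¹ * E := by positivity
  have m3 : 0 ≤ cv⁻¹ * E := by positivity
  have m4 : 0 ≤ cv * ∫ x, F.θx x T ^ 2 := by positivity
  have hHH : HH ≤ (a / 2)⁻¹ * E := by
    rw [inv_mul_eq_div, le_div_iff₀ (by positivity)]; linarith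
  have hHs : (∫ x, F.θx x T ^ 2) ≤ cv⁻¹ * E := by
    rw [inv_mul_eq_div, le_div_iff₀ (by positivity)]; linarith
  exact ⟨by linarith, by linarith⟩

/-- The uniform bound for flows. -/
lemma total_bound (P : Par μ κ R cv K N m) : ∃ C, 0 ≤ C ∧ ∀ F, Sol μ κ R cv K F → Init N m F →
    ∀ T, 0 ≤ T →
      (∫ x, (F.v x T - 1) ^ 2 ≤ C ∧ ∫ x, F.vx x T ^ 2 ≤ C) ∧
      (∫ x, F.u x T ^ 2 ≤ C ∧ ∫ x, F.ux x T ^ 2 ≤ C) ∧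
      (∫ x, (F.θ x T - 1) ^ 2 ≤ C ∧ ∫ x, F.θx x T ^ 2 ≤ C) ∧
      ∫ z, F.vx z.1 z.2 ^ 2 ∂(PT T) ≤ C ∧
      (∫ z, F.ux z.1 z.2 ^ 2 ∂(PT T) ≤ C ∧ ∫ z, F.uxx z.1 z.2 ^ 2 ∂(PT T) ≤ C) ∧
      (∫ z, F.θx z.1 z.2 ^ 2 ∂(PT T) ≤ C ∧ ∫ z, F.θxx z.1 z.2 ^ 2 ∂(PT T) ≤ C) := by
  obtain ⟨C1, hC1, H1⟩ := entropy_bound P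
  obtain ⟨C2, hC2, H2⟩ := second_bound P
  obtain ⟨C3, hC3, H3⟩ := third_bound P
  obtain ⟨C4, hC4, H4⟩ := u_grad_bound P
  obtain ⟨C5, hC5, H5⟩ := θ_grad_bound P
  obtain ⟨C6, hC6, H6⟩ := θ_l2_bound P
  refine ⟨C1 + C2 + C3 + C4 + C5 + C6, by positivity, fun F S I T hT => ?_⟩
  obtain ⟨a1, a2, -⟩ := H1 F S I T hT
  obtain ⟨-, -, b1⟩ := H2 F S I T hT
  obtain ⟨c1, c2⟩ := H3 F S I T hT
  obtain ⟨d1, d2, d3⟩ := H4 F S I T hT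
  obtain ⟨e1, e2⟩ := H5 F S I T hT
  have f1 := H6 F S I T hT
  refine ⟨⟨?_, ?_⟩, ⟨?_, ?_⟩, ⟨?_, ?_⟩, ?_, ⟨?_, ?_⟩, ?_, ?_⟩ <;> linarith

end NS

namespace NS

/-! ### Measurability and integrability on the strip -/

lemma measurable_dx {f fx : ℝ → ℝ → ℝ} (hm : Measurable (Function.uncurry f))
    (hd : ∀ x t, HasDerivAt (fun y => f y t) (fx x t) x) : Measurable (Function.uncurry fx) :=
  measurable_of_tendsto_metrizable (fun n : ℕ => measurable_dq hm (1 / ((n:ℝ) + 1)))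
    (tendsto_pi_nhds.2 fun z => tendsto_dq (hd z.1 z.2))

lemma strip_l2 {f : ℝ → ℝ → ℝ} {T B : ℝ} (hm : Measurable (Function.uncurry f))
    (hs : ∀ t, 0 < t → t ≤ T → MemLp (fun x => f x t) 2 volume)
    (hB : ∀ t, 0 < t → t ≤ T → ∫ x, f x t ^ 2 ≤ B) :
    MemLp (fun z : ℝ × ℝ => f z.1 z.2) 2 (PT T) := by
  refine (memLp_two_iff_integrable_sq (f := fun z : ℝ × ℝ => f z.1 z.2)
    hm.aestronglyMeasurable).2 ?_
  have m : Measurable (fun z : ℝ × ℝ => f z.1 z.2 ^ 2) := hm.pow_const 2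
  unfold PT
  rw [integrable_prod_iff' m.aestronglyMeasurable]
  constructor
  · filter_upwards [ae_restrict_mem measurableSet_Ioc] with t ht
    exact (hs t ht.1 ht.2).integrable_sq
  · refine (integrable_const B).mono'
      (m.norm.stronglyMeasurable.integral_prod_left').aestronglyMeasurable ?_
    filter_upwards [ae_restrict_mem measurableSet_Ioc] with t ht
    rw [Real.norm_eq_abs, abs_of_nonneg (integral_nonneg fun _ => norm_nonneg _)]
    refine le_trans (le_of_eq ?_) (hB t ht.1 ht.2)
    refine integral_congr_ae (ae_of_all _ fun x => ?_)
    simp only [Real.norm_eq_abs]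
    exact abs_of_nonneg (by positivity)

/-- The temperature is bounded below on compact time intervals: it is continuous in time with
values in `L²`, hence by interpolation with values in `L^∞`, and every time slice has a positive
minimum. -/
lemma lower_bound {θ θx θt : ℝ → ℝ → ℝ} {T B : ℝ}
    (hc : ∀ x, Continuous (θ x)) (hd : ∀ x, ∀ t > 0, HasDerivAt (θ x) (θt x t) t)
    (hx : ∀ x t, HasDerivAt (fun y => θ y t) (θx x t) x) (hpos : ∀ x t, 0 < θ x t)
    (hm : Measurable (Function.uncurry θ))
    (hs : ∀ t, MemLp (fun x => θ x t - 1) 2 volume)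
    (hsx : ∀ t, MemLp (fun x => θx x t) 2 volume)
    (hp : ∀ T, MemLp (fun z : ℝ × ℝ => θ z.1 z.2 - 1) 2 (PT T))
    (hpt : ∀ T, MemLp (fun z : ℝ × ℝ => θt z.1 z.2) 2 (PT T))
    (hB : ∀ t, t ≤ T → ∫ x, θx x t ^ 2 ≤ B)
    (hfar : ∀ t, Tendsto (fun x => θ x t) (cocompact ℝ) (nhds 1)) :
    ∃ c > 0, ∀ t ∈ Icc 0 T, ∀ x, c ≤ θ x t := by
  refine isCompact_Icc.induction_on (p := fun S => ∃ c > 0, ∀ t ∈ S, ∀ x, c ≤ θ x t)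
    ⟨1, one_pos, by simp⟩ (fun S S' h ⟨c, hc0, hc⟩ => ⟨c, hc0, fun t ht => hc t (h ht)⟩)
    (fun S S' ⟨c, hc0, hc⟩ ⟨c', hc0', hc'⟩ => ⟨min c c', lt_min hc0 hc0', fun t ht x => ?_⟩)
    fun s hsT => ?_
  · rcases ht with ht | ht
    · exact (min_le_left _ _).trans (hc t ht x)
    · exact (min_le_right _ _).trans (hc' t ht x)
  -- the slice at time `s` has a positive lower bound
  obtain ⟨c, hc0, hcs⟩ : ∃ c > 0, ∀ x, c ≤ θ x s := by
    have hcont : Continuous fun x => min (θ x s) (1 / 2) :=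
      (continuous_iff_continuousAt.2 fun x => (hx x s).continuousAt).min continuous_const
    obtain ⟨x, h⟩ := hcont.exists_forall_le' 0 (by
      filter_upwards [(hfar s).eventually (lt_mem_nhds (by norm_num : (1 / 2 : ℝ) < 1))] with x h
      rw [min_eq_right h.le]
      exact min_le_right _ _)
    exact ⟨_, lt_min (hpos x s) (by norm_num), fun y => (h y).trans (min_le_left _ _)⟩
  -- the function `θ - θ(s)` and its `L²` norm
  have hps : ∀ T', MemLp (fun z : ℝ × ℝ => θ z.1 s - 1) 2 (PT T') := fun T' =>
    strip_l2 (f := fun x _ => θ x s - 1) (B := ∫ x, (θ x s - 1) ^ 2)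
      ((hm.comp (measurable_fst.prodMk measurable_const)).sub_const 1) (fun _ _ _ => hs s)
      (fun _ _ _ => le_rfl)
  have hdiff : ∀ t, MemLp (fun x => θ x t - θ x s) 2 volume := fun t =>
    ((hs t).sub (hs s)).ae_eq (ae_of_all _ fun x => by simp)
  have hG : ∀ T', Integrable (fun z : ℝ × ℝ => 2 * (θ z.1 z.2 - θ z.1 s) * θt z.1 z.2) (PT T') :=
    fun T' => ((((hp T').sub (hps T')).integrable_mul (hpt T')).const_mul 2).congr
      (ae_of_all _ fun z => by simp only [Pi.mul_apply, Pi.sub_apply]; ring)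
  have hbal : ∀ t, 0 ≤ t → (∫ x, (θ x t - θ x s) ^ 2) - ∫ x, (θ x 0 - θ x s) ^ 2
      = ∫ r in Ioc 0 t, ∫ x, 2 * (θ x r - θ x s) * θt x r := by
    intro t ht
    have h := energy_balance (f := fun x t => (θ x t - θ x s) ^ 2)
      (g := fun x t => 2 * (θ x t - θ x s) * θt x t)
      (r := fun x t => 2 * (θ x t - θ x s) * θt x t) ht
      (fun x => ((hc x).sub continuous_const).pow 2)
      (fun x t ht => by simpa using ((hd x t ht).sub_const (θ x s)).fun_pow 2)
      (hdiff 0).integrable_sq (hdiff t).integrable_sq (hG t) (hG t) (ae_of_all _ fun _ _ _ => rfl)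
    rw [h]
    have hGt := hG t
    unfold PT at hGt ⊢
    exact integral_prod_symm _ hGt
  have hcont : ContinuousOn (fun t => ∫ x, (θ x t - θ x s) ^ 2) (Icc 0 T) := by
    have hGT := hG T
    unfold PT at hGT
    have h := intervalIntegral.continuousOn_primitive (a := 0) (b := T)
      (f := fun r => ∫ x, 2 * (θ x r - θ x s) * θt x r) (μ := volume)
      (by rw [integrableOn_Icc_iff_integrableOn_Ioc]; exact hGT.integral_prod_right)
    refine (h.add (continuousOn_const (c := ∫ x, (θ x 0 - θ x s) ^ 2))).congr fun t ht => ?_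
    change (∫ x, (θ x t - θ x s) ^ 2)
      = (∫ r in Ioc 0 t, ∫ x, 2 * (θ x r - θ x s) * θt x r) + ∫ x, (θ x 0 - θ x s) ^ 2
    rw [← hbal t ht.1]
    ring
  have hB0 : 0 ≤ B := (integral_nonneg fun _ => sq_nonneg _).trans (hB s hsT.2)
  have h0 := (hcont s hsT).tendsto
  simp only [sub_self, ne_eq, OfNat.ofNat_ne_zero, not_false_eq_true, zero_pow,
    integral_zero] at h0
  have hδ : (0:ℝ) < (c / 2) ^ 4 / (16 * B + 1) := by positivity
  refine ⟨_, inter_mem (h0.eventually (gt_mem_nhds hδ)) self_mem_nhdsWithin, c / 2, by positivity,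
    fun t ht x => ?_⟩
  have ht1 : ∫ x, (θ x t - θ x s) ^ 2 < (c / 2) ^ 4 / (16 * B + 1) := ht.1
  have ht2 : t ∈ Icc 0 T := ht.2
  have hA := agmon (fun x => (hx x t).sub (hx x s)) (hdiff t) ((hsx t).sub (hsx s)) x
  have hD : ∫ x, (θx x t - θx x s) ^ 2 ≤ 4 * B := by
    have i1 := (hsx t).integrable_sq
    have i2 := (hsx s).integrable_sq
    calc ∫ x, (θx x t - θx x s) ^ 2 ≤ ∫ x, (2 * θx x t ^ 2 + 2 * θx x s ^ 2) := by
          refine integral_mono ((hsx t).sub (hsx s)).integrable_sq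
            ((i1.const_mul 2).add (i2.const_mul 2)) fun x => ?_
          simp only
          nlinarith [sq_nonneg (θx x t + θx x s)]
      _ = 2 * (∫ x, θx x t ^ 2) + 2 * ∫ x, θx x s ^ 2 := by
          rw [integral_add (i1.const_mul 2) (i2.const_mul 2), integral_const_mul,
            integral_const_mul]
      _ ≤ _ := by linarith [hB t ht2.2, hB s hsT.2]
  have n1 : 0 ≤ ∫ x, (θ x t - θ x s) ^ 2 := integral_nonneg fun _ => sq_nonneg _
  have hle : ((θ x t - θ x s) ^ 2) ^ 2 ≤ ((c / 2) ^ 2) ^ 2 := by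
    refine hA.trans ?_
    rw [lt_div_iff₀ (by positivity)] at ht1
    have := mul_le_mul_of_nonneg_left hD n1
    simp only [Pi.sub_apply]
    nlinarith
  have h2 : (θ x t - θ x s) ^ 2 ≤ (c / 2) ^ 2 := le_of_sq_le_sq hle (by positivity)
  have h3 := abs_le_of_sq_le_sq' h2 (by positivity)
  linarith [hcs x, h3.1]

/-! ### From the classical solution to the flow of the energy method -/

/-- Extension of a function of space and time to negative times, constant in time. -/
def ext (w : ℝ → ℝ → ℝ) (x t : ℝ) : ℝ := w x (max t 0)

lemma L2_data {f : ℝ → ℝ} {B : ℝ} (hB : 0 ≤ B) (hm : AEStronglyMeasurable f volume)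
    (h : L2 f ≤ ENNReal.ofReal B) : MemLp f 2 volume ∧ ∫ x, f x ^ 2 ≤ B ^ 2 := by
  refine ⟨⟨hm, lt_of_le_of_lt h ENNReal.ofReal_lt_top⟩, ?_⟩
  rw [integral_eq_lintegral_of_nonneg_ae (ae_of_all _ fun _ => sq_nonneg _) (hm.pow 2),
    ← eLpNorm_two_sq]
  refine ENNReal.toReal_le_of_le_ofReal (sq_nonneg B) ?_
  rw [ENNReal.ofReal_pow hB]
  exact pow_le_pow_left' h 2

lemma H1_data {f : ℝ → ℝ} {B c : ℝ} (hB : 0 ≤ B) (hf : ContDiff ℝ 2 f)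
    (h : H1 (fun x => f x - c) ≤ ENNReal.ofReal B) :
    (MemLp (fun x => f x - c) 2 volume ∧ ∫ x, (f x - c) ^ 2 ≤ B ^ 2) ∧
      (MemLp (deriv f) 2 volume ∧ ∫ x, deriv f x ^ 2 ≤ B ^ 2) := by
  have e : deriv (fun x => f x - c) = deriv f := by
    funext x
    exact deriv_sub_const c
  unfold H1 at h
  rw [e] at h
  exact ⟨L2_data hB (hf.continuous.sub continuous_const).aestronglyMeasurable
      (le_self_add.trans h),
    L2_data hB (hf.continuous_deriv (by norm_num)).aestronglyMeasurable (le_add_self.trans h)⟩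

/-- The regularity of one unknown `w` of the system with far-field value `c`. -/
structure Comp (w : ℝ → ℝ → ℝ) (c : ℝ) : Prop where
  sx : ∀ t, 0 ≤ t → ContDiff ℝ 2 fun x => w x t
  st : ∀ x t, 0 ≤ t → DifferentiableAt ℝ (fun s => w x s) t
  bd : ∀ T, 0 ≤ T → ∃ B, 0 ≤ B ∧ ∀ t ∈ Icc 0 T, H1 (fun x => w x t - c) ≤ ENNReal.ofReal B

namespace Comp

variable {w : ℝ → ℝ → ℝ} {c : ℝ}

lemma d (h : Comp w c) (x t : ℝ) : HasDerivAt (fun y => ext w y t) (ext (pdx w) x t) x :=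
  (((h.sx (max t 0) (le_max_right _ _)).differentiable (by norm_num)) x).hasDerivAt

lemma dd (h : Comp w c) (x t : ℝ) :
    HasDerivAt (fun y => ext (pdx w) y t) (ext (pdx (pdx w)) x t) x := by
  have h1 : ContDiff ℝ 1 (deriv fun x => w x (max t 0)) :=
    (h.sx (max t 0) (le_max_right _ _)).iterate_deriv' 1 1
  exact ((h1.differentiable (by norm_num)) x).hasDerivAt

lemma cx (h : Comp w c) (t : ℝ) : Continuous fun x => ext (pdx w) x t :=
  continuous_iff_continuousAt.2 fun x => (h.dd x t).continuousAt

lemma cxx (h : Comp w c) (t : ℝ) : Continuous fun x => ext (pdx (pdx w)) x t := by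
  have h1 : ContDiff ℝ 1 (deriv fun x => w x (max t 0)) :=
    (h.sx (max t 0) (le_max_right _ _)).iterate_deriv' 1 1
  exact h1.continuous_deriv le_rfl

lemma ct (h : Comp w c) (x : ℝ) : Continuous (ext w x) :=
  continuous_iff_continuousAt.2 fun t =>
    ContinuousAt.comp (f := fun t : ℝ => max t 0) (g := fun s => w x s)
      (h.st x (max t 0) (le_max_right _ _)).continuousAt
      (continuous_id.max continuous_const).continuousAt

lemma dt (h : Comp w c) (x t : ℝ) (ht : 0 < t) : HasDerivAt (ext w x) (pdt w x t) t := by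
  refine (h.st x t ht.le).hasDerivAt.congr_of_eventuallyEq ?_
  filter_upwards [lt_mem_nhds ht] with s hs
  simp only [ext, max_eq_left hs.le]

lemma m (h : Comp w c) : Measurable (Function.uncurry (ext w)) :=
  (measurable_uncurry_of_continuous_of_measurable (u := fun x t => ext w x t)
    (fun t => continuous_iff_continuousAt.2 fun x => (h.d x t).continuousAt)
    (fun x => (h.ct x).measurable))

lemma mx (h : Comp w c) : Measurable (Function.uncurry (ext (pdx w))) := measurable_dx h.m h.d

lemma mxx (h : Comp w c) : Measurable (Function.uncurry (ext (pdx (pdx w)))) :=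
  measurable_dx h.mx h.dd

lemma data (h : Comp w c) (T : ℝ) : ∃ B, 0 ≤ B ∧ ∀ t ≤ T,
    (∫ x, (ext w x t - c) ^ 2 ≤ B) ∧ ∫ x, ext (pdx w) x t ^ 2 ≤ B := by
  obtain ⟨B, hB, hb⟩ := h.bd (max T 0) (le_max_right _ _)
  refine ⟨B ^ 2, by positivity, fun t ht => ?_⟩
  have := H1_data hB (h.sx (max t 0) (le_max_right _ _))
    (hb (max t 0) ⟨le_max_right _ _, max_le_max_right 0 ht⟩)
  exact ⟨this.1.2, this.2.2⟩

lemma s (h : Comp w c) (t : ℝ) : MemLp (fun x => ext w x t - c) 2 volume := by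
  obtain ⟨B, hB, hb⟩ := h.bd (max t 0) (le_max_right _ _)
  exact (H1_data hB (h.sx (max t 0) (le_max_right _ _)) (hb _ ⟨le_max_right _ _, le_rfl⟩)).1.1

lemma sdx (h : Comp w c) (t : ℝ) : MemLp (fun x => ext (pdx w) x t) 2 volume := by
  obtain ⟨B, hB, hb⟩ := h.bd (max t 0) (le_max_right _ _)
  exact (H1_data hB (h.sx (max t 0) (le_max_right _ _)) (hb _ ⟨le_max_right _ _, le_rfl⟩)).2.1

lemma p (h : Comp w c) (T : ℝ) : MemLp (fun z : ℝ × ℝ => ext w z.1 z.2 - c) 2 (PT T) := by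
  obtain ⟨B, -, hb⟩ := h.data T
  exact strip_l2 (f := fun x t => ext w x t - c) (h.m.sub_const c) (fun t _ _ => h.s t)
    (fun t _ ht => (hb t ht).1)

lemma px (h : Comp w c) (T : ℝ) : MemLp (fun z : ℝ × ℝ => ext (pdx w) z.1 z.2) 2 (PT T) := by
  obtain ⟨B, -, hb⟩ := h.data T
  exact strip_l2 h.mx (fun t _ _ => h.sdx t) (fun t _ ht => (hb t ht).2)

lemma pxx (h : Comp w c)
    (hH : ∀ T, 0 < T → ∫⁻ t in Icc 0 T, H2 (fun x => w x t - c) ^ 2 < ⊤) (T : ℝ) :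
    MemLp (fun z : ℝ × ℝ => ext (pdx (pdx w)) z.1 z.2) 2 (PT T) := by
  refine (memLp_two_iff (f := fun z : ℝ × ℝ => ext (pdx (pdx w)) z.1 z.2)
    h.mxx.aestronglyMeasurable).2 ?_
  rcases le_or_gt T 0 with hT | hT
  · simp [PT, Ioc_eq_empty (not_lt.2 hT)]
  refine lt_of_le_of_lt ?_ (hH T hT)
  unfold PT
  have m : Measurable fun z : ℝ × ℝ => ENNReal.ofReal (ext (pdx (pdx w)) z.1 z.2 ^ 2) :=
    (h.mxx.pow_const 2).ennreal_ofReal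
  rw [lintegral_prod_symm' _ m]
  refine le_trans ?_ (lintegral_mono_set Ioc_subset_Icc_self)
  refine setLIntegral_mono' measurableSet_Ioc fun t ht => ?_
  have e : deriv (deriv fun x => w x t - c) = fun x => ext (pdx (pdx w)) x t := by
    funext x
    have e1 : deriv (fun x => w x t - c) = fun x => pdx w x t := by
      funext y
      exact deriv_sub_const c
    rw [e1]
    simp only [ext, max_eq_left ht.1.le]
    rfl
  rw [← eLpNorm_two_sq (fun x => ext (pdx (pdx w)) x t)]
  refine pow_le_pow_left' ?_ 2
  unfold H2
  rw [e]
  exact le_add_self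

lemma sup (h : Comp w c) (T : ℝ) : ∃ B, 0 ≤ B ∧ ∀ x, ∀ t ≤ T, |ext w x t - c| ≤ B := by
  obtain ⟨B, hB, hb⟩ := h.data T
  refine ⟨2 * B + 1, by positivity, fun x t ht => ?_⟩
  have := agmon' (fun x => (h.d x t).sub_const c) (h.s t) (h.sdx t) x
  refine abs_le_of_sq_le_sq ?_ (by positivity)
  nlinarith [(hb t ht).1, (hb t ht).2]

end Comp

/-- A product of two `L²` functions of the strip is in `L²` if one of them has a derivative in `L²`
and the other is bounded in time with values in `L²`. -/
lemma Comp.prod_mem {w w' : ℝ → ℝ → ℝ} {c c' : ℝ} (h : Comp w c) (h' : Comp w' c') {T : ℝ}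
    (hxx : MemLp (fun z : ℝ × ℝ => ext (pdx (pdx w)) z.1 z.2) 2 (PT T)) :
    MemLp (fun z : ℝ × ℝ => ext (pdx w) z.1 z.2 * ext (pdx w') z.1 z.2) 2 (PT T) := by
  obtain ⟨B, -, hb⟩ := h'.data T
  refine (memLp_two_iff_integrable_sq (h.mx.mul h'.mx).aestronglyMeasurable).2 ?_
  refine ((prod_l2 one_pos h.dd h.mx h.mxx h'.mx (h.px T) hxx (fun t _ _ => h'.sdx t)
    (fun t _ ht => (hb t ht).2)).1).congr (ae_of_all _ fun z => ?_)
  simp only [Pi.mul_apply, Function.uncurry]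
  ring

/-- The flow of a classical solution, extended to negative times.  The time derivatives of velocity
and temperature are defined by the right-hand sides of the equations. -/
noncomputable def flow (μ κ R cv : ℝ) (v u θ : ℝ → ℝ → ℝ) : Flow where
  v := ext v
  vx := ext (pdx v)
  u := ext u
  ux := ext (pdx u)
  uxx := ext (pdx (pdx u))
  θ := ext θ
  θx := ext (pdx θ)
  θxx := ext (pdx (pdx θ))
  ut := fun x t =>
    μ * (ext (pdx (pdx u)) x t / ext v x t - ext (pdx u) x t * ext (pdx v) x t / ext v x t ^ 2)
      - R * (ext (pdx θ) x t / ext v x t - ext θ x t * ext (pdx v) x t / ext v x t ^ 2)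
  θt := fun x t => cv⁻¹ *
    (κ * (ext (pdx (pdx θ)) x t / ext v x t - ext (pdx θ) x t * ext (pdx v) x t / ext v x t ^ 2)
      - R * ext θ x t * ext (pdx u) x t / ext v x t + μ * ext (pdx u) x t ^ 2 / ext v x t)

section

variable {μ κ R cv K : ℝ} {v u θ : ℝ → ℝ → ℝ}

lemma comp_of_bound {w : ℝ → ℝ → ℝ} {c : ℝ} (sx : ∀ t, 0 ≤ t → ContDiff ℝ 2 fun x => w x t)
    (st : ∀ x t, 0 ≤ t → DifferentiableAt ℝ (fun s => w x s) t)
    (bd : ∀ T, 0 ≤ T → ∃ B, ∀ t ∈ Icc 0 T, H1 (fun x => w x t - c) ≤ ENNReal.ofReal B) :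
    Comp w c := by
  refine ⟨sx, st, fun T hT => ?_⟩
  obtain ⟨B, hb⟩ := bd T hT
  exact ⟨max B 0, le_max_right _ _, fun t ht =>
    (hb t ht).trans (ENNReal.ofReal_le_ofReal (le_max_left _ _))⟩

lemma comp_v (h : IsClassicalSolution μ κ R cv v u θ) : Comp v 1 :=
  comp_of_bound h.smooth_x_v h.smooth_t_v fun T hT => (h.reg_H1 T hT).imp fun _ hb t ht =>
    (le_self_add.trans le_self_add).trans (hb t ht)

lemma comp_u (h : IsClassicalSolution μ κ R cv v u θ) : Comp u 0 :=
  comp_of_bound h.smooth_x_u h.smooth_t_u fun T hT => (h.reg_H1 T hT).imp fun _ hb t ht => by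
    simp only [sub_zero]
    exact (le_add_self.trans le_self_add).trans (hb t ht)

lemma comp_θ (h : IsClassicalSolution μ κ R cv v u θ) : Comp θ 1 :=
  comp_of_bound h.smooth_x_θ h.smooth_t_θ fun T hT => (h.reg_H1 T hT).imp fun _ hb t ht =>
    le_add_self.trans (hb t ht)

lemma uxx_mem (h : IsClassicalSolution μ κ R cv v u θ) (T : ℝ) :
    MemLp (fun z : ℝ × ℝ => ext (pdx (pdx u)) z.1 z.2) 2 (PT T) :=
  (comp_u h).pxx (fun T hT => lt_of_le_of_lt
    (lintegral_mono fun t => by simp only [sub_zero]; exact le_self_add) (h.reg_H2 T hT)) T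

lemma θxx_mem (h : IsClassicalSolution μ κ R cv v u θ) (T : ℝ) :
    MemLp (fun z : ℝ × ℝ => ext (pdx (pdx θ)) z.1 z.2) 2 (PT T) :=
  (comp_θ h).pxx (fun T hT => lt_of_le_of_lt
    (lintegral_mono fun _ => le_add_self) (h.reg_H2 T hT)) T

lemma u_mem (h : IsClassicalSolution μ κ R cv v u θ) (T : ℝ) :
    MemLp (fun z : ℝ × ℝ => ext u z.1 z.2) 2 (PT T) := by
  simpa using (comp_u h).p T

/-- The quotient rule in the form in which it turns the conservation form of the equations into
the pointwise form. -/
lemma pdx_div {w w' : ℝ → ℝ → ℝ} {a b x t : ℝ} (ht : 0 ≤ t)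
    (ha : HasDerivAt (fun y => ext w y t) a x)
    (hb : HasDerivAt (fun y => ext w' y t) b x) (h0 : ext w' x t ≠ 0) :
    pdx (fun y s => w y s / w' y s) x t = a / ext w' x t - ext w x t * b / ext w' x t ^ 2 := by
  have e : pdx (fun y s => w y s / w' y s) x t = deriv (fun y => ext w y t / ext w' y t) x := by
    simp only [pdx, ext, max_eq_left ht]
  rw [e, (ha.fun_div hb h0).deriv]
  field_simp

/-- A classical solution with bounded volume satisfies the hypotheses of the energy method; the only
part which is not bookkeeping is the lower bound on the temperature, from `lower_bound`. -/
lemma flow_sol (hμ : 0 < μ) (hκ : 0 < κ) (hR : 0 < R) (hcv : 0 < cv) (hK : 1 ≤ K)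
    (h : IsClassicalSolution μ κ R cv v u θ) (hv : VolBounded K v) :
    Sol μ κ R cv K (flow μ κ R cv v u θ) := by
  have V := comp_v h
  have U := comp_u h
  have Θ := comp_θ h
  have hK0 : (0:ℝ) < K := by linarith
  have vge : ∀ x t, K⁻¹ ≤ ext v x t := fun x t => (hv x _ (le_max_right _ _)).1
  have vle : ∀ x t, ext v x t ≤ K := fun x t => (hv x _ (le_max_right _ _)).2
  have v0 : ∀ x t, ext v x t ≠ 0 := fun x t => ((inv_pos.2 hK0).trans_le (vge x t)).ne'
  have θpos : ∀ x t, 0 < ext θ x t := fun x t => h.θ_pos x _ (le_max_right _ _)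
  have eθ : ∀ x t, cv * (flow μ κ R cv v u θ).θt x t
      = κ * (ext (pdx (pdx θ)) x t / ext v x t
        - ext (pdx θ) x t * ext (pdx v) x t / ext v x t ^ 2)
      - R * ext θ x t * ext (pdx u) x t / ext v x t + μ * ext (pdx u) x t ^ 2 / ext v x t :=
    fun x t => by
      simp only [flow]
      rw [← mul_assoc, mul_inv_cancel₀ hcv.ne', one_mul]
  have bvi : ∀ T, Bd (PT T) (fun z : ℝ × ℝ => (ext v z.1 z.2)⁻¹) := fun T =>
    (Bd.of_pos (ν := PT T) (f := fun z : ℝ × ℝ => ext v z.1 z.2) V.m.aestronglyMeasurable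
      (inv_pos.2 hK0) (ae_of_all _ fun z => ⟨vge _ _, vle _ _⟩)).2.1
  have bθ : ∀ T, Bd (PT T) (fun z : ℝ × ℝ => ext θ z.1 z.2) := fun T => by
    obtain ⟨B, hB, hb⟩ := Θ.sup T
    refine .of_bound (C := B + 1) Θ.m.aestronglyMeasurable ?_
    filter_upwards [ae_PT_le T] with z hz
    have := abs_le.1 (hb z.1 z.2 hz.2)
    rw [abs_le]
    constructor <;> linarith
  have dut : ∀ x, ∀ t > 0, HasDerivAt (ext u x) ((flow μ κ R cv v u θ).ut x t) t := by
    intro x t ht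
    refine (U.dt x t ht).congr_deriv ?_
    have e := h.eq_momentum x t ht.le
    rw [pdx_div (w := pdx u) ht.le (U.dd x t) (V.d x t) (v0 x t),
      pdx_div (w := fun y s => R * θ y s) ht.le ((Θ.d x t).const_mul R) (V.d x t) (v0 x t)] at e
    simp only [flow]
    rw [eq_sub_of_add_eq e]
    simp only [ext]
    ring
  have dθt : ∀ x, ∀ t > 0, HasDerivAt (ext θ x) ((flow μ κ R cv v u θ).θt x t) t := by
    intro x t ht
    refine (Θ.dt x t ht).congr_deriv ?_
    have e := h.eq_energy x t ht.le
    rw [pdx_div (w := pdx θ) ht.le (Θ.dd x t) (V.d x t) (v0 x t)] at e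
    refine mul_left_cancel₀ hcv.ne' ?_
    rw [eθ, eq_sub_of_add_eq e]
    simp only [ext, max_eq_left ht.le]
    ring
  have pθt : ∀ T, MemLp (fun z : ℝ × ℝ => (flow μ κ R cv v u θ).θt z.1 z.2) 2 (PT T) := by
    intro T
    have b := bvi T
    have h1 := b.l2 (θxx_mem h T)
    have h2 := (b.pow 2).l2 (Θ.prod_mem V (θxx_mem h T))
    have h3 := (b.mul (bθ T)).l2 (U.px T)
    have h4 := b.l2 (U.prod_mem U (uxx_mem h T))
    refine ((((h1.sub h2).const_mul (cv⁻¹ * κ)).sub (h3.const_mul (cv⁻¹ * R))).add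
      (h4.const_mul (cv⁻¹ * μ))).ae_eq (ae_of_all _ fun z => ?_)
    simp only [flow, Pi.add_apply, Pi.sub_apply]
    ring
  have put : ∀ T, MemLp (fun z : ℝ × ℝ => (flow μ κ R cv v u θ).ut z.1 z.2) 2 (PT T) := by
    intro T
    have b := bvi T
    have h1 := b.l2 (uxx_mem h T)
    have h2 := (b.pow 2).l2 (U.prod_mem V (uxx_mem h T))
    have h3 := b.l2 (Θ.px T)
    have h4 := ((b.pow 2).mul (bθ T)).l2 (V.px T)
    refine (((h1.sub h2).const_mul μ).sub ((h3.sub h4).const_mul R)).ae_eq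
      (ae_of_all _ fun z => ?_)
    simp only [flow, Pi.sub_apply]
    ring
  exact
    { hμ := hμ, hκ := hκ, hR := hR, hcv := hcv, hK := hK
      v_ge := vge
      v_le := vle
      θ_pos := θpos
      dv := V.d
      du := U.d
      dux := U.dd
      dθ := Θ.d
      dθx := Θ.dd
      cvx := V.cx
      cuxx := U.cxx
      cθxx := Θ.cxx
      cv_t := V.ct
      cu_t := U.ct
      cθ_t := Θ.ct
      dv_t := fun x t ht => (V.dt x t ht).congr_deriv (by
        rw [h.eq_mass x t ht.le]
        simp only [flow, ext, max_eq_left (le_of_lt ht)])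
      du_t := dut
      dθ_t := dθt
      eq_u := fun x t => rfl
      eq_θ := eθ
      mv := V.m
      mu := U.m
      mθ := Θ.m
      mvx := V.mx
      mux := U.mx
      mθx := Θ.mx
      muxx := U.mxx
      mθxx := Θ.mxx
      bdd := fun T => by
        obtain ⟨B₁, hB₁, hb₁⟩ := U.sup T
        obtain ⟨B₂, hB₂, hb₂⟩ := Θ.sup T
        obtain ⟨B₃, hB₃, hb₃⟩ := Θ.data (max T 0)
        obtain ⟨c, hc0, hc⟩ := lower_bound (T := max T 0) Θ.ct dθt Θ.d θpos Θ.m Θ.s Θ.sdx Θ.p pθt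
          (fun t ht => (hb₃ t ht).2) (fun t => h.farfield_θ _ (le_max_right _ _))
        refine ⟨B₁ + B₂ + 1 + c⁻¹, by positivity, fun x t ht => ?_⟩
        have h1 := hb₁ x t ht
        have h2 := abs_le.1 (hb₂ x t ht)
        have hci := inv_pos.2 hc0
        refine ⟨?_, ?_, ?_⟩
        · simp only [sub_zero] at h1
          exact h1.trans (by linarith)
        · -- on negative times the extension takes its value at time zero
          have h3 := hc (max t 0) ⟨le_max_right _ _, max_le_max_right 0 ht⟩ x
          have h4 : ext θ x (max t 0) = ext θ x t := by simp [ext]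
          rw [h4] at h3
          refine le_trans ?_ h3
          rw [inv_le_comm₀ (by positivity) hc0]
          linarith
        · change ext θ x t ≤ _
          linarith [h2.2]
      sv := V.s
      su := fun t => (U.s t).ae_eq (ae_of_all _ fun x => sub_zero _)
      sθ := Θ.s
      svx := V.sdx
      sux := U.sdx
      sθx := Θ.sdx
      pv := V.p
      pu := u_mem h
      pθ := Θ.p
      pvx := V.px
      pux := U.px
      pθx := Θ.px
      puxx := uxx_mem h
      pθxx := θxx_mem h
      put := put
      pθt := pθt }

lemma flow_init {M m : ℝ} (hM : 0 < M) (hm : 0 < m) (h : IsClassicalSolution μ κ R cv v u θ)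
    (hi : InitBounded M m v u θ) : Init (M ^ 2) m (flow μ κ R cv v u θ) := by
  obtain ⟨hH, -, hθ⟩ := hi
  have e0 : ∀ (w : ℝ → ℝ → ℝ) x, ext w x 0 = w x 0 := fun w x => by simp [ext]
  have a := H1_data (c := 1) hM.le (h.smooth_x_v 0 le_rfl)
    ((le_self_add.trans le_self_add).trans hH)
  have b := H1_data (c := 0) hM.le (h.smooth_x_u 0 le_rfl)
    (by simp only [sub_zero]; exact (le_add_self.trans le_self_add).trans hH)
  have d := H1_data (c := 1) hM.le (h.smooth_x_θ 0 le_rfl) (le_add_self.trans hH)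
  simp only [sub_zero] at b
  refine ⟨hm, ?_, ?_, ?_, ?_, ?_, ?_, ?_⟩ <;> simp only [flow, e0]
  exacts [hθ, a.1.2, b.1.2, d.1.2, a.2.2, b.2.2, d.2.2]

end

/-! ### Translation of the bounds into norms -/

lemma L2_sq_le {f : ℝ → ℝ} {C : ℝ} (hf : MemLp f 2 volume) (h : ∫ x, f x ^ 2 ≤ C) :
    L2 f ^ 2 ≤ ENNReal.ofReal C := by
  unfold L2
  rw [eLpNorm_two_sq, ← ofReal_integral_eq_lintegral_ofReal hf.integrable_sq
    (ae_of_all _ fun _ => sq_nonneg _)]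
  exact ENNReal.ofReal_le_ofReal h

lemma L2_le {f : ℝ → ℝ} {C : ℝ} (hC : 0 ≤ C) (hf : MemLp f 2 volume) (h : ∫ x, f x ^ 2 ≤ C) :
    L2 f ≤ ENNReal.ofReal (1 + C) := by
  have key : ∀ a : ENNReal, a ≤ 1 + a ^ 2 := fun a => by
    rcases le_total a 1 with ha | ha
    · exact ha.trans le_self_add
    · refine le_trans ?_ le_add_self
      rw [sq]
      exact le_mul_of_one_le_left' ha
  rw [ENNReal.ofReal_add zero_le_one hC, ENNReal.ofReal_one]
  exact (key _).trans (by gcongr; exact L2_sq_le hf h)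

lemma H1_le {f f' : ℝ → ℝ} {C : ℝ} (hC : 0 ≤ C) (hd : ∀ x, HasDerivAt f (f' x) x)
    (hf : MemLp f 2 volume) (hf' : MemLp f' 2 volume) (h : ∫ x, f x ^ 2 ≤ C)
    (h' : ∫ x, f' x ^ 2 ≤ C) : H1 f ≤ ENNReal.ofReal (2 * (1 + C)) := by
  have e : deriv f = f' := funext fun x => (hd x).deriv
  unfold H1
  rw [e, two_mul, ENNReal.ofReal_add (by linarith) (by linarith)]
  exact add_le_add (L2_le hC hf h) (L2_le hC hf' h')

lemma H1_sq_le {f f' : ℝ → ℝ} (hd : ∀ x, HasDerivAt f (f' x) x) :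
    H1 f ^ 2 ≤ 4 * (L2 f ^ 2 + L2 f' ^ 2) := by
  have key : ∀ a b : ENNReal, a ≤ b → (a + b) ^ 2 ≤ 4 * b ^ 2 := fun a b hab => by
    calc (a + b) ^ 2 ≤ (b + b) ^ 2 := by gcongr
      _ = 4 * b ^ 2 := by ring
  have e : deriv f = f' := funext fun x => (hd x).deriv
  unfold H1
  rw [e]
  rcases le_total (L2 f) (L2 f') with hab | hab
  · exact (key _ _ hab).trans (by gcongr; exact le_add_self)
  · rw [add_comm (L2 f)]
    exact (key _ _ hab).trans (by gcongr; exact le_self_add)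

lemma measurable_L2_sq {f : ℝ → ℝ → ℝ} (hm : Measurable (Function.uncurry f)) :
    Measurable fun t => L2 (fun x => f x t) ^ 2 := by
  simp only [L2, eLpNorm_two_sq]
  have m : Measurable fun z : ℝ × ℝ => ENNReal.ofReal (f z.1 z.2 ^ 2) :=
    (hm.pow_const 2).ennreal_ofReal
  exact m.lintegral_prod_left'

lemma strip_L2_le {f : ℝ → ℝ → ℝ} {T C : ℝ} (hm : Measurable (Function.uncurry f))
    (hf : MemLp (fun z : ℝ × ℝ => f z.1 z.2) 2 (PT T))
    (h : ∫ z, f z.1 z.2 ^ 2 ∂(PT T) ≤ C) :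
    ∫⁻ t in Ioc 0 T, L2 (fun x => f x t) ^ 2 ≤ ENNReal.ofReal C := by
  have m : Measurable fun z : ℝ × ℝ => ENNReal.ofReal (f z.1 z.2 ^ 2) :=
    (hm.pow_const 2).ennreal_ofReal
  refine le_trans (le_of_eq ?_) (ENNReal.ofReal_le_ofReal h)
  rw [ofReal_integral_eq_lintegral_ofReal hf.integrable_sq (ae_of_all _ fun _ => sq_nonneg _)]
  unfold PT
  rw [lintegral_prod_symm' _ m]
  simp only [L2, eLpNorm_two_sq]

/-- The dissipation integrals over all finite time intervals control the one over `(0, ∞)`. -/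
lemma lintegral_Ioi_le {G : ℝ → ENNReal} {D : ENNReal}
    (h : ∀ T, 0 ≤ T → ∫⁻ t in Ioc 0 T, G t ≤ D) : ∫⁻ t in Ioi 0, G t ≤ D := by
  have e : Ioi (0:ℝ) = ⋃ n : ℕ, Ioc (0:ℝ) n := by
    ext t
    simp only [mem_Ioi, mem_iUnion, mem_Ioc]
    exact ⟨fun ht => (exists_nat_ge t).imp fun _ hn => ⟨ht, hn⟩, fun ⟨_, ht, _⟩ => ht⟩
  rw [e, setLIntegral_iUnion_of_directed]
  · exact iSup_le fun n => h n n.cast_nonneg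
  · exact (monotone_nat_of_le_succ fun n => Ioc_subset_Ioc_right (by simp)).directed_le

end NS

/-- uniform `H¹` bound and global dissipation bound. -/
theorem uniform_H1_and_dissipation_bound
    (μ κ R cv M m K : ℝ) (hμ : 0 < μ) (hκ : 0 < κ) (hR : 0 < R) (hcv : 0 < cv)
    (hM : 0 < M) (hm : 0 < m) (hK : 1 ≤ K) :
    ∃ C₀ : ℝ, 0 < C₀ ∧
      ∀ v u θ : ℝ → ℝ → ℝ,
        IsClassicalSolution μ κ R cv v u θ →
        InitBounded M m v u θ →
        VolBounded K v →
        (⨆ t ∈ Ici (0 : ℝ),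
            (H1 (fun x => v x t - 1) + H1 (fun x => u x t) + H1 (fun x => θ x t - 1)))
          + (∫⁻ t in Ioi (0 : ℝ),
              (L2 (fun x => pdx v x t) ^ 2
                + H1 (fun x => pdx u x t) ^ 2
                + H1 (fun x => pdx θ x t) ^ 2))
          ≤ ENNReal.ofReal C₀ := by
  obtain ⟨C, hC, hb⟩ := NS.total_bound (μ := μ) (κ := κ) (R := R) (cv := cv) (K := K)
    (N := M ^ 2) (m := m) ⟨hμ, hκ, hR, hcv, hK, by positivity, hm⟩
  refine ⟨6 * (1 + C) + 17 * C, by positivity, fun v u θ h hi hv => ?_⟩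
  have S := NS.flow_sol hμ hκ hR hcv hK h hv
  have I := NS.flow_init hM hm h hi
  have ex : ∀ (w : ℝ → ℝ → ℝ) {t : ℝ}, 0 ≤ t → ∀ x, NS.ext w x t = w x t := fun w t ht x => by
    simp only [NS.ext, max_eq_left ht]
  rw [ENNReal.ofReal_add (by positivity) (by positivity)]
  refine add_le_add (iSup₂_le fun t ht => ?_) (NS.lintegral_Ioi_le fun T hT => ?_)
  · obtain ⟨⟨a1, a2⟩, ⟨b1, b2⟩, ⟨d1, d2⟩, -⟩ := hb _ S I t ht
    have e1 := NS.H1_le hC (fun x => (S.dv x t).sub_const 1) (S.sv t) (S.svx t) a1 a2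
    have e2 := NS.H1_le hC (fun x => S.du x t) (S.su t) (S.sux t) b1 b2
    have e3 := NS.H1_le hC (fun x => (S.dθ x t).sub_const 1) (S.sθ t) (S.sθx t) d1 d2
    simp only [NS.flow, ex _ ht] at e1 e2 e3
    refine (add_le_add (add_le_add e1 e2) e3).trans (le_of_eq ?_)
    rw [← ENNReal.ofReal_add (by positivity) (by positivity),
      ← ENNReal.ofReal_add (by positivity) (by positivity)]
    congr 1
    ring
  · obtain ⟨-, -, -, a, ⟨b1, b2⟩, ⟨d1, d2⟩⟩ := hb _ S I T hT
    have i1 := NS.strip_L2_le S.mvx (S.pvx T) a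
    have i2 := NS.strip_L2_le S.mux (S.pux T) b1
    have i3 := NS.strip_L2_le S.muxx (S.puxx T) b2
    have i4 := NS.strip_L2_le S.mθx (S.pθx T) d1
    have i5 := NS.strip_L2_le S.mθxx (S.pθxx T) d2
    have m1 := NS.measurable_L2_sq S.mvx
    have m2 := NS.measurable_L2_sq S.mux
    have m3 := NS.measurable_L2_sq S.muxx
    have m4 := NS.measurable_L2_sq S.mθx
    have m5 := NS.measurable_L2_sq S.mθxx
    set F := NS.flow μ κ R cv v u θ with hF
    calc _ ≤ ∫⁻ t in Ioc 0 T, (L2 (fun x => F.vx x t) ^ 2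
          + 4 * (L2 (fun x => F.ux x t) ^ 2 + L2 (fun x => F.uxx x t) ^ 2)
          + 4 * (L2 (fun x => F.θx x t) ^ 2 + L2 (fun x => F.θxx x t) ^ 2)) := by
          refine setLIntegral_mono' measurableSet_Ioc fun t ht => ?_
          have e2 := NS.H1_sq_le fun x => S.dux x t
          have e3 := NS.H1_sq_le fun x => S.dθx x t
          simp only [hF, NS.flow, ex _ ht.1.le] at e2 e3 ⊢
          exact add_le_add (add_le_add le_rfl e2) e3
      _ ≤ ENNReal.ofReal C + 4 * (ENNReal.ofReal C + ENNReal.ofReal C)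
          + 4 * (ENNReal.ofReal C + ENNReal.ofReal C) := by
          rw [lintegral_add_left (m1.fun_add ((m2.fun_add m3).const_mul 4)),
            lintegral_add_left m1, lintegral_const_mul _ (m2.fun_add m3),
            lintegral_const_mul _ (m4.fun_add m5), lintegral_add_left m2, lintegral_add_left m4]
          gcongr
      _ = ENNReal.ofReal (17 * C) := by
          rw [ENNReal.ofReal_mul (by norm_num)]
          norm_num
          ring
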